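/- arXiv:2105.01449 — 2 statements merged into one kernel-verified Lean document; each statement's English description precedes it below -/
import Mathlib

section
/- (Hall, 1971) The portion M ∩ [√5, √10] of the Markov spectrum has Hausdorff dimension at most 0.93; in particular, M ∩ [√5, √10] has Lebesgue measure zero. -/
open scoped ENNReal

/-- The best constant of Diophantine approximation of the binary quadratic form
`h(x,y) = a x² + b x y + c y²`, namely `m(h) = sup_{(p,q) ≠ (0,0)} √Δ(h) / |h(p,q)| ∈ (0, ∞]`. -/
noncomputable def markovVal (a b c : ℝ) : ℝ≥0∞ :=
  ⨆ (pq : ℤ × ℤ) (_ : pq ≠ (0, 0)),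
    ENNReal.ofReal (Real.sqrt (b ^ 2 - 4 * a * c)) /
      ENNReal.ofReal |a * (pq.1 : ℝ) ^ 2 + b * pq.1 * pq.2 + c * (pq.2 : ℝ) ^ 2|

/-- The Markov spectrum: the set of finite values `m(h)` over real indefinite binary
quadratic forms `h` with positive discriminant. -/
def MarkovSpectrum : Set ℝ :=
  {t | ∃ a b c : ℝ, 0 < b ^ 2 - 4 * a * c ∧ markovVal a b c ≠ ⊤ ∧ (markovVal a b c).toReal = t}

/-!
Up to equivalence the forms of Markov value below `√10` have roots `[a; x₁, x₂, …]` and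
`-[0; y₁, y₂, …]` with digits at most `2`, and the pattern `1, 2, 1` does not occur in their
two-sided continued fraction: `√10 / 2 - 1` is the tail `[0; 1, 1, 2, 1, 1, 2, …]`, and if a tail
between `1 / 2` and `√10 / 2 - 1` existed, reflecting the sequence at its next digit `2` would
give another one at least twice as far from `√10 / 2 - 1`, and so on without end. Hence every tail
starting with `1` is at least `√10 / 2 - 1`, and two of them around a digit `2` would make the
Markov value at least `2 + 2 * (√10 / 2 - 1) = √10`.

With `g k x = 1 / (k + x)`, the set `A` of tails following a digit `1` and the set `C` of those
following a digit `2` then satisfy `A ⊆ g 1 A ∪ g 2 (g 2 C)` and `C ⊆ g 1 A ∪ g 2 C`. Counting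
covering intervals of length `Q⁻²` recursively, with weights `1` for `A` and `4 / 3` for `C`, shows
that `O(Q ^ (9 / 10))` of them suffice. Every element of the Markov spectrum in `(2, √10)` is a
limit of sums of a digit and two tails, so that part of the spectrum is covered by
`O(Q ^ (2 * (9 / 10)))` intervals of length comparable to `Q⁻²`, and its dimension is at most
`9 / 10`.
-/

open Filter MeasureTheory Metric Set
open scoped NNReal Pointwise Topology

section CoveringNumber

variable {X : Type*} {ε : ℝ≥0}

theorem exists_isCover_encard_eq_externalCoveringNumber [PseudoEMetricSpace X] (ε : ℝ≥0)
    (A : Set X) : ∃ C, IsCover ε A C ∧ C.encard = externalCoveringNumber ε A := by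
  have : Nonempty {C : Set X // IsCover ε A C} := ⟨A, .rfl⟩
  obtain ⟨⟨C, hC⟩, h⟩ := ciInf_mem fun C : {C : Set X // IsCover ε A C} ↦ C.1.encard
  exact ⟨C, hC, h.trans iInf_subtype⟩

theorem externalCoveringNumber_union_le [PseudoEMetricSpace X] (A B : Set X) :
    externalCoveringNumber ε (A ∪ B) ≤ externalCoveringNumber ε A + externalCoveringNumber ε B := by
  obtain ⟨C, hC, hAC⟩ := exists_isCover_encard_eq_externalCoveringNumber ε A
  obtain ⟨D, hD, hBD⟩ := exists_isCover_encard_eq_externalCoveringNumber ε B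
  rw [← hAC, ← hBD]
  exact (IsCover.externalCoveringNumber_le_encard (SetRel.IsCover.union hC hD)).trans
    (encard_union_le C D)

theorem externalCoveringNumber_closure_le [PseudoMetricSpace X] [T1Space X] [ProperSpace X]
    (A : Set X) : externalCoveringNumber ε (closure A) ≤ externalCoveringNumber ε A := by
  obtain ⟨C, hC, hAC⟩ := exists_isCover_encard_eq_externalCoveringNumber ε A
  rw [← hAC]
  rcases C.finite_or_infinite with hfin | hinf
  · exact (hC.closure hfin.isClosed).externalCoveringNumber_le_encard
  · simp [hinf.encard_eq]

theorem externalCoveringNumber_add_le [SeminormedAddCommGroup X] (δ ε : ℝ≥0) (A B : Set X) :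
    externalCoveringNumber (δ + ε) (A + B) ≤
      externalCoveringNumber δ A * externalCoveringNumber ε B := by
  obtain ⟨C, hC, hAC⟩ := exists_isCover_encard_eq_externalCoveringNumber δ A
  obtain ⟨D, hD, hBD⟩ := exists_isCover_encard_eq_externalCoveringNumber ε B
  have hcover : IsCover (δ + ε) (A + B) (C + D) := by
    rintro _ ⟨a, ha, b, hb, rfl⟩
    obtain ⟨c, hc, hac⟩ := hC ha
    obtain ⟨d, hd, hbd⟩ := hD hb
    refine ⟨c + d, add_mem_add hc hd, (edist_add_add_le a b c d).trans ?_⟩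
    push_cast
    exact add_le_add hac hbd
  calc
    externalCoveringNumber (δ + ε) (A + B) ≤ (C + D).encard :=
      hcover.externalCoveringNumber_le_encard
    _ ≤ (C ×ˢ D).encard := by
      rw [← add_image_prod]
      exact encard_image_le _ _
    _ = externalCoveringNumber δ A * externalCoveringNumber ε B := by rw [encard_prod, hAC, hBD]

theorem hausdorffMeasure_le_liminf_externalCoveringNumber [EMetricSpace X] [MeasurableSpace X]
    [BorelSpace X] {ι : Type*} {l : Filter ι} {s : ℝ} (hs : 0 ≤ s) {E : Set X} {r : ι → ℝ≥0}
    (hr : Tendsto r l (𝓝 0)) (hE : ∀ n, externalCoveringNumber (r n) E ≠ ⊤) :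
    μH[s] E ≤ liminf (fun n ↦ (externalCoveringNumber (r n) E : ℝ≥0∞) * (2 * r n) ^ s) l := by
  choose C hC hCE using fun n ↦ exists_isCover_encard_eq_externalCoveringNumber (r n) E
  have hCfin (n : ι) : (C n).Finite := encard_ne_top_iff.1 (hCE n ▸ hE n)
  let (n : ι) : Fintype (C n) := (hCfin n).fintype
  have hr' : Tendsto (fun n ↦ 2 * (r n : ℝ≥0∞)) l (𝓝 0) := by
    simpa using ENNReal.Tendsto.const_mul (ENNReal.tendsto_coe.2 hr) (.inr ENNReal.ofNat_ne_top)
  have hsum (n : ι) : ∑ i : C n, ediam (closedEBall (i : X) (r n)) ^ s ≤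
      (externalCoveringNumber (r n) E : ℝ≥0∞) * (2 * r n) ^ s := by
    calc
      ∑ i : C n, ediam (closedEBall (i : X) (r n)) ^ s ≤ ∑ _i : C n, (2 * r n : ℝ≥0∞) ^ s := by
        gcongr
        exact ediam_closedEBall_le
      _ = (externalCoveringNumber (r n) E : ℝ≥0∞) * (2 * r n) ^ s := by
        rw [Finset.sum_const, nsmul_eq_mul, Finset.card_univ, ← hCE, encard_eq_coe_toFinset_card,
          toFinset_card, ENat.toENNReal_coe]
  calc
    μH[s] E ≤ liminf (fun n ↦ ∑ i : C n, ediam (closedEBall (i : X) (r n)) ^ s) l :=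
      Measure.hausdorffMeasure_le_liminf_sum s E _ hr' _ (.of_forall fun _ _ ↦ ediam_closedEBall_le)
        (.of_forall fun n ↦ by
          simpa only [iUnion_coe_set] using isCover_iff_subset_iUnion_closedEBall.1 (hC n))
    _ ≤ _ := liminf_le_liminf (.of_forall hsum)

theorem dimH_le_of_frequently_externalCoveringNumber_le [EMetricSpace X] {s K : ℝ≥0} {E : Set X}
    (h : ∃ᶠ r : ℝ≥0 in 𝓝[≠] 0,
      (externalCoveringNumber r E : ℝ≥0∞) ≤ (K * r ^ (-s : ℝ) : ℝ≥0)) :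
    dimH E ≤ s := by
  borelize X
  obtain ⟨r, hr, hrE⟩ := exists_seq_forall_of_frequently
    (h.and_eventually eventually_mem_nhdsWithin)
  have hfin (n : ℕ) : externalCoveringNumber (r n) E ≠ ⊤ :=
    ENat.toENNReal_ne_top.1 (ne_top_of_le_ne_top ENNReal.coe_ne_top (hrE n).1)
  have hscale (n : ℕ) : r n ^ (-s : ℝ) * (2 * r n) ^ (s : ℝ) = 2 ^ (s : ℝ) := by
    rw [NNReal.mul_rpow, mul_left_comm, ← NNReal.rpow_add (hrE n).2, neg_add_cancel,
      NNReal.rpow_zero, mul_one]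
  have hbound (n : ℕ) : (externalCoveringNumber (r n) E : ℝ≥0∞) * (2 * r n) ^ (s : ℝ) ≤
      (K * 2 ^ (s : ℝ) : ℝ≥0) := by
    calc
      (externalCoveringNumber (r n) E : ℝ≥0∞) * (2 * r n) ^ (s : ℝ)
          ≤ (K * r n ^ (-s : ℝ) : ℝ≥0) * (2 * r n) ^ (s : ℝ) := by gcongr; exact (hrE n).1
      _ = (K * r n ^ (-s : ℝ) * (2 * r n) ^ (s : ℝ) : ℝ≥0) := by
        rw [ENNReal.coe_mul _ ((2 * r n) ^ (s : ℝ)), ENNReal.coe_rpow_of_nonneg _ s.coe_nonneg]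
        push_cast
        rfl
      _ = (K * 2 ^ (s : ℝ) : ℝ≥0) := by rw [mul_assoc, hscale]
  have hμ : μH[s] E ≤ (K * 2 ^ (s : ℝ) : ℝ≥0) := by
    refine (hausdorffMeasure_le_liminf_externalCoveringNumber s.2
      (tendsto_nhds_of_tendsto_nhdsWithin hr) hfin).trans ?_
    exact (liminf_le_liminf (.of_forall hbound)).trans (liminf_const _).le
  exact dimH_le_of_hausdorffMeasure_ne_top (ne_top_of_le_ne_top ENNReal.coe_ne_top hμ)

theorem volume_eq_zero_of_dimH_lt_one {E : Set ℝ} (h : dimH E < 1) : volume E = 0 := by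
  have := hausdorffMeasure_of_dimH_lt (d := 1) (by simpa using h)
  rwa [NNReal.coe_one, hausdorffMeasure_real] at this

end CoveringNumber

/-- The inverse branch of the Gauss map for the digit `k`: it prepends `k` to the continued
fraction expansion of `x ∈ [0, 1)`. -/
noncomputable def gaussBranch (k x : ℝ) : ℝ :=
  (k + x)⁻¹

theorem gaussBranch_mem_Ioo {k x : ℝ} (hk : 1 ≤ k) (hx : 0 < x) : gaussBranch k x ∈ Ioo 0 1 :=
  ⟨inv_pos.2 (by linarith), inv_lt_one_of_one_lt₀ (by linarith)⟩

theorem gaussBranch_mem_Icc {k x : ℝ} (hk : 1 ≤ k) (hx : 0 ≤ x) : gaussBranch k x ∈ Icc 0 1 :=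
  ⟨inv_nonneg.2 (by linarith), inv_le_one_of_one_le₀ (by linarith)⟩

theorem half_lt_gaussBranch_one {x : ℝ} (hx : x ∈ Ioo 0 1) : 1 / 2 < gaussBranch 1 x := by
  rw [one_div]
  exact inv_strictAnti₀ (by linarith [hx.1]) (by linarith [hx.2])

theorem gaussBranch_two_lt_half {x : ℝ} (hx : 0 < x) : gaussBranch 2 x < 1 / 2 := by
  rw [one_div]
  exact inv_strictAnti₀ two_pos (by linarith)

/-- Two consecutive convergents `p' / q'` and `p / q` of a continued fraction, standing for a
finite string of digits. The entries may be any reals: integrality enters only through the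
determinant and the size of the denominators. -/
structure ConvergentPair where
  (p p' q q' : ℝ)
  one_le : 1 ≤ q
  nonneg : 0 ≤ q'
  le : q' ≤ q
  det : |p * q' - p' * q| = 1

namespace ConvergentPair

variable (c : ConvergentPair)

/-- The number whose continued fraction expansion is the string of digits of `c` followed by the
expansion of `x`. -/
noncomputable def map (x : ℝ) : ℝ :=
  (c.p + c.p' * x) / (c.q + c.q' * x)

/-- The empty string of digits. -/
def nil : ConvergentPair :=
  ⟨0, 1, 1, 0, le_rfl, le_rfl, zero_le_one, by simp⟩

/-- The string of digits of `c` followed by the digit `k`. -/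
def snoc (k : ℝ) (hk : 1 ≤ k) : ConvergentPair where
  p := k * c.p + c.p'
  p' := c.p
  q := k * c.q + c.q'
  q' := c.q
  one_le := by nlinarith [c.one_le, c.nonneg]
  nonneg := by linarith [c.one_le]
  le := by nlinarith [c.one_le, c.nonneg]
  det := by rw [← c.det, ← abs_neg]; ring_nf

/-- The scale of a string of digits: `c.map` contracts `[0, 1]` by a factor comparable to
`(size c)⁻²`. The weights `2, 1` make the ratio of the sizes of `c.snoc k` and `c` depend little
on `c`. -/
def size : ℝ :=
  2 * c.q + c.q'

theorem size_pos : 0 < c.size := by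
  unfold size
  linarith [c.one_le, c.nonneg]

theorem map_nil (x : ℝ) : nil.map x = x := by
  simp [map, nil]

theorem size_nil : nil.size = 2 := by
  simp [size, nil]

theorem size_le_size_snoc_one : c.size ≤ 2 / 3 * (c.snoc 1 le_rfl).size := by
  simp only [size, snoc]
  linarith [c.nonneg]

theorem size_le_size_snoc_two : c.size ≤ 3 / 7 * (c.snoc 2 one_le_two).size := by
  simp only [size, snoc]
  linarith [c.le]

theorem size_le_size_snoc_two_two :
    c.size ≤ 3 / 17 * ((c.snoc 2 one_le_two).snoc 2 one_le_two).size := by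
  simp only [size, snoc]
  linarith [c.le]

theorem denom_pos {x : ℝ} (hx : 0 ≤ x) : 0 < c.q + c.q' * x := by
  linarith [c.one_le, mul_nonneg c.nonneg hx]

theorem map_gaussBranch {k x : ℝ} (hk : 1 ≤ k) (hx : 0 ≤ x) :
    c.map (gaussBranch k x) = (c.snoc k hk).map x := by
  have hc : c.q + c.q' * (k + x)⁻¹ ≠ 0 := (c.denom_pos (gaussBranch_mem_Icc hk hx).1).ne'
  have hck : k * c.q + c.q' + c.q * x ≠ 0 := ((c.snoc k hk).denom_pos hx).ne'
  have hkx : k + x ≠ 0 := by linarith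
  simp only [map, snoc, gaussBranch]
  rw [div_eq_div_iff hc hck]
  field_simp
  ring

theorem image_map_image_gaussBranch {S : Set ℝ} {k : ℝ} (hk : 1 ≤ k) (hS : S ⊆ Icc 0 1) :
    c.map '' (gaussBranch k '' S) = (c.snoc k hk).map '' S := by
  rw [image_image]
  exact image_congr fun x hx ↦ c.map_gaussBranch hk (hS hx).1

theorem abs_map_sub_map {x y : ℝ} (hx : 0 ≤ x) (hy : 0 ≤ y) :
    |c.map x - c.map y| = |x - y| / ((c.q + c.q' * x) * (c.q + c.q' * y)) := by
  have hcx := c.denom_pos hx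
  have hcy := c.denom_pos hy
  calc
    |c.map x - c.map y|
        = |(c.p * c.q' - c.p' * c.q) * (y - x) / ((c.q + c.q' * x) * (c.q + c.q' * y))| := by
      rw [map, map, div_sub_div _ _ hcx.ne' hcy.ne']
      ring_nf
    _ = |x - y| / ((c.q + c.q' * x) * (c.q + c.q' * y)) := by
      rw [abs_div, abs_mul, c.det, one_mul, abs_sub_comm, abs_of_pos (mul_pos hcx hcy)]

theorem abs_map_sub_map_le {x y : ℝ} (hx : x ∈ Icc (0 : ℝ) 1) (hy : y ∈ Icc (0 : ℝ) 1) :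
    |c.map x - c.map y| ≤ (c.q ^ 2)⁻¹ := by
  have hcx : c.q ≤ c.q + c.q' * x := le_add_of_nonneg_right (mul_nonneg c.nonneg hx.1)
  have hcy : c.q ≤ c.q + c.q' * y := le_add_of_nonneg_right (mul_nonneg c.nonneg hy.1)
  have hxy : |x - y| ≤ 1 := by simpa using abs_sub_le_of_le_of_le hx.1 hx.2 hy.1 hy.2
  have hc := c.one_le
  have hcx₀ := (c.denom_pos hx.1).le
  rw [c.abs_map_sub_map hx.1 hy.1, ← one_div, sq]
  gcongr

theorem externalCoveringNumber_image_map_le_one {S : Set ℝ} (hS : S ⊆ Icc 0 1) {Q : ℝ≥0}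
    (hQ : 0 < Q) (hQc : Q ≤ c.q) : externalCoveringNumber (Q ^ 2)⁻¹ (c.map '' S) ≤ 1 := by
  refine externalCoveringNumber_le_one_of_ediam_le (ediam_le ?_)
  rintro _ ⟨x, hx, rfl⟩ _ ⟨y, hy, rfl⟩
  rw [edist_le_coe, ← NNReal.coe_le_coe, coe_nndist, Real.dist_eq]
  refine (c.abs_map_sub_map_le (hS hx) (hS hy)).trans ?_
  push_cast
  gcongr

theorem induction_of_denom_lt {Q : ℝ} {P : ConvergentPair → Prop} (large : ∀ c, Q ≤ c.q → P c)
    (small : ∀ c, c.q < Q → (∀ c', c.q + c.q' + 1 ≤ c'.q + c'.q' → P c') → P c) : P c := by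
  obtain ⟨n, hn⟩ := exists_nat_ge (2 * Q)
  have hsum : 2 * Q ≤ c.q + c.q' + n := by linarith [c.one_le, c.nonneg]
  clear hn
  induction n generalizing c with
  | zero =>
    rw [Nat.cast_zero, add_zero] at hsum
    exact large c (by linarith [c.le])
  | succ n ih =>
    rcases le_or_gt Q c.q with hq | hq
    · exact large c hq
    · refine small c hq fun c' hc' ↦ ih c' ?_
      rw [Nat.cast_succ] at hsum
      linarith

theorem div_size_rpow_le {c c' : ConvergentPair} {r R s : ℝ} (hR : 0 ≤ R) (hr : 0 ≤ r) (hs : 0 ≤ s)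
    (h : c.size ≤ r * c'.size) : (R / c'.size) ^ s ≤ r ^ s * (R / c.size) ^ s := by
  have hc := c.size_pos
  rw [← Real.mul_rpow hr (by positivity)]
  refine Real.rpow_le_rpow (by have := c'.size_pos; positivity) ?_ hs
  rw [mul_div_assoc', div_le_div_iff₀ c'.size_pos hc]
  nlinarith

theorem externalCoveringNumber_image_map_le_of_le {S : Set ℝ} (hS : S ⊆ Icc 0 1)
    {Q : ℝ≥0} (hQ : 0 < Q) (hQc : Q ≤ c.q) (hcQ : c.q ≤ 7 * Q) {s v : ℝ} (hs : 0 ≤ s)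
    (hv : 1 ≤ v) :
    (externalCoveringNumber (Q ^ 2)⁻¹ (c.map '' S) : ℝ≥0∞) ≤
      ENNReal.ofReal (v * (21 * Q / c.size) ^ s) := by
  have hsize : 1 ≤ 21 * Q / c.size := by
    rw [one_le_div c.size_pos, size]
    linarith [c.le]
  have hbound : 1 ≤ v * (21 * Q / c.size) ^ s :=
    one_le_mul_of_one_le_of_one_le hv (Real.one_le_rpow hsize hs)
  calc
    (externalCoveringNumber (Q ^ 2)⁻¹ (c.map '' S) : ℝ≥0∞) ≤ 1 := by
      exact_mod_cast c.externalCoveringNumber_image_map_le_one hS hQ hQc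
    _ ≤ ENNReal.ofReal (v * (21 * Q / c.size) ^ s) := ENNReal.one_le_ofReal.2 hbound

theorem externalCoveringNumber_image_map_le_add {ε : ℝ≥0} {S S₁ S₂ : Set ℝ} {c₁ c₂ : ConvergentPair}
    {r₁ r₂ R s v v₁ v₂ : ℝ} (hsub : c.map '' S ⊆ c₁.map '' S₁ ∪ c₂.map '' S₂)
    (hc₁ : c.size ≤ r₁ * c₁.size) (hc₂ : c.size ≤ r₂ * c₂.size) (hr₁ : 0 ≤ r₁) (hr₂ : 0 ≤ r₂)
    (hR : 0 ≤ R) (hs : 0 ≤ s) (hv₁ : 0 ≤ v₁) (hv₂ : 0 ≤ v₂)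
    (hv : v₁ * r₁ ^ s + v₂ * r₂ ^ s ≤ v)
    (h₁ : (externalCoveringNumber ε (c₁.map '' S₁) : ℝ≥0∞) ≤
      ENNReal.ofReal (v₁ * (R / c₁.size) ^ s))
    (h₂ : (externalCoveringNumber ε (c₂.map '' S₂) : ℝ≥0∞) ≤
      ENNReal.ofReal (v₂ * (R / c₂.size) ^ s)) :
    (externalCoveringNumber ε (c.map '' S) : ℝ≥0∞) ≤ ENNReal.ofReal (v * (R / c.size) ^ s) := by
  have hc := c.size_pos
  have hpos₁ := c₁.size_pos
  have hpos₂ := c₂.size_pos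
  have hsum : v₁ * (R / c₁.size) ^ s + v₂ * (R / c₂.size) ^ s ≤ v * (R / c.size) ^ s := by
    calc
      v₁ * (R / c₁.size) ^ s + v₂ * (R / c₂.size) ^ s
          ≤ v₁ * (r₁ ^ s * (R / c.size) ^ s) + v₂ * (r₂ ^ s * (R / c.size) ^ s) := by
        gcongr
        exacts [div_size_rpow_le hR hr₁ hs hc₁, div_size_rpow_le hR hr₂ hs hc₂]
      _ = (v₁ * r₁ ^ s + v₂ * r₂ ^ s) * (R / c.size) ^ s := by ring
      _ ≤ v * (R / c.size) ^ s := by gcongr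
  calc
    (externalCoveringNumber ε (c.map '' S) : ℝ≥0∞)
        ≤ externalCoveringNumber ε (c₁.map '' S₁) + externalCoveringNumber ε (c₂.map '' S₂) := by
      exact_mod_cast (externalCoveringNumber_mono_set hsub).trans
        (externalCoveringNumber_union_le _ _)
    _ ≤ ENNReal.ofReal (v₁ * (R / c₁.size) ^ s) + ENNReal.ofReal (v₂ * (R / c₂.size) ^ s) :=
      add_le_add h₁ h₂
    _ = ENNReal.ofReal (v₁ * (R / c₁.size) ^ s + v₂ * (R / c₂.size) ^ s) :=
      (ENNReal.ofReal_add (by positivity) (by positivity)).symm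
    _ ≤ ENNReal.ofReal (v * (R / c.size) ^ s) := ENNReal.ofReal_le_ofReal hsum

-- The recursion stops as soon as `Q ≤ q`. As it appends at most two digits `2` to a string with
-- `q < Q`, it only meets strings with `q ≤ 7 * Q`, hence of size at most `21 * Q`.
theorem externalCoveringNumber_image_map_le {A C : Set ℝ} (hA : A ⊆ Icc 0 1) (hC : C ⊆ Icc 0 1)
    (hAs : A ⊆ gaussBranch 1 '' A ∪ gaussBranch 2 '' (gaussBranch 2 '' C))
    (hCs : C ⊆ gaussBranch 1 '' A ∪ gaussBranch 2 '' C)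
    {Q : ℝ≥0} (hQ : 0 < Q) {s v w : ℝ} (hs : 0 ≤ s) (hv : 1 ≤ v) (hw : 1 ≤ w)
    (hvA : v * (2 / 3) ^ s + w * (3 / 17) ^ s ≤ v) (hvC : v * (2 / 3) ^ s + w * (3 / 7) ^ s ≤ w)
    (hcQ : c.q ≤ 7 * Q) :
    (externalCoveringNumber (Q ^ 2)⁻¹ (c.map '' A) : ℝ≥0∞) ≤
      ENNReal.ofReal (v * (21 * Q / c.size) ^ s) ∧
    (externalCoveringNumber (Q ^ 2)⁻¹ (c.map '' C) : ℝ≥0∞) ≤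
      ENNReal.ofReal (w * (21 * Q / c.size) ^ s) := by
  induction c using induction_of_denom_lt (Q := Q) with
  | large c hQc =>
    exact ⟨c.externalCoveringNumber_image_map_le_of_le hA hQ hQc hcQ hs hv,
      c.externalCoveringNumber_image_map_le_of_le hC hQ hQc hcQ hs hw⟩
  | small c hcQ' ih =>
    set c₁ := c.snoc 1 le_rfl
    set c₂ := c.snoc 2 one_le_two
    set c₂₂ := c₂.snoc 2 one_le_two
    have hq := c.one_le
    have hq' := c.nonneg
    have hqq' := c.le
    have hgC : gaussBranch 2 '' C ⊆ Icc 0 1 :=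
      image_subset_iff.2 fun x hx ↦ gaussBranch_mem_Icc one_le_two (hC hx).1
    have hsubA : c.map '' A ⊆ c₁.map '' A ∪ c₂₂.map '' C := by
      rw [← image_map_image_gaussBranch _ _ hA, ← image_map_image_gaussBranch _ _ hC,
        ← image_map_image_gaussBranch _ _ hgC, ← image_union]
      exact image_mono hAs
    have hsubC : c.map '' C ⊆ c₁.map '' A ∪ c₂.map '' C := by
      rw [← image_map_image_gaussBranch _ _ hA, ← image_map_image_gaussBranch _ _ hC,
        ← image_union]
      exact image_mono hCs
    have h₁ := (ih c₁ (by simp only [c₁, snoc]; linarith) (by simp only [c₁, snoc]; linarith)).1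
    have h₂ := (ih c₂ (by simp only [c₂, snoc]; linarith) (by simp only [c₂, snoc]; linarith)).2
    have h₂₂ := (ih c₂₂ (by simp only [c₂₂, c₂, snoc]; linarith)
      (by simp only [c₂₂, c₂, snoc]; linarith)).2
    exact ⟨c.externalCoveringNumber_image_map_le_add hsubA c.size_le_size_snoc_one
        c.size_le_size_snoc_two_two (by norm_num) (by norm_num) (by positivity) hs (by linarith)
        (by linarith) hvA h₁ h₂₂,
      c.externalCoveringNumber_image_map_le_add hsubC c.size_le_size_snoc_one
        c.size_le_size_snoc_two (by norm_num) (by norm_num) (by positivity) hs (by linarith)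
        (by linarith) hvC h₁ h₂⟩

end ConvergentPair

section Tails

variable {m α β x y : ℝ} {a : ℤ}

/-- The form `(X - α Y) (X - β Y)`, of discriminant `(α - β) ^ 2`, has Markov value at most `m`
(for `β < α`). -/
def RootBound (m α β : ℝ) : Prop :=
  ∀ p q : ℤ, p ≠ 0 ∨ q ≠ 0 → α - β ≤ m * |(p - α * q) * (p - β * q)|

namespace RootBound

theorem sub_int (h : RootBound m α β) (n : ℤ) : RootBound m (α - n) (β - n) := fun p q hpq ↦ by
  have := h (p + n * q) q (by grind)
  push_cast at this
  convert this using 1 <;> ring_nf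

theorem neg_swap (h : RootBound m α β) : RootBound m (-β) (-α) := fun p q hpq ↦ by
  have := h (-p) q (by simpa using hpq)
  push_cast at this
  convert this using 1 <;> ring_nf

theorem inv (h : RootBound m α β) (hα : 0 < α) (hβ : β < 0) : RootBound m α⁻¹ β⁻¹ := by
  intro p q hpq
  have hαβ : 0 < α * -β := mul_pos hα (neg_pos.2 hβ)
  have hdiff : α - β = α * -β * (α⁻¹ - β⁻¹) := by
    field_simp [hβ.ne]
    ring
  have hprod : (q - α * p) * (q - β * p) = -(α * -β * ((p - α⁻¹ * q) * (p - β⁻¹ * q))) := by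
    field_simp [hβ.ne]
    ring
  have := h q p hpq.symm
  rw [hprod, hdiff, abs_neg, abs_mul, abs_of_pos hαβ, mul_left_comm] at this
  exact le_of_mul_le_mul_left this hαβ

theorem sub_le (h : RootBound m α β) : α - β ≤ m := by
  simpa using h 1 0 (by simp)

theorem left_ne_intCast (h : RootBound m α β) (hβα : β < α) (n : ℤ) : α ≠ n := by
  rintro rfl
  have := h n 1 (by simp)
  simp only [Int.cast_one, mul_one, sub_self, zero_mul, abs_zero, mul_zero] at this
  linarith

theorem right_ne_intCast (h : RootBound m α β) (hβα : β < α) (n : ℤ) : β ≠ n := fun hβ ↦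
  h.neg_swap.left_ne_intCast (neg_lt_neg hβα) (-n) (by rw [hβ, Int.cast_neg])

end RootBound

/-- `x` and `y` are the tails of the two-sided continued fraction `…, y₂, y₁, a, x₁, x₂, …` of a
form of Markov value at most `m`: its roots, up to equivalence, are `[a; x₁, x₂, …]` and
`-[0; y₁, y₂, …]`. -/
structure IsTailPair (m : ℝ) (a : ℤ) (x y : ℝ) : Prop where
  one_le : 1 ≤ a
  left_mem : x ∈ Ioo 0 1
  right_mem : y ∈ Ioo 0 1
  rootBound : RootBound m (a + x) (-y)

theorem RootBound.isTailPair (h : RootBound m α β) (hα : 1 < α) (hβ : β ∈ Ioo (-1) 0) :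
    IsTailPair m ⌊α⌋ (Int.fract α) (-β) where
  one_le := Int.le_floor.2 (by exact_mod_cast hα.le)
  left_mem := ⟨Int.fract_pos.2 (h.left_ne_intCast (by linarith [hβ.2]) _), Int.fract_lt_one α⟩
  right_mem := ⟨neg_pos.2 hβ.2, neg_lt.1 hβ.1⟩
  rootBound := by rwa [Int.floor_add_fract, neg_neg]

theorem RootBound.exists_isTailPair (h : RootBound m α β) (hαβ : 2 < α - β) :
    ∃ a x y, IsTailPair m a x y ∧ a + x + y = α - β := by
  have hβ : ⌊β⌋ < β := (Int.floor_le β).lt_of_ne (h.right_ne_intCast (by linarith) _).symm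
  have hβ' := Int.lt_floor_add_one β
  have hpair := (h.sub_int (⌊β⌋ + 1)).isTailPair (by push_cast; linarith)
    (by push_cast; constructor <;> linarith)
  refine ⟨_, _, _, hpair, ?_⟩
  rw [Int.floor_add_fract]
  ring

namespace IsTailPair

theorem symm (h : IsTailPair m a x y) : IsTailPair m a y x where
  one_le := h.one_le
  left_mem := h.right_mem
  right_mem := h.left_mem
  rootBound := by
    convert h.rootBound.neg_swap.sub_int (-a) using 1 <;> push_cast <;> ring

theorem add_le (h : IsTailPair m a x y) : a + x + y ≤ m := by
  simpa using h.rootBound.sub_le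

theorem le_two (h : IsTailPair m a x y) (hm : m < √10) : a ≤ 2 := by
  by_contra! ha
  obtain ⟨hx, -⟩ := h.left_mem
  obtain ⟨hy, -⟩ := h.right_mem
  have hm' : m < 3.17 := hm.trans (by rw [Real.sqrt_lt' (by norm_num)]; norm_num)
  have hadd := h.add_le
  have ha3 : a = 3 := by
    have : (a : ℝ) < 4 := by linarith
    norm_cast at this
    omega
  subst ha3
  have hval := h.rootBound 3 1 (by simp)
  push_cast at hadd hval
  have habs : |(3 - (3 + x) * 1) * (3 - -y * 1)| = x * (3 + y) := by
    rw [abs_of_nonpos (by nlinarith)]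
    ring
  have hsmall : x * (3 + y) ≤ 0.17 * 3.17 := by gcongr <;> linarith
  rw [habs] at hval
  nlinarith

theorem eq_one_or_two (h : IsTailPair m a x y) (hm : m < √10) : a = 1 ∨ a = 2 := by
  have := h.one_le
  have := h.le_two hm
  omega

theorem exists_next (h : IsTailPair m a x y) :
    ∃ (b : ℤ) (z : ℝ), x = gaussBranch b z ∧ IsTailPair m b z (gaussBranch a y) := by
  obtain ⟨hx, hx'⟩ := h.left_mem
  have ha : (1 : ℝ) ≤ a := by exact_mod_cast h.one_le
  have hy := gaussBranch_mem_Ioo ha h.right_mem.1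
  have hbound : RootBound m x⁻¹ (-gaussBranch a y) := by
    have := (h.rootBound.sub_int a).inv (by linarith) (by linarith [h.right_mem.1])
    convert this using 1
    · ring
    · rw [gaussBranch, ← inv_neg]
      ring
  refine ⟨⌊x⁻¹⌋, Int.fract x⁻¹, ?_, ?_⟩
  · rw [gaussBranch, Int.floor_add_fract, inv_inv]
  · simpa using
      hbound.isTailPair ((one_lt_inv₀ hx).2 hx') ⟨neg_lt_neg hy.2, neg_neg_iff_pos.2 hy.1⟩

theorem exists_next_one_or_two (h : IsTailPair m a x y) (hm : m < √10) :
    (∃ z, x = gaussBranch 1 z ∧ IsTailPair m 1 z (gaussBranch a y)) ∨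
      ∃ z, x = gaussBranch 2 z ∧ IsTailPair m 2 z (gaussBranch a y) := by
  obtain ⟨b, z, hz, hb⟩ := h.exists_next
  obtain rfl | rfl := hb.eq_one_or_two hm
  · exact .inl ⟨z, by simpa using hz, hb⟩
  · exact .inr ⟨z, by simpa using hz, hb⟩

theorem exists_next_one (h : IsTailPair m a x y) (hm : m < √10) (hx : 1 / 2 < x) :
    ∃ z, x = gaussBranch 1 z ∧ IsTailPair m 1 z (gaussBranch a y) := by
  refine (h.exists_next_one_or_two hm).resolve_right ?_
  rintro ⟨z, rfl, hz⟩
  exact hx.not_gt (gaussBranch_two_lt_half hz.left_mem.1)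

theorem exists_next_two (h : IsTailPair m a x y) (hm : m < √10) (hx : x < 1 / 2) :
    ∃ z, x = gaussBranch 2 z ∧ IsTailPair m 2 z (gaussBranch a y) := by
  refine (h.exists_next_one_or_two hm).resolve_left ?_
  rintro ⟨z, rfl, hz⟩
  exact hx.not_gt (half_lt_gaussBranch_one hz.left_mem)

theorem exists_next_one_one_two (h : IsTailPair m a x y) (hm : m < √10)
    (hx : x ∈ Ioo (1 / 2) (3 / 5)) :
    ∃ z, x = gaussBranch 1 (gaussBranch 1 (gaussBranch 2 z)) ∧
      IsTailPair m 2 z (gaussBranch 1 (gaussBranch 1 (gaussBranch a y))) := by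
  obtain ⟨x₁, rfl, h₁⟩ := h.exists_next_one hm hx.1
  have hx₁ : 2 / 3 < x₁ := by
    have := inv_lt_of_inv_lt₀ (by linarith [h₁.left_mem.1]) hx.2
    linarith
  obtain ⟨x₂, rfl, h₂⟩ := h₁.exists_next_one hm (by linarith)
  have hx₂ : x₂ < 1 / 2 := by
    have := lt_inv_of_lt_inv₀ (by linarith [h₂.left_mem.1]) hx₁
    linarith
  obtain ⟨x₃, rfl, h₃⟩ := h₂.exists_next_two hm hx₂
  exact ⟨x₃, rfl, by simpa using h₃⟩

end IsTailPair

/-- The tail `[0; 1, 1, 2, 1, 1, 2, …]`. The two-sided sequence with period `2, 1, 1` reads the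
same in both directions from each digit `2`, and accordingly `√10 = 2 + 2 * criticalTail`. -/
noncomputable def criticalTail : ℝ :=
  √10 / 2 - 1

theorem sqrt_ten_eq_two_add_two_mul_criticalTail : √10 = 2 + 2 * criticalTail := by
  rw [criticalTail]
  ring

theorem criticalTail_mem_Ioo : criticalTail ∈ Ioo (1 / 2) (3 / 5) := by
  have h₁ : 3 < √10 := Real.lt_sqrt_of_sq_lt (by norm_num)
  have h₂ : √10 < 16 / 5 := (Real.sqrt_lt' (by norm_num)).2 (by norm_num)
  constructor <;> rw [criticalTail] <;> linarith

theorem criticalTail_quadratic : 2 * criticalTail ^ 2 + 4 * criticalTail = 3 := by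
  have : √10 ^ 2 = 10 := Real.sq_sqrt (by norm_num)
  rw [criticalTail]
  linear_combination this / 2

theorem sub_criticalTail_eq {z : ℝ} (hz : 0 ≤ z) :
    z - criticalTail =
      (criticalTail - gaussBranch 1 (gaussBranch 1 (gaussBranch 2 z))) *
        ((5 + 2 * z) * (5 + 2 * criticalTail)) := by
  have hx : gaussBranch 1 (gaussBranch 1 (gaussBranch 2 z)) = (3 + z) / (5 + 2 * z) := by
    simp only [gaussBranch]
    field_simp
    ring
  rw [hx]
  field_simp
  linear_combination -(5 + 2 * z) * criticalTail_quadratic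

namespace IsTailPair

-- Reflecting the pair at the next digit `2` turns the excess of `z` over `criticalTail` into a
-- defect of the opposite tail, since the two tails together stay below `2 * criticalTail`.
theorem exists_double_defect (h : IsTailPair m a x y) (hm : m < √10)
    (hx : x ∈ Ioo (1 / 2) criticalTail) :
    ∃ x' y', IsTailPair m 2 x' y' ∧ 1 / 2 < x' ∧
      2 * (criticalTail - x) ≤ criticalTail - x' := by
  obtain ⟨hc, hc'⟩ := criticalTail_mem_Ioo
  obtain ⟨z, rfl, hz⟩ := h.exists_next_one_one_two hm ⟨hx.1, hx.2.trans hc'⟩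
  obtain ⟨hz₀, -⟩ := hz.left_mem
  have hy : gaussBranch a y ∈ Ioo 0 1 :=
    gaussBranch_mem_Ioo (by exact_mod_cast h.one_le) h.right_mem.1
  refine ⟨_, z, hz.symm, half_lt_gaussBranch_one (gaussBranch_mem_Ioo le_rfl hy.1), ?_⟩
  have hgrow : (2 : ℝ) ≤ (5 + 2 * z) * (5 + 2 * criticalTail) := by nlinarith
  have hadd := hz.add_le.trans_lt hm
  rw [sqrt_ten_eq_two_add_two_mul_criticalTail, Int.cast_ofNat] at hadd
  have hdefect := mul_le_mul_of_nonneg_left hgrow (sub_nonneg.2 hx.2.le)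
  rw [← sub_criticalTail_eq hz₀.le] at hdefect
  linarith

theorem criticalTail_sub_le (h : IsTailPair m a x y) (hm : m < √10) (hx : 1 / 2 < x) (n : ℕ) :
    criticalTail - x ≤ (1 / 2) ^ n := by
  induction n generalizing a x y with
  | zero =>
    rw [pow_zero]
    linarith [criticalTail_mem_Ioo.2]
  | succ n ih =>
    rcases lt_or_ge x criticalTail with hlt | hge
    · obtain ⟨x', y', h', hx', hdouble⟩ := h.exists_double_defect hm ⟨hx, hlt⟩
      rw [pow_succ]
      linarith [ih h' hx']
    · exact (sub_nonpos.2 hge).trans (by positivity)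

theorem criticalTail_le (h : IsTailPair m a x y) (hm : m < √10) (hx : 1 / 2 < x) :
    criticalTail ≤ x :=
  sub_nonpos.1 <| ge_of_tendsto'
    (tendsto_pow_atTop_nhds_zero_of_lt_one (by norm_num) (by norm_num))
    (h.criticalTail_sub_le hm hx)

theorem right_le_half (h : IsTailPair m 2 x y) (hm : m < √10) (hx : 1 / 2 < x) : y ≤ 1 / 2 := by
  by_contra! hy
  have hsum := h.add_le.trans_lt hm
  rw [sqrt_ten_eq_two_add_two_mul_criticalTail, Int.cast_ofNat] at hsum
  linarith [h.criticalTail_le hm hx, h.symm.criticalTail_le hm hy]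

end IsTailPair

/-- The tails following a digit `k` in the continued fractions of forms of Markov value below
`√10`. -/
def tailSet (k : ℤ) : Set ℝ :=
  {x | ∃ m y : ℝ, m < √10 ∧ IsTailPair m k x y}

theorem tailSet_subset_Icc (k : ℤ) : tailSet k ⊆ Icc 0 1 := by
  rintro x ⟨m, y, -, h⟩
  exact Ioo_subset_Icc_self h.left_mem

theorem tailSet_two_subset :
    tailSet 2 ⊆ gaussBranch 1 '' tailSet 1 ∪ gaussBranch 2 '' tailSet 2 := by
  rintro x ⟨m, y, hm, h⟩
  obtain ⟨z, rfl, hz⟩ | ⟨z, rfl, hz⟩ := h.exists_next_one_or_two hm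
  · exact .inl ⟨z, ⟨m, _, hm, hz⟩, rfl⟩
  · exact .inr ⟨z, ⟨m, _, hm, hz⟩, rfl⟩

theorem tailSet_one_subset :
    tailSet 1 ⊆ gaussBranch 1 '' tailSet 1 ∪ gaussBranch 2 '' (gaussBranch 2 '' tailSet 2) := by
  rintro x ⟨m, y, hm, h⟩
  obtain ⟨z, rfl, hz⟩ | ⟨z, rfl, hz⟩ := h.exists_next_one_or_two hm
  · exact .inl ⟨z, ⟨m, _, hm, hz⟩, rfl⟩
  have hy : 1 / 2 < gaussBranch 1 y := half_lt_gaussBranch_one h.right_mem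
  rw [Int.cast_one] at hz
  obtain ⟨w, rfl, hw⟩ | ⟨w, rfl, hw⟩ := hz.exists_next_one_or_two hm
  · exact absurd (hz.right_le_half hm (half_lt_gaussBranch_one hw.left_mem)) hy.not_ge
  · exact .inr ⟨_, ⟨w, ⟨m, _, hm, hw⟩, rfl⟩, rfl⟩

end Tails

section Forms

variable {a b c m s t : ℝ}

/-- The value at `(x, y)` of the binary quadratic form with coefficients `a, b, c`. -/
def formVal (a b c x y : ℝ) : ℝ :=
  a * x ^ 2 + b * x * y + c * y ^ 2

/-- The form `a X² + b X Y + c Y²` has Markov value at most `m`. -/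
def FormBound (m a b c : ℝ) : Prop :=
  ∀ p q : ℤ, p ≠ 0 ∨ q ≠ 0 → √(discrim a b c) ≤ m * |formVal a b c p q|

theorem FormBound.formVal_ne_zero (h : FormBound m a b c) (hΔ : 0 < discrim a b c) {p q : ℤ}
    (hpq : p ≠ 0 ∨ q ≠ 0) : formVal a b c p q ≠ 0 := fun h₀ ↦ by
  have := h p q hpq
  rw [h₀, abs_zero, mul_zero] at this
  exact this.not_gt (Real.sqrt_pos.2 hΔ)

theorem ofReal_div_ofReal_le_markovVal (a b c : ℝ) {p q : ℤ} (hpq : p ≠ 0 ∨ q ≠ 0) :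
    ENNReal.ofReal √(discrim a b c) / ENNReal.ofReal |formVal a b c p q| ≤ markovVal a b c :=
  le_iSup₂_of_le (p, q) (by simpa [or_iff_not_imp_left] using hpq) le_rfl

theorem exists_lt_of_lt_markovVal {r : ℝ≥0∞} (h : r < markovVal a b c) :
    ∃ p q : ℤ, (p ≠ 0 ∨ q ≠ 0) ∧
      r < ENNReal.ofReal √(discrim a b c) / ENNReal.ofReal |formVal a b c p q| := by
  simp only [markovVal, lt_iSup_iff] at h
  obtain ⟨⟨p, q⟩, hpq, hlt⟩ := h
  exact ⟨p, q, by simpa [or_iff_not_imp_left] using hpq, hlt⟩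

theorem formBound_toReal_markovVal (hΔ : 0 < discrim a b c) (hm : markovVal a b c ≠ ⊤) :
    FormBound (markovVal a b c).toReal a b c := by
  intro p q hpq
  have hle := ofReal_div_ofReal_le_markovVal a b c hpq
  rcases eq_or_ne (formVal a b c p q) 0 with h₀ | h₀
  · rw [h₀, abs_zero, ENNReal.ofReal_zero,
      ENNReal.div_zero (ENNReal.ofReal_pos.2 (Real.sqrt_pos.2 hΔ)).ne'] at hle
    exact absurd (top_le_iff.1 hle) hm
  · rwa [← ENNReal.ofReal_div_of_pos (abs_pos.2 h₀), ENNReal.ofReal_le_iff_le_toReal hm,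
      div_le_iff₀ (abs_pos.2 h₀)] at hle

theorem exists_mul_abs_formVal_lt (hΔ : 0 < discrim a b c) (hm : markovVal a b c ≠ ⊤)
    (hs : 0 ≤ s) (hsm : s < (markovVal a b c).toReal) :
    ∃ p q : ℤ, (p ≠ 0 ∨ q ≠ 0) ∧ s * |formVal a b c p q| < √(discrim a b c) := by
  obtain ⟨p, q, hpq, hlt⟩ := exists_lt_of_lt_markovVal
    ((ENNReal.ofReal_lt_iff_lt_toReal hs hm).2 hsm)
  have hpos := abs_pos.2 ((formBound_toReal_markovVal hΔ hm).formVal_ne_zero hΔ hpq)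
  rw [← ENNReal.ofReal_div_of_pos hpos, ENNReal.ofReal_lt_ofReal_iff_of_nonneg hs,
    lt_div_iff₀ hpos] at hlt
  exact ⟨p, q, hpq, hlt⟩

theorem formVal_mul_mul (g x y : ℝ) :
    formVal a b c (g * x) (g * y) = g ^ 2 * formVal a b c x y := by
  unfold formVal
  ring

theorem exists_isCoprime_abs_formVal_le (a b c : ℝ) {p q : ℤ} (hpq : p ≠ 0 ∨ q ≠ 0) :
    ∃ p₀ q₀ : ℤ, IsCoprime p₀ q₀ ∧ |formVal a b c p₀ q₀| ≤ |formVal a b c p q| := by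
  have hg : 0 < Int.gcd p q := Int.gcd_pos_iff.2 hpq
  obtain ⟨p₀, q₀, hcop, hp, hq⟩ := Int.exists_gcd_one hg
  refine ⟨p₀, q₀, Int.isCoprime_iff_gcd_eq_one.2 hcop, ?_⟩
  have hval : formVal a b c p q = (Int.gcd p q : ℝ) ^ 2 * formVal a b c p₀ q₀ := by
    have hp' : (p : ℝ) = Int.gcd p q * p₀ := by
      rw [mul_comm]
      exact_mod_cast hp
    have hq' : (q : ℝ) = Int.gcd p q * q₀ := by
      rw [mul_comm]
      exact_mod_cast hq
    rw [hp', hq', formVal_mul_mul]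
  rw [hval, abs_mul, abs_sq]
  exact le_mul_of_one_le_left (abs_nonneg _) (one_le_pow₀ (by exact_mod_cast hg))

/-- The coefficient of `X Y` of the form with coefficients `a, b, c` after the substitution
`(X, Y) ↦ (p X + r Y, q X + s Y)`. -/
def crossCoeff (a b c p q r s : ℝ) : ℝ :=
  2 * a * p * r + b * (p * s + q * r) + 2 * c * q * s

theorem formVal_formVal (a b c p q r s x y : ℝ) :
    formVal (formVal a b c p q) (crossCoeff a b c p q r s) (formVal a b c r s) x y =
      formVal a b c (p * x + r * y) (q * x + s * y) := by
  unfold formVal crossCoeff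
  ring

theorem discrim_formVal (a b c p q r s : ℝ) :
    discrim (formVal a b c p q) (crossCoeff a b c p q r s) (formVal a b c r s) =
      (p * s - q * r) ^ 2 * discrim a b c := by
  unfold formVal crossCoeff discrim
  ring

theorem FormBound.unimodular (h : FormBound m a b c) {p q r s : ℤ} (hdet : p * s - q * r = 1) :
    FormBound m (formVal a b c p q) (crossCoeff a b c p q r s) (formVal a b c r s) := by
  intro x y hxy
  have hdet' : (p * s - q * r : ℝ) = 1 := by exact_mod_cast hdet
  have hne : p * x + r * y ≠ 0 ∨ q * x + s * y ≠ 0 := by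
    contrapose! hxy
    obtain ⟨h₁, h₂⟩ := hxy
    constructor
    · linear_combination s * h₁ - r * h₂ - x * hdet
    · linear_combination p * h₂ - q * h₁ - y * hdet
  rw [discrim_formVal, hdet', one_pow, one_mul, formVal_formVal]
  exact_mod_cast h _ _ hne

theorem formVal_eq_mul_roots (ha : a ≠ 0) {d : ℝ} (hd : discrim a b c = d ^ 2) (x y : ℝ) :
    formVal a b c x y =
      a * ((x - (-b / a + d / |a|) / 2 * y) * (x - (-b / a - d / |a|) / 2 * y)) := by
  have hda : (d / |a|) ^ 2 = d ^ 2 / a ^ 2 := by rw [div_pow, sq_abs]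
  calc
    formVal a b c x y
        = a * (x ^ 2 + b / a * x * y + (b ^ 2 / a ^ 2 - d ^ 2 / a ^ 2) / 4 * y ^ 2) := by
      rw [← hd, formVal, discrim]
      field_simp
      ring
    _ = _ := by
      rw [← hda]
      ring

theorem FormBound.exists_rootBound (h : FormBound m a b c) (ha : a ≠ 0) (hΔ : 0 < discrim a b c) :
    ∃ α β, RootBound m α β ∧ α - β = √(discrim a b c) / |a| := by
  have hdiff : (-b / a + √(discrim a b c) / |a|) / 2 - (-b / a - √(discrim a b c) / |a|) / 2 =
      √(discrim a b c) / |a| := by ring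
  refine ⟨_, _, fun p q hpq ↦ ?_, hdiff⟩
  have := h p q hpq
  rw [formVal_eq_mul_roots ha (Real.sq_sqrt hΔ.le).symm, abs_mul, mul_left_comm] at this
  rwa [hdiff, div_le_iff₀' (abs_pos.2 ha)]

theorem FormBound.exists_rootBound_of_isCoprime (h : FormBound m a b c) (hΔ : 0 < discrim a b c)
    {p q : ℤ} (hpq : IsCoprime p q) :
    ∃ α β, RootBound m α β ∧ α - β = √(discrim a b c) / |formVal a b c p q| := by
  have hval := h.formVal_ne_zero hΔ hpq.ne_zero_or_ne_zero
  obtain ⟨u, v, huv⟩ := hpq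
  have hdet : p * u - q * -v = 1 := by linear_combination huv
  have hdiscrim := discrim_formVal a b c p q (-v : ℤ) u
  rw [show (p * u - q * (-v : ℤ) : ℝ) = 1 by exact_mod_cast hdet, one_pow, one_mul] at hdiscrim
  simpa only [hdiscrim] using (h.unimodular hdet).exists_rootBound hval (hdiscrim ▸ hΔ)

theorem exists_rootBound_of_mem_markovSpectrum (ht : t ∈ MarkovSpectrum) (hs : 0 ≤ s)
    (hst : s < t) : ∃ α β, RootBound t α β ∧ s < α - β := by
  obtain ⟨a, b, c, hΔ, hm, rfl⟩ := ht
  have hbound := formBound_toReal_markovVal hΔ hm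
  obtain ⟨p, q, hpq, hlt⟩ := exists_mul_abs_formVal_lt hΔ hm hs hst
  obtain ⟨p₀, q₀, hcop, hle⟩ := exists_isCoprime_abs_formVal_le a b c hpq
  obtain ⟨α, β, hroot, hαβ⟩ := hbound.exists_rootBound_of_isCoprime hΔ hcop
  have hpos := abs_pos.2 (hbound.formVal_ne_zero hΔ hcop.ne_zero_or_ne_zero)
  refine ⟨α, β, hroot, ?_⟩
  rw [hαβ, lt_div_iff₀ hpos]
  exact (mul_le_mul_of_nonneg_left hle hs).trans_lt hlt

theorem markovSpectrum_inter_Ioo_subset :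
    MarkovSpectrum ∩ Ioo 2 √10 ⊆
      closure ({1, 2} + ((tailSet 1 ∪ tailSet 2) + (tailSet 1 ∪ tailSet 2))) := by
  rintro t ⟨ht, h2t, ht10⟩
  refine Metric.mem_closure_iff.2 fun ε hε ↦ ?_
  obtain ⟨α, β, hroot, hαβ⟩ := exists_rootBound_of_mem_markovSpectrum ht
    (le_max_of_le_left zero_le_two) (max_lt h2t (sub_lt_self t hε))
  obtain ⟨h2, hε'⟩ := max_lt_iff.1 hαβ
  obtain ⟨k, x, y, h, hsum⟩ := hroot.exists_isTailPair h2
  refine ⟨α - β, ?_, ?_⟩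
  · have hk := h.eq_one_or_two ht10
    have hmem {z w : ℝ} (hzw : IsTailPair t k z w) : z ∈ tailSet 1 ∪ tailSet 2 := by
      rcases hk with rfl | rfl
      exacts [.inl ⟨t, w, ht10, hzw⟩, .inr ⟨t, w, ht10, hzw⟩]
    rw [← hsum, add_assoc]
    exact add_mem_add (by rcases hk with rfl | rfl <;> simp) (add_mem_add (hmem h) (hmem h.symm))
  · rw [Real.dist_eq, abs_lt]
    constructor <;> linarith [hroot.sub_le]

end Forms

section DimensionBound

theorem rpow_div_le_of_pow_le_pow {r c : ℝ} {m n : ℕ} (hr : 0 ≤ r) (hc : 0 ≤ c) (hn : n ≠ 0)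
    (h : r ^ m ≤ c ^ n) : r ^ (m / n : ℝ) ≤ c := by
  calc
    r ^ (m / n : ℝ) = (r ^ m) ^ (n⁻¹ : ℝ) := by
      rw [div_eq_mul_inv, Real.rpow_mul hr, Real.rpow_natCast]
    _ ≤ (c ^ n) ^ (n⁻¹ : ℝ) := by gcongr
    _ = c := Real.pow_rpow_inv_natCast hc hn

theorem externalCoveringNumber_tailSet_le {Q : ℝ≥0} (hQ : 1 ≤ Q) :
    (externalCoveringNumber (Q ^ 2)⁻¹ (tailSet 1 ∪ tailSet 2) : ℝ≥0∞) ≤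
      ENNReal.ofReal (7 / 3 * (21 * Q / 2) ^ (9 / 10 : ℝ)) := by
  have h₁ : (2 / 3 : ℝ) ^ (9 / 10 : ℝ) ≤ 7 / 10 := by
    exact_mod_cast rpow_div_le_of_pow_le_pow (m := 9) (n := 10) (by norm_num) (by norm_num)
      (by norm_num) (by norm_num)
  have h₂ : (3 / 7 : ℝ) ^ (9 / 10 : ℝ) ≤ 47 / 100 := by
    exact_mod_cast rpow_div_le_of_pow_le_pow (m := 9) (n := 10) (by norm_num) (by norm_num)
      (by norm_num) (by norm_num)
  have h₂₂ : (3 / 17 : ℝ) ^ (9 / 10 : ℝ) ≤ 22 / 100 := by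
    exact_mod_cast rpow_div_le_of_pow_le_pow (m := 9) (n := 10) (by norm_num) (by norm_num)
      (by norm_num) (by norm_num)
  have : (1 : ℝ) ≤ Q := by exact_mod_cast hQ
  obtain ⟨hA, hC⟩ := ConvergentPair.nil.externalCoveringNumber_image_map_le
    (tailSet_subset_Icc 1) (tailSet_subset_Icc 2) tailSet_one_subset tailSet_two_subset
    (Q := Q) (s := 9 / 10) (v := 1) (w := 4 / 3) (by positivity) (by norm_num) (by norm_num)
    (by norm_num) (by linarith) (by linarith) (by simp only [ConvergentPair.nil]; linarith)
  simp only [ConvergentPair.map_nil, image_id', ConvergentPair.size_nil] at hA hC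
  calc
    (externalCoveringNumber (Q ^ 2)⁻¹ (tailSet 1 ∪ tailSet 2) : ℝ≥0∞)
        ≤ externalCoveringNumber (Q ^ 2)⁻¹ (tailSet 1) +
          externalCoveringNumber (Q ^ 2)⁻¹ (tailSet 2) := by
      exact_mod_cast externalCoveringNumber_union_le _ _
    _ ≤ _ := add_le_add hA hC
    _ = ENNReal.ofReal (7 / 3 * (21 * Q / 2) ^ (9 / 10 : ℝ)) := by
      rw [← ENNReal.ofReal_add (by positivity) (by positivity)]
      ring_nf

theorem exists_forall_externalCoveringNumber_tailSet_le :
    ∃ L : ℝ≥0, ∀ ε : ℝ≥0, ε ≠ 0 → ε ≤ 1 →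
      (externalCoveringNumber ε (tailSet 1 ∪ tailSet 2) : ℝ≥0∞) ≤
        (L * ε ^ (-(9 / 20) : ℝ) : ℝ≥0) := by
  refine ⟨7 / 3 * (21 / 2) ^ (9 / 10 : ℝ), fun ε hε hε₁ ↦ ?_⟩
  have hQ : 1 ≤ NNReal.sqrt ε⁻¹ := by
    rw [NNReal.one_le_sqrt]
    exact (one_le_inv₀ (pos_iff_ne_zero.2 hε)).2 hε₁
  have hpow : NNReal.sqrt ε⁻¹ ^ (9 / 10 : ℝ) = ε ^ (-(9 / 20) : ℝ) := by
    rw [NNReal.sqrt_eq_rpow, ← NNReal.rpow_mul, NNReal.inv_rpow, NNReal.rpow_neg]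
    norm_num
  have h := externalCoveringNumber_tailSet_le hQ
  rw [NNReal.sq_sqrt, inv_inv] at h
  refine h.trans_eq ?_
  rw [← hpow, mul_assoc, ← NNReal.mul_rpow, ← ENNReal.ofReal_coe_nnreal]
  push_cast
  ring_nf

theorem externalCoveringNumber_markovSpectrum_le (ε : ℝ≥0) :
    externalCoveringNumber (ε + ε) (MarkovSpectrum ∩ Ioo 2 √10) ≤
      2 * externalCoveringNumber ε (tailSet 1 ∪ tailSet 2) ^ 2 := by
  have hpair : externalCoveringNumber 0 ({1, 2} : Set ℝ) ≤ 2 :=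
    (externalCoveringNumber_le_encard_self _).trans (encard_pair (by norm_num)).le
  set T := tailSet 1 ∪ tailSet 2
  calc
    externalCoveringNumber (ε + ε) (MarkovSpectrum ∩ Ioo 2 √10)
        ≤ externalCoveringNumber (0 + (ε + ε)) ({1, 2} + (T + T)) := by
      rw [zero_add]
      exact (externalCoveringNumber_mono_set markovSpectrum_inter_Ioo_subset).trans
        (externalCoveringNumber_closure_le _)
    _ ≤ externalCoveringNumber 0 {1, 2} * externalCoveringNumber (ε + ε) (T + T) :=
      externalCoveringNumber_add_le _ _ _ _
    _ ≤ 2 * externalCoveringNumber ε T ^ 2 := by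
      rw [sq]
      gcongr
      exact externalCoveringNumber_add_le _ _ _ _

theorem dimH_markovSpectrum_inter_Ioo_le : dimH (MarkovSpectrum ∩ Ioo 2 √10) ≤ (9 / 10 : ℝ≥0) := by
  obtain ⟨L, hL⟩ := exists_forall_externalCoveringNumber_tailSet_le
  refine dimH_le_of_frequently_externalCoveringNumber_le (K := 2 * L ^ 2 * 2 ^ (9 / 10 : ℝ))
    (Eventually.frequently ?_)
  filter_upwards [self_mem_nhdsWithin, mem_nhdsWithin_of_mem_nhds (Iic_mem_nhds zero_lt_two)]
    with r (hr : r ≠ 0) hr₂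
  have hpow : ((r / 2) ^ (-(9 / 20) : ℝ)) ^ 2 = 2 ^ (9 / 10 : ℝ) * r ^ (-(9 / 10 : ℝ≥0) : ℝ) := by
    rw [← NNReal.rpow_mul_natCast, NNReal.div_rpow, div_eq_inv_mul, ← NNReal.rpow_neg]
    norm_num
  calc
    (externalCoveringNumber r (MarkovSpectrum ∩ Ioo 2 √10) : ℝ≥0∞)
        ≤ 2 * (externalCoveringNumber (r / 2) (tailSet 1 ∪ tailSet 2) : ℝ≥0∞) ^ 2 := by
      have := externalCoveringNumber_markovSpectrum_le (r / 2)
      rw [add_halves] at this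
      exact_mod_cast this
    _ ≤ 2 * (L * (r / 2) ^ (-(9 / 20) : ℝ) : ℝ≥0) ^ 2 := by
      gcongr
      exact hL _ (by positivity) (div_le_one_of_le₀ hr₂ zero_le_two)
    _ = (2 * L ^ 2 * 2 ^ (9 / 10 : ℝ) * r ^ (-(9 / 10 : ℝ≥0) : ℝ) : ℝ≥0) := by
      rw [mul_assoc, ← hpow, mul_assoc, ← mul_pow]
      push_cast
      rfl

theorem hall_dimension_bound_general :
    dimH (MarkovSpectrum ∩ Ioc 2 √10) ≤ (9 / 10 : ℝ≥0) := by
  have hsub : MarkovSpectrum ∩ Ioc 2 √10 ⊆ MarkovSpectrum ∩ Ioo 2 √10 ∪ {√10} := by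
    rintro t ⟨ht, h2, h10⟩
    exact h10.lt_or_eq.imp (⟨ht, h2, ·⟩) id
  calc
    dimH (MarkovSpectrum ∩ Ioc 2 √10) ≤ dimH (MarkovSpectrum ∩ Ioo 2 √10 ∪ {√10}) := dimH_mono hsub
    _ = dimH (MarkovSpectrum ∩ Ioo 2 √10) := by rw [dimH_union, dimH_singleton, max_eq_left zero_le]
    _ ≤ (9 / 10 : ℝ≥0) := dimH_markovSpectrum_inter_Ioo_le

end DimensionBound

/-- **Hall (1971)**: the portion `M ∩ [√5, √10]` of the Markov spectrum has Hausdorff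
dimension at most `0.93`; in particular it has Lebesgue measure zero. -/
theorem hall_dimension_bound :
    dimH (MarkovSpectrum ∩ Set.Icc (Real.sqrt 5) (Real.sqrt 10)) ≤ ENNReal.ofReal 0.93 ∧
    MeasureTheory.volume (MarkovSpectrum ∩ Set.Icc (Real.sqrt 5) (Real.sqrt 10)) = 0 := by
  have hsub : MarkovSpectrum ∩ Icc √5 √10 ⊆ MarkovSpectrum ∩ Ioc 2 √10 :=
    inter_subset_inter_right _ fun t ht ↦
      ⟨(Real.lt_sqrt_of_sq_lt (by norm_num)).trans_le ht.1, ht.2⟩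
  have hdim := (dimH_mono hsub).trans hall_dimension_bound_general
  constructor
  · refine hdim.trans ?_
    rw [← ENNReal.ofReal_coe_nnreal]
    exact ENNReal.ofReal_le_ofReal (by push_cast; norm_num)
  · exact volume_eq_zero_of_dimH_lt_one (hdim.trans_lt (by exact_mod_cast by norm_num))
end

section
/- The Hausdorff dimension of (M ∖ L) ∩ [√10, √12] is strictly less than 0.706094; in particular it is less than 0.93. -/
open scoped ENNReal

/-- The distance from a real number to the nearest integer. -/
noncomputable def distNearestInt (x : ℝ) : ℝ := |x - round x|

/-- The best constant of Diophantine approximation of `α`,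
`ℓ(α) = limsup_{q → ∞} 1 / (q ⬝ ‖q α‖) ∈ [0, ∞]`. -/
noncomputable def lagrangeVal (α : ℝ) : ℝ≥0∞ :=
  Filter.limsup (fun q : ℕ => ENNReal.ofReal (1 / (q * distNearestInt (q * α)))) Filter.atTop

/-- The Lagrange spectrum: the set of finite values `ℓ(α)` over irrational `α`. -/
def LagrangeSpectrum : Set ℝ :=
  {t | ∃ α : ℝ, Irrational α ∧ lagrangeVal α ≠ ⊤ ∧ (lagrangeVal α).toReal = t}

/-!
A Markov value `t ∈ [√10, √12]` is an attained maximum of `a i + [0; a (i+1), …] + [0; a (i-1), …]`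
over the positions `i` of a bi-infinite sequence `a` of ones and twos. Suppose that at every scale
`N` both halves of `a` can be modified beyond position `N` so as to end in `222…` without exceeding
`t` by more than `O((3 / 5) ^ N)`. Concatenating the modified central blocks then gives a one-sided
sequence with limit superior `t`, so `t` is a Lagrange value. Otherwise this steering fails at some
scale `N`. Two such sequences with the same central word and nearly equal values can branch only as
`112…` against `2212…`: if not, `1122…` or `22122…` lies between the two futures and steers one of
them. Such rigid branching bounds the box dimension of the futures by `3 / 20`; all pasts
have box dimension at most `5 / 9`, and `3 / 20 + 5 / 9 < 0.706094`.
-/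

open Filter Topology
open scoped NNReal

/-! ### Continued fractions with partial quotients `1` and `2` -/

/-- All terms are `1` or `2`; used for one-sided (`ι = ℕ`) and bi-infinite (`ι = ℤ`) sequences. -/
def IsOneTwo {ι : Type*} (s : ι → ℕ) : Prop := ∀ i, s i = 1 ∨ s i = 2

/-- The approximant `[0; s 0, …, s (n - 1) + 1 / 2]`. The tail `1 / 2` keeps all approximants in the
interval `[4 / 11, 11 / 15]`, which every map `x ↦ 1 / (d + x)`, `d ∈ {1, 2}`, sends to itself. -/
noncomputable def cfApprox : ℕ → (ℕ → ℕ) → ℝ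
  | 0, _ => 1 / 2
  | n + 1, s => 1 / (s 0 + cfApprox n (fun k => s (k + 1)))

/-- The infinite continued fraction `[0; s 0, s 1, …]` (junk if the approximants diverge). -/
noncomputable def cf (s : ℕ → ℕ) : ℝ := atTop.limUnder (fun n => cfApprox n s)

lemma IsOneTwo.tail {s : ℕ → ℕ} (hs : IsOneTwo s) : IsOneTwo (fun k => s (k + 1)) := fun _ => hs _

lemma IsOneTwo.cast {ι : Type*} {s : ι → ℕ} (hs : IsOneTwo s) (i : ι) :
    (s i : ℝ) = 1 ∨ (s i : ℝ) = 2 := by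
  exact_mod_cast hs i

lemma IsOneTwo.one_le_cast {ι : Type*} {s : ι → ℕ} (hs : IsOneTwo s) (i : ι) :
    (1 : ℝ) ≤ s i := by
  rcases hs.cast i with h | h <;> rw [h]; norm_num

lemma abs_one_div_sub_one_div_le {u v m : ℝ} (hu : 0 < u) (hv : 0 < v) (hm : 0 < m)
    (h : m ≤ u * v) : |1 / u - 1 / v| ≤ |u - v| / m := by
  have huv : 0 < u * v := mul_pos hu hv
  rw [div_sub_div _ _ hu.ne' hv.ne', one_mul, mul_one, abs_div, abs_of_pos huv, abs_sub_comm]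
  gcongr

lemma one_div_add_mem {d x : ℝ} (hd : d = 1 ∨ d = 2) (hx : x ∈ Set.Icc (4 / 11 : ℝ) (11 / 15)) :
    1 / (d + x) ∈ Set.Icc (4 / 11 : ℝ) (11 / 15) := by
  obtain ⟨h1, h2⟩ := hx
  rcases hd with rfl | rfl <;> constructor <;>
    rw [div_le_div_iff₀ (by linarith) (by linarith)] <;> linarith

lemma abs_one_div_add_sub_le {d x y : ℝ} (hd : 1 ≤ d) (hx : 4 / 11 ≤ x) (hy : 4 / 11 ≤ y) :
    |1 / (d + x) - 1 / (d + y)| ≤ 3 / 5 * |x - y| := by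
  have hprod : (15 / 11 : ℝ) * (15 / 11) ≤ (d + x) * (d + y) := by gcongr <;> linarith
  calc |1 / (d + x) - 1 / (d + y)| ≤ |d + x - (d + y)| / (5 / 3) :=
        abs_one_div_sub_one_div_le (by linarith) (by linarith) (by norm_num) (by linarith)
    _ = 3 / 5 * |x - y| := by rw [add_sub_add_left_eq_sub]; ring

lemma abs_sub_le_one_of_mem {x y : ℝ} (hx : x ∈ Set.Icc (0 : ℝ) 1) (hy : y ∈ Set.Icc (0 : ℝ) 1) :
    |x - y| ≤ 1 :=
  abs_sub_le_iff.2 ⟨by linarith [hx.2, hy.1], by linarith [hx.1, hy.2]⟩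

lemma Icc_subset_unit : Set.Icc (4 / 11 : ℝ) (11 / 15) ⊆ Set.Icc 0 1 :=
  Set.Icc_subset_Icc (by norm_num) (by norm_num)

lemma cfApprox_mem {s : ℕ → ℕ} (hs : IsOneTwo s) (n : ℕ) :
    cfApprox n s ∈ Set.Icc (4 / 11 : ℝ) (11 / 15) := by
  induction n generalizing s with
  | zero => constructor <;> norm_num [cfApprox]
  | succ n ih => exact one_div_add_mem (hs.cast 0) (ih hs.tail)

lemma abs_cfApprox_sub_succ_le {s : ℕ → ℕ} (hs : IsOneTwo s) (n : ℕ) :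
    |cfApprox n s - cfApprox (n + 1) s| ≤ (3 / 5 : ℝ) ^ n := by
  induction n generalizing s with
  | zero =>
    rw [pow_zero]
    exact abs_sub_le_one_of_mem (Icc_subset_unit (cfApprox_mem hs _))
      (Icc_subset_unit (cfApprox_mem hs _))
  | succ n ih =>
    calc _ ≤ 3 / 5 * |cfApprox n (fun k => s (k + 1)) - cfApprox (n + 1) (fun k => s (k + 1))| :=
          abs_one_div_add_sub_le (hs.one_le_cast 0) (cfApprox_mem hs.tail _).1
            (cfApprox_mem hs.tail _).1
      _ ≤ 3 / 5 * (3 / 5) ^ n := by gcongr; exact ih hs.tail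
      _ = (3 / 5) ^ (n + 1) := (pow_succ' _ _).symm

lemma tendsto_cfApprox {s : ℕ → ℕ} (hs : IsOneTwo s) :
    Tendsto (fun n => cfApprox n s) atTop (𝓝 (cf s)) := by
  refine (cauchySeq_of_le_geometric (3 / 5 : ℝ) 1 (by norm_num) fun n => ?_).tendsto_limUnder
  rw [Real.dist_eq, one_mul]
  exact abs_cfApprox_sub_succ_le hs n

lemma cf_mem {s : ℕ → ℕ} (hs : IsOneTwo s) : cf s ∈ Set.Icc (4 / 11 : ℝ) (11 / 15) :=
  isClosed_Icc.mem_of_tendsto (tendsto_cfApprox hs) (Eventually.of_forall (cfApprox_mem hs))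

lemma cf_pos {s : ℕ → ℕ} (hs : IsOneTwo s) : 0 < cf s := by linarith [(cf_mem hs).1]

lemma cf_eq {s : ℕ → ℕ} (hs : IsOneTwo s) : cf s = 1 / (s 0 + cf (fun k => s (k + 1))) := by
  have hne : (s 0 : ℝ) + cf (fun k => s (k + 1)) ≠ 0 :=
    (add_pos_of_nonneg_of_pos (Nat.cast_nonneg _) (cf_pos hs.tail)).ne'
  exact tendsto_nhds_unique ((tendsto_cfApprox hs).comp (tendsto_add_atTop_nat 1))
    (tendsto_const_nhds.div (tendsto_const_nhds.add (tendsto_cfApprox hs.tail)) hne)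

lemma abs_cf_sub_le {s s' : ℕ → ℕ} (hs : IsOneTwo s) (hs' : IsOneTwo s') (n : ℕ)
    (h : ∀ k < n, s k = s' k) : |cf s - cf s'| ≤ (3 / 5 : ℝ) ^ n := by
  induction n generalizing s s' with
  | zero =>
    rw [pow_zero]
    exact abs_sub_le_one_of_mem (Icc_subset_unit (cf_mem hs)) (Icc_subset_unit (cf_mem hs'))
  | succ n ih =>
    rw [cf_eq hs, cf_eq hs', ← h 0 n.succ_pos]
    calc _ ≤ 3 / 5 * |cf (fun k => s (k + 1)) - cf (fun k => s' (k + 1))| :=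
          abs_one_div_add_sub_le (hs.one_le_cast 0) (cf_mem hs.tail).1 (cf_mem hs'.tail).1
      _ ≤ 3 / 5 * (3 / 5) ^ n := by
          gcongr; exact ih hs.tail hs'.tail fun k hk => h (k + 1) (by omega)
      _ = (3 / 5) ^ (n + 1) := (pow_succ' _ _).symm

lemma abs_sub_cf_le_of_gauss {s : ℕ → ℕ} (hs : IsOneTwo s) {z : ℕ → ℝ}
    (hmem : ∀ n, z n ∈ Set.Icc (0 : ℝ) 1) (hz : ∀ n, z n = 1 / (s n + z (n + 1))) (n : ℕ) :
    |z 0 - cf s| ≤ (11 / 15 : ℝ) ^ n := by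
  induction n generalizing s z with
  | zero =>
    rw [pow_zero]
    exact abs_sub_le_one_of_mem (hmem 0) (Icc_subset_unit (cf_mem hs))
  | succ n ih =>
    have hd := hs.one_le_cast 0
    have hcf := (cf_mem hs.tail).1
    have hz1 := (hmem (0 + 1)).1
    have hprod : (1 : ℝ) * (15 / 11) ≤
        (s 0 + z (0 + 1)) * (s 0 + cf (fun k => s (k + 1))) := by
      gcongr <;> linarith
    have ih' := ih hs.tail (z := fun k => z (k + 1)) (fun _ => hmem _) (fun _ => hz _)
    rw [hz 0, cf_eq hs]
    calc _ ≤ _ := abs_one_div_sub_one_div_le (by linarith) (by linarith) (by norm_num) hprod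
      _ = 11 / 15 * |z (0 + 1) - cf (fun k => s (k + 1))| := by
          rw [add_sub_add_left_eq_sub]; ring
      _ ≤ 11 / 15 * (11 / 15) ^ n := by gcongr
      _ = (11 / 15) ^ (n + 1) := (pow_succ' _ _).symm

lemma eq_cf_of_gauss {s : ℕ → ℕ} (hs : IsOneTwo s) {z : ℕ → ℝ}
    (hmem : ∀ n, z n ∈ Set.Icc (0 : ℝ) 1) (hz : ∀ n, z n = 1 / (s n + z (n + 1))) :
    z 0 = cf s := by
  have hlim : Tendsto (fun n : ℕ => (11 / 15 : ℝ) ^ n) atTop (𝓝 0) :=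
    tendsto_pow_atTop_nhds_zero_of_lt_one (by norm_num) (by norm_num)
  have hle := ge_of_tendsto' hlim (abs_sub_cf_le_of_gauss hs hmem hz)
  exact sub_eq_zero.1 (abs_nonpos_iff.1 hle)

lemma cf_mem_uIcc {s s' c : ℕ → ℕ} (hs : IsOneTwo s) (hs' : IsOneTwo s') (hc : IsOneTwo c) (n : ℕ)
    (h : ∀ k < n, c k = s k) (h' : ∀ k < n, c k = s' k)
    (hn : cf (fun k => c (k + n)) ∈ Set.uIcc (cf (fun k => s (k + n))) (cf (fun k => s' (k + n)))) :
    cf c ∈ Set.uIcc (cf s) (cf s') := by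
  induction n generalizing s s' c with
  | zero => exact hn
  | succ n ih =>
    have htail := ih hs.tail hs'.tail hc.tail (fun k hk => h (k + 1) (by omega))
      (fun k hk => h' (k + 1) (by omega)) (by simpa only [add_assoc, add_comm 1] using hn)
    rw [cf_eq hs, cf_eq hs', cf_eq hc, ← h 0 n.succ_pos, ← h' 0 n.succ_pos]
    have hd := hc.one_le_cast 0
    have hp := cf_pos hs.tail
    have hp' := cf_pos hs'.tail
    have hpc := cf_pos hc.tail
    rw [Set.mem_uIcc] at htail ⊢
    rcases htail with ⟨hlo, hhi⟩ | ⟨hlo, hhi⟩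
    · right
      constructor <;> gcongr
    · left
      constructor <;> gcongr

lemma cf_le_cf_of_head_lt {s s' : ℕ → ℕ} (hs : IsOneTwo s) (hs' : IsOneTwo s')
    (h : s' 0 < s 0) : cf s ≤ cf s' := by
  rw [cf_eq hs, cf_eq hs']
  have htail := cf_mem hs.tail
  have htail' := cf_mem hs'.tail
  have hd := hs'.one_le_cast 0
  have hlt : (s' 0 : ℝ) + 1 ≤ s 0 := by exact_mod_cast h
  apply one_div_le_one_div_of_le <;> linarith [htail.1, htail'.1, htail'.2]

lemma cf_le_cf_of_tail {s s' : ℕ → ℕ} (hs : IsOneTwo s) (hs' : IsOneTwo s') (h : s 0 = s' 0)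
    (ht : cf (fun k => s' (k + 1)) ≤ cf (fun k => s (k + 1))) : cf s ≤ cf s' := by
  rw [cf_eq hs, cf_eq hs', h]
  have hpos := cf_pos hs'.tail
  have hd := hs'.one_le_cast 0
  gcongr

/-! ### Bi-infinite sequences -/

/-- The terms of the bi-infinite sequence `a` strictly to the right of position `i`. -/
def future (a : ℤ → ℕ) (i : ℤ) : ℕ → ℕ := fun n => a (i + 1 + n)

/-- The terms of the bi-infinite sequence `a` strictly to the left of position `i`, read from right
to left. -/
def past (a : ℤ → ℕ) (i : ℤ) : ℕ → ℕ := fun n => a (i - 1 - n)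

/-- The quantity `λ_i(a) = [a i; a (i + 1), …] + [0; a (i - 1), a (i - 2), …]`, whose supremum over
`i` is a Markov value and whose limsup is a Lagrange value. -/
noncomputable def localVal (a : ℤ → ℕ) (i : ℤ) : ℝ := a i + cf (future a i) + cf (past a i)

/-- The bi-infinite sequence `a` read backwards. -/
def mirror (a : ℤ → ℕ) : ℤ → ℕ := fun i => a (-i)

lemma future_mirror (a : ℤ → ℕ) (i : ℤ) : future (mirror a) i = past a (-i) := by
  funext n; simp only [future, mirror, past]; congr 1; ring

lemma past_mirror (a : ℤ → ℕ) (i : ℤ) : past (mirror a) i = future a (-i) := by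
  funext n; simp only [future, mirror, past]; congr 1; ring

lemma localVal_mirror (a : ℤ → ℕ) (i : ℤ) : localVal (mirror a) i = localVal a (-i) := by
  simp only [localVal, future_mirror, past_mirror, mirror]; ring

lemma future_tail (a : ℤ → ℕ) (i : ℤ) (m : ℕ) :
    (fun k => future a i (k + m)) = future a (i + m) := by
  funext n; simp only [future]; congr 1; push_cast; ring

section
variable {a : ℤ → ℕ}

lemma IsOneTwo.future (ha : IsOneTwo a) (i : ℤ) : IsOneTwo (future a i) := fun _ => ha _

lemma IsOneTwo.past (ha : IsOneTwo a) (i : ℤ) : IsOneTwo (past a i) := fun _ => ha _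

lemma IsOneTwo.mirror (ha : IsOneTwo a) : IsOneTwo (mirror a) := fun _ => ha _

lemma cf_future (ha : IsOneTwo a) (i : ℤ) :
    cf (future a i) = 1 / (a (i + 1) + cf (future a (i + 1))) := by
  rw [cf_eq (ha.future i)]
  congr 3
  · simp [future]
  · exact future_tail a i 1

lemma cf_past (ha : IsOneTwo a) (i : ℤ) :
    cf (past a (i + 1)) = 1 / (a i + cf (past a i)) := by
  rw [cf_eq (ha.past (i + 1))]
  congr 3
  · simp [past]
  · funext n; simp only [past]; congr 1; push_cast; ring

lemma localVal_le_of_eq_one (ha : IsOneTwo a) {i : ℤ} (h : a i = 1) : localVal a i ≤ 3.157 := by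
  have hfut := (cf_mem (ha.future i)).2
  have hpast := (cf_mem (ha.past i)).2
  rw [localVal, h, Nat.cast_one]
  linarith

lemma localVal_le_of_succ_eq_two (ha : IsOneTwo a) {i : ℤ} (h : a (i + 1) = 2) :
    localVal a i ≤ 3.157 := by
  have hfut' := (cf_mem (ha.future (i + 1))).1
  have hpast := (cf_mem (ha.past i)).2
  have hfut : cf (future a i) ≤ 11 / 26 := by
    rw [cf_future ha, h, Nat.cast_ofNat, div_le_div_iff₀ (by linarith) (by norm_num)]
    linarith
  rw [localVal]
  rcases ha.cast i with h | h <;> rw [h] <;> linarith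

lemma localVal_le_of_pred_eq_two (ha : IsOneTwo a) {i : ℤ} (h : a (i - 1) = 2) :
    localVal a i ≤ 3.157 := by
  have := localVal_le_of_succ_eq_two ha.mirror (i := -i) (h ▸ congrArg a (by ring))
  rwa [localVal_mirror, neg_neg] at this

lemma abs_localVal_sub_le {c : ℤ → ℕ} (ha : IsOneTwo a) (hc : IsOneTwo c) (i : ℤ) (m n : ℕ)
    (h : ∀ j, i - m ≤ j → j ≤ i + n → a j = c j) :
    |localVal a i - localVal c i| ≤ (3 / 5 : ℝ) ^ m + (3 / 5 : ℝ) ^ n := by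
  have hfut := abs_cf_sub_le (ha.future i) (hc.future i) n fun k hk => h _ (by omega) (by omega)
  have hpast := abs_cf_sub_le (ha.past i) (hc.past i) m fun k hk => h _ (by omega) (by omega)
  rw [localVal, localVal, h i (by omega) (by omega)]
  rw [abs_le] at *
  constructor <;> linarith [hfut.1, hfut.2, hpast.1, hpast.2]

lemma abs_localVal_sub_le_of_eq_right {c : ℤ → ℕ} (ha : IsOneTwo a) (hc : IsOneTwo c) (i : ℤ)
    (m : ℕ) (h : ∀ j, i - m ≤ j → a j = c j) : |localVal a i - localVal c i| ≤ (3 / 5 : ℝ) ^ m := by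
  have hfut : future a i = future c i := funext fun k => h _ (by omega)
  rw [localVal, localVal, h i (by omega), hfut, add_sub_add_left_eq_sub]
  exact abs_cf_sub_le (ha.past i) (hc.past i) m fun k hk => h _ (by omega)

lemma abs_localVal_sub_le_of_eq_left {c : ℤ → ℕ} (ha : IsOneTwo a) (hc : IsOneTwo c) (i : ℤ)
    (n : ℕ) (h : ∀ j, j ≤ i + n → a j = c j) : |localVal a i - localVal c i| ≤ (3 / 5 : ℝ) ^ n := by
  have := abs_localVal_sub_le_of_eq_right ha.mirror hc.mirror (-i) n fun j hj => h _ (by omega)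
  rwa [localVal_mirror, localVal_mirror, neg_neg] at this

end

/-! ### Steering a sequence into `222…` -/

/-- The bi-infinite sequence `a` can be continued to the right from position `N` so as to end in
`222…`, with all local values at most `t + 2 (3 / 5) ^ N`. -/
def Connects (a : ℤ → ℕ) (t : ℝ) (N : ℕ) : Prop :=
  ∃ c : ℤ → ℕ, IsOneTwo c ∧ (∀ i ≤ (N : ℤ), c i = a i) ∧ (∃ R : ℕ, ∀ i ≥ (R : ℤ), c i = 2) ∧
    ∀ i, localVal c i ≤ t + 2 * (3 / 5 : ℝ) ^ N

/-- The bi-infinite sequence that follows `a` up to position `n` and continues with `s`. -/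
def glue (a : ℤ → ℕ) (n : ℤ) (s : ℕ → ℕ) : ℤ → ℕ :=
  fun i => if i ≤ n then a i else s (i - n - 1).toNat

/-- No isolated `2`: every `2` in the sequence is next to another `2`. -/
def TwosPaired (s : ℕ → ℕ) : Prop := ∀ k, s k = 1 ∨ s (k + 1) = 2 ∨ ∃ j, k = j + 1 ∧ s j = 2

section
variable {a a' : ℤ → ℕ} {s s' θ : ℕ → ℕ} {n i : ℤ}

lemma glue_of_le (h : i ≤ n) : glue a n s i = a i := if_pos h

lemma glue_of_eq (k : ℕ) (h : i = n + 1 + k) : glue a n s i = s k := by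
  have hlt : ¬ i ≤ n := by omega
  have hk : (i - n - 1).toNat = k := by omega
  rw [glue, if_neg hlt, hk]

lemma future_glue (a : ℤ → ℕ) (n : ℤ) (s : ℕ → ℕ) : future (glue a n s) n = s :=
  funext fun k => glue_of_eq k rfl

lemma glue_future_eq (h : i ≤ n → a i = a' i) : glue a n (future a' n) i = a' i := by
  by_cases hi : i ≤ n
  · rw [glue_of_le hi, h hi]
  · rw [glue_of_eq (i - n - 1).toNat (by omega)]
    exact congrArg a' (by omega)

lemma glue_future (a : ℤ → ℕ) (n : ℤ) : glue a n (future a n) = a :=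
  funext fun _ => glue_future_eq fun _ => rfl

lemma IsOneTwo.glue (ha : IsOneTwo a) (hs : IsOneTwo s) (n : ℤ) : IsOneTwo (glue a n s) := by
  intro i
  rw [_root_.glue]
  split_ifs
  exacts [ha i, hs _]

lemma localVal_glue_mem_uIcc (ha : IsOneTwo a) (hs : IsOneTwo s) (hs' : IsOneTwo s')
    (hθ : IsOneTwo θ) (hi : i ≤ n) (h : cf θ ∈ Set.uIcc (cf s) (cf s')) :
    localVal (glue a n θ) i ∈ Set.uIcc (localVal (glue a n s) i) (localVal (glue a n s') i) := by
  have hfuture : cf (future (glue a n θ) i) ∈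
      Set.uIcc (cf (future (glue a n s) i)) (cf (future (glue a n s') i)) := by
    refine cf_mem_uIcc ((ha.glue hs n).future i) ((ha.glue hs' n).future i)
      ((ha.glue hθ n).future i) (n - i).toNat (fun k hk => ?_) (fun k hk => ?_) ?_
    · exact (glue_of_le (by omega)).trans (glue_of_le (by omega)).symm
    · exact (glue_of_le (by omega)).trans (glue_of_le (by omega)).symm
    · rw [future_tail, future_tail, future_tail, show i + ((n - i).toNat : ℤ) = n by omega]
      rwa [future_glue, future_glue, future_glue]
  have hlocal : ∀ s'' : ℕ → ℕ, localVal (glue a n s'') i =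
      a i + cf (future (glue a n s'') i) + cf (past a i) := by
    intro s''
    have hpast : past (glue a n s'') i = past a i := funext fun k => glue_of_le (by omega)
    rw [localVal, hpast, glue_of_le hi]
  rw [hlocal, hlocal, hlocal, Set.mem_uIcc]
  rcases Set.mem_uIcc.1 hfuture with ⟨hlo, hhi⟩ | ⟨hlo, hhi⟩
  · exact Or.inl ⟨by linarith, by linarith⟩
  · exact Or.inr ⟨by linarith, by linarith⟩

lemma localVal_glue_le_of_twosPaired (ha : IsOneTwo a) (hθ : IsOneTwo θ) (hpair : TwosPaired θ)
    (hi : n < i) : localVal (glue a n θ) i ≤ 3.157 := by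
  have hc : IsOneTwo (glue a n θ) := ha.glue hθ n
  obtain ⟨k, rfl⟩ : ∃ k : ℕ, i = n + 1 + k := ⟨(i - n - 1).toNat, by omega⟩
  rcases hpair k with hone | hsucc | ⟨j, rfl, hpred⟩
  · exact localVal_le_of_eq_one hc ((glue_of_eq k rfl).trans hone)
  · exact localVal_le_of_succ_eq_two hc ((glue_of_eq (k + 1) (by push_cast; ring)).trans hsucc)
  · exact localVal_le_of_pred_eq_two hc ((glue_of_eq j (by push_cast; ring)).trans hpred)

end

section
variable {a a' : ℤ → ℕ} {t t' : ℝ} {N n : ℕ}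

lemma connects_of_between (ha : IsOneTwo a) (ha' : IsOneTwo a') (ht : 3.157 ≤ t)
    (htt' : t' ≤ t + (3 / 5 : ℝ) ^ N) (hat : ∀ i, localVal a i ≤ t)
    (hat' : ∀ i, localVal a' i ≤ t') (hn : N ≤ n) (h : ∀ i : ℤ, -N ≤ i → i ≤ n → a i = a' i)
    {θ : ℕ → ℕ} (hθ : IsOneTwo θ) (hpair : TwosPaired θ) (hend : ∃ R, ∀ k ≥ R, θ k = 2)
    (hbetween : cf θ ∈ Set.uIcc (cf (future a n)) (cf (future a' n))) : Connects a t N := by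
  have hc : IsOneTwo (glue a n θ) := ha.glue hθ n
  have hp : (0 : ℝ) < (3 / 5 : ℝ) ^ N := by positivity
  refine ⟨glue a n θ, hc, fun i hi => glue_of_le (by omega), ?_, fun i => ?_⟩
  · obtain ⟨R, hR⟩ := hend
    refine ⟨n + 1 + R, fun i hi => ?_⟩
    rw [glue_of_eq (i - n - 1).toNat (by omega)]
    exact hR _ (by omega)
  by_cases hneg : i < 0
  · have := abs_localVal_sub_le_of_eq_left hc ha i N fun j hj => glue_of_le (by omega)
    linarith [(abs_le.1 this).2, hat i]
  by_cases hin : i ≤ n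
  · have hmem := localVal_glue_mem_uIcc ha (ha.future n) (ha'.future n) hθ hin hbetween
    rw [glue_future] at hmem
    have hclose := abs_localVal_sub_le_of_eq_right (ha.glue (ha'.future n) n) ha' i N
      fun j hj => glue_future_eq fun hjn => h j (by omega) hjn
    refine hmem.2.trans (sup_le ?_ ?_)
    · linarith [hat i]
    · linarith [(abs_le.1 hclose).2, hat' i]
  · linarith [localVal_glue_le_of_twosPaired ha hθ hpair (not_le.1 hin)]

end

/-- The sequence `1, 1, 2, 2, 2, …`: the continuation used to steer between two branches, the upper
of which starts with `1` but not with `112`. -/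
def oneOneTwos : ℕ → ℕ := fun k => if k < 2 then 1 else 2

/-- The sequence `2, 2, 1, 2, 2, 2, …`: the continuation used to steer between two branches, the
lower of which starts with `2` but not with `2212`. -/
def twoTwoOneTwos : ℕ → ℕ := fun k => if k = 2 then 1 else 2

lemma isOneTwo_oneOneTwos : IsOneTwo oneOneTwos := fun n => by unfold oneOneTwos; split_ifs <;> simp

lemma isOneTwo_twoTwoOneTwos : IsOneTwo twoTwoOneTwos := fun n => by
  unfold twoTwoOneTwos; split_ifs <;> simp

lemma twosPaired_oneOneTwos : TwosPaired oneOneTwos := by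
  intro k
  by_cases hk : k < 2
  · exact Or.inl (if_pos hk)
  · exact Or.inr (Or.inl (if_neg (by omega)))

lemma twosPaired_twoTwoOneTwos : TwosPaired twoTwoOneTwos := by
  rintro (_ | _ | k)
  · exact Or.inr (Or.inl rfl)
  · exact Or.inr (Or.inr ⟨0, rfl, rfl⟩)
  · exact Or.inr (Or.inl (if_neg (by omega)))

lemma cf_oneOneTwos_le {s : ℕ → ℕ} (hs : IsOneTwo s) (h0 : s 0 = 1)
    (h : ¬ ∀ k ≤ 2, s k = oneOneTwos k) : cf oneOneTwos ≤ cf s := by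
  have hθ := isOneTwo_oneOneTwos
  refine cf_le_cf_of_tail hθ hs h0.symm ?_
  rcases hs 1 with h1 | h1
  · have h2 : s 2 = 1 := (hs 2).resolve_right fun h2 => h fun k hk => by
      interval_cases k <;> simp [oneOneTwos, *]
    refine cf_le_cf_of_tail hs.tail hθ.tail h1 ?_
    exact cf_le_cf_of_head_lt hθ.tail.tail hs.tail.tail (by simp [oneOneTwos, h2])
  · exact cf_le_cf_of_head_lt hs.tail hθ.tail (by simp [oneOneTwos, h1])

lemma cf_le_cf_twoTwoOneTwos {s : ℕ → ℕ} (hs : IsOneTwo s) (h0 : s 0 = 2)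
    (h : ¬ ∀ k ≤ 3, s k = twoTwoOneTwos k) : cf s ≤ cf twoTwoOneTwos := by
  have hθ := isOneTwo_twoTwoOneTwos
  refine cf_le_cf_of_tail hs hθ h0 ?_
  rcases hs 1 with h1 | h1
  · exact cf_le_cf_of_head_lt hθ.tail hs.tail (by simp [twoTwoOneTwos, h1])
  refine cf_le_cf_of_tail hθ.tail hs.tail h1.symm ?_
  rcases hs 2 with h2 | h2
  · have h3 : s 3 = 1 := (hs 3).resolve_right fun h3 => h fun k hk => by
      interval_cases k <;> simp [twoTwoOneTwos, *]
    refine cf_le_cf_of_tail hs.tail.tail hθ.tail.tail h2 ?_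
    exact cf_le_cf_of_head_lt hθ.tail.tail.tail hs.tail.tail.tail (by simp [twoTwoOneTwos, h3])
  · exact cf_le_cf_of_head_lt hs.tail.tail hθ.tail.tail (by simp [twoTwoOneTwos, h2])

/-- The sequences `x` and `y` first differ at position `m`, where `x` has `1` and `y` has `2`. -/
def BranchAt (x y : ℕ → ℕ) (m : ℕ) : Prop := (∀ k < m, x k = y k) ∧ x m = 1 ∧ y m = 2

/-- Whenever two members of `K` branch, they continue with `112` and `2212` respectively. -/
def ForcedBranching (K : Set (ℕ → ℕ)) : Prop :=
  ∀ x ∈ K, ∀ y ∈ K, ∀ m, BranchAt x y m →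
    (∀ k ≤ 2, x (m + k) = oneOneTwos k) ∧ ∀ k ≤ 3, y (m + k) = twoTwoOneTwos k

lemma forced_of_branch {a a' : ℤ → ℕ} (ha : IsOneTwo a) (ha' : IsOneTwo a') {t t' : ℝ}
    (ht : 3.157 ≤ t) {N : ℕ} (htt' : t' ≤ t + (3 / 5 : ℝ) ^ N) (hat : ∀ i, localVal a i ≤ t)
    (hat' : ∀ i, localVal a' i ≤ t') (hna : ¬ Connects a t N) {n : ℕ} (hn : N ≤ n)
    (h : ∀ i : ℤ, -N ≤ i → i ≤ n → a i = a' i) (h1 : future a n 0 = 1) (h2 : future a' n 0 = 2) :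
    (∀ k ≤ 2, future a n k = oneOneTwos k) ∧ ∀ k ≤ 3, future a' n k = twoTwoOneTwos k := by
  constructor <;> by_contra hcon
  · refine hna (connects_of_between ha ha' ht htt' hat hat' hn h isOneTwo_oneOneTwos
      twosPaired_oneOneTwos ⟨2, fun k hk => if_neg (by omega)⟩ (Set.mem_uIcc.2 (Or.inr ⟨?_, ?_⟩)))
    · exact cf_le_cf_of_head_lt (ha'.future n) isOneTwo_oneOneTwos (by simp [oneOneTwos, h2])
    · exact cf_oneOneTwos_le (ha.future n) h1 hcon
  · refine hna (connects_of_between ha ha' ht htt' hat hat' hn h isOneTwo_twoTwoOneTwos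
      twosPaired_twoTwoOneTwos ⟨3, fun k hk => if_neg (by omega)⟩
      (Set.mem_uIcc.2 (Or.inr ⟨?_, ?_⟩)))
    · exact cf_le_cf_twoTwoOneTwos (ha'.future n) h2 hcon
    · exact cf_le_cf_of_head_lt isOneTwo_twoTwoOneTwos (ha.future n) (by simp [twoTwoOneTwos, h1])

/-! ### Covering numbers and Hausdorff dimension -/

/-- The set `A` is covered by at most `b` closed balls of radius `ρ`. -/
def CoveredBy {X : Type*} [PseudoMetricSpace X] (A : Set X) (ρ b : ℝ) : Prop :=
  ∃ P : Finset X, (∀ x ∈ A, ∃ c ∈ P, dist x c ≤ ρ) ∧ (P.card : ℝ) ≤ b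

/-- The covering numbers of `S` are `O(ρ ^ (-s))`, so that the upper box dimension of `S` is at
most `s`. -/
def HasBoxBound {X : Type*} [PseudoMetricSpace X] (S : Set X) (s : ℝ) : Prop :=
  ∃ C : ℝ, 0 < C ∧ ∀ ρ : ℝ, 0 < ρ → ρ ≤ 1 → CoveredBy S ρ (C * ρ ^ (-s))

section
variable {X Y Z : Type*}

section
variable [PseudoMetricSpace X] [PseudoMetricSpace Y] [PseudoMetricSpace Z]

lemma CoveredBy.mono {A B : Set X} {ρ b c : ℝ} (h : CoveredBy B ρ b) (hAB : A ⊆ B) (hbc : b ≤ c) :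
    CoveredBy A ρ c :=
  let ⟨P, hP, hcard⟩ := h
  ⟨P, fun x hx => hP x (hAB hx), hcard.trans hbc⟩

lemma CoveredBy.union {A B : Set X} {ρ b c : ℝ} (hA : CoveredBy A ρ b) (hB : CoveredBy B ρ c) :
    CoveredBy (A ∪ B) ρ (b + c) := by
  classical
  obtain ⟨P, hP, hPcard⟩ := hA
  obtain ⟨Q, hQ, hQcard⟩ := hB
  refine ⟨P ∪ Q, ?_, ?_⟩
  · rintro x (hx | hx)
    · obtain ⟨c, hc, hxc⟩ := hP x hx
      exact ⟨c, Finset.mem_union_left _ hc, hxc⟩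
    · obtain ⟨c, hc, hxc⟩ := hQ x hx
      exact ⟨c, Finset.mem_union_right _ hc, hxc⟩
  · calc ((P ∪ Q).card : ℝ) ≤ P.card + Q.card := by exact_mod_cast Finset.card_union_le P Q
      _ ≤ b + c := add_le_add hPcard hQcard

lemma CoveredBy.image2 {f : X → Y → Z} (hf : ∀ x x' y y', dist (f x y) (f x' y') ≤
    dist x x' + dist y y') {A : Set X} {B : Set Y} {ρ σ b c : ℝ} (hA : CoveredBy A ρ b)
    (hB : CoveredBy B σ c) : CoveredBy (Set.image2 f A B) (ρ + σ) (b * c) := by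
  classical
  obtain ⟨P, hP, hPcard⟩ := hA
  obtain ⟨Q, hQ, hQcard⟩ := hB
  refine ⟨Finset.image₂ f P Q, ?_, ?_⟩
  · rintro _ ⟨x, hx, y, hy, rfl⟩
    obtain ⟨c, hc, hxc⟩ := hP x hx
    obtain ⟨d, hd, hyd⟩ := hQ y hy
    exact ⟨f c d, Finset.mem_image₂_of_mem hc hd, (hf _ _ _ _).trans (add_le_add hxc hyd)⟩
  · calc ((Finset.image₂ f P Q).card : ℝ) ≤ P.card * Q.card := by
          exact_mod_cast Finset.card_image₂_le f P Q
      _ ≤ b * c := mul_le_mul hPcard hQcard (Nat.cast_nonneg _)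
          ((Nat.cast_nonneg _).trans hPcard)

lemma coveredBy_one_of_dist_le {A : Set X} {ρ : ℝ} (h : ∀ x ∈ A, ∀ y ∈ A, dist x y ≤ ρ) :
    CoveredBy A ρ 1 := by
  rcases A.eq_empty_or_nonempty with rfl | ⟨y, hy⟩
  · exact ⟨∅, by simp, by simp⟩
  · exact ⟨{y}, fun x hx => ⟨y, Finset.mem_singleton_self y, h x hx y hy⟩, by simp⟩

lemma HasBoxBound.mono {S T : Set X} {s : ℝ} (hT : HasBoxBound T s) (h : S ⊆ T) :
    HasBoxBound S s :=
  let ⟨C, hC, hcov⟩ := hT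
  ⟨C, hC, fun ρ h0 h1 => (hcov ρ h0 h1).mono h le_rfl⟩

lemma HasBoxBound.image2 {f : X → Y → Z} (hf : ∀ x x' y y', dist (f x y) (f x' y') ≤
    dist x x' + dist y y') {S : Set X} {T : Set Y} {s t : ℝ} (hS : HasBoxBound S s)
    (hT : HasBoxBound T t) : HasBoxBound (Set.image2 f S T) (s + t) := by
  obtain ⟨C, hC, hcovS⟩ := hS
  obtain ⟨D, hD, hcovT⟩ := hT
  refine ⟨C * D * (1 / 2) ^ (-(s + t)), by positivity, fun ρ hρ hρ1 => ?_⟩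
  have hcov := (hcovS (1 / 2 * ρ) (by linarith) (by linarith)).image2 hf
    (hcovT (1 / 2 * ρ) (by linarith) (by linarith))
  rw [← add_mul, add_halves, one_mul] at hcov
  refine hcov.mono subset_rfl (le_of_eq ?_)
  calc C * (1 / 2 * ρ) ^ (-s) * (D * (1 / 2 * ρ) ^ (-t))
      = C * D * ((1 / 2 * ρ) ^ (-s) * (1 / 2 * ρ) ^ (-t)) := by ring
    _ = C * D * (1 / 2) ^ (-(s + t)) * ρ ^ (-(s + t)) := by
        rw [← Real.rpow_add (by linarith), ← neg_add, Real.mul_rpow (by norm_num) hρ.le]; ring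

end

lemma ediam_closedBall_le_ofReal [PseudoMetricSpace X] (x : X) {ρ : ℝ} (hρ : 0 ≤ ρ) :
    Metric.ediam (Metric.closedBall x ρ) ≤ ENNReal.ofReal (2 * ρ) := by
  rw [ENNReal.ofReal_mul zero_le_two, ENNReal.ofReal_ofNat, ← Metric.closedEBall_ofReal hρ]
  exact Metric.ediam_closedEBall_le

lemma sum_ediam_closedBall_rpow_le [PseudoMetricSpace X] (P : Finset X) {ρ s : ℝ} (hρ : 0 ≤ ρ)
    (hs : 0 ≤ s) : ∑ c : P, Metric.ediam (Metric.closedBall (c : X) ρ) ^ s ≤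
      ENNReal.ofReal (P.card * (2 * ρ) ^ s) := by
  calc ∑ c : P, Metric.ediam (Metric.closedBall (c : X) ρ) ^ s
      ≤ ∑ _c : P, ENNReal.ofReal (2 * ρ) ^ s := by
        gcongr with c
        exact ediam_closedBall_le_ofReal (c : X) hρ
    _ = ENNReal.ofReal (P.card * (2 * ρ) ^ s) := by
        rw [Finset.sum_const, Finset.card_univ, Fintype.card_coe, nsmul_eq_mul,
          ENNReal.ofReal_rpow_of_nonneg (by positivity) hs, ENNReal.ofReal_mul (by positivity),
          ENNReal.ofReal_natCast]

lemma mul_two_mul_rpow_le {b C ρ s : ℝ} (hρ : 0 < ρ) (hb : b ≤ C * ρ ^ (-s)) :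
    b * (2 * ρ) ^ s ≤ C * 2 ^ s := by
  calc b * (2 * ρ) ^ s ≤ C * ρ ^ (-s) * (2 * ρ) ^ s := by gcongr
    _ = C * 2 ^ s * (ρ ^ (-s) * ρ ^ s) := by rw [Real.mul_rpow zero_le_two hρ.le]; ring
    _ = C * 2 ^ s := by rw [← Real.rpow_add hρ, neg_add_cancel, Real.rpow_zero, mul_one]

lemma HasBoxBound.dimH_le [MetricSpace X] {S : Set X} {s : ℝ≥0} (hS : HasBoxBound S s) :
    dimH S ≤ s := by
  borelize X
  obtain ⟨C, -, hcov⟩ := hS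
  have hρ : ∀ n : ℕ, (0 : ℝ) < 1 / ((n : ℝ) + 1) := fun n => by positivity
  choose P hP hcard using fun n : ℕ => hcov (1 / ((n : ℝ) + 1)) (hρ n)
    (by rw [div_le_one (by positivity)]; linarith [(n.cast_nonneg : (0 : ℝ) ≤ n)])
  have hlim : Tendsto (fun n : ℕ => ENNReal.ofReal (2 * (1 / ((n : ℝ) + 1)))) atTop (𝓝 0) := by
    rw [← ENNReal.ofReal_zero, ← mul_zero (2 : ℝ)]
    exact ENNReal.tendsto_ofReal (tendsto_one_div_add_atTop_nhds_zero_nat.const_mul 2)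
  have hmeasure := MeasureTheory.Measure.hausdorffMeasure_le_liminf_sum (s : ℝ) S _ hlim
    (fun n (c : P n) => Metric.closedBall (c : X) (1 / ((n : ℝ) + 1)))
    (Eventually.of_forall fun n c => ediam_closedBall_le_ofReal _ (hρ n).le)
    (Eventually.of_forall fun n x hx => by
      obtain ⟨c, hc, hxc⟩ := hP n x hx
      exact Set.mem_iUnion.2 ⟨⟨c, hc⟩, hxc⟩)
  refine dimH_le_of_hausdorffMeasure_ne_top
    (ne_top_of_le_ne_top (ENNReal.ofReal_ne_top (r := C * 2 ^ (s : ℝ))) (hmeasure.trans ?_))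
  refine liminf_le_of_le (by isBoundedDefault) fun b hb => ?_
  obtain ⟨n, hn⟩ := hb.exists
  exact hn.trans ((sum_ediam_closedBall_rpow_le _ (hρ n).le s.coe_nonneg).trans
    (ENNReal.ofReal_le_ofReal (mul_two_mul_rpow_le (hρ n) (hcard n))))

end

lemma max_one_add_max_one_le {C r z z₁ z₂ : ℝ} (hC : 2 ≤ C) (hCr : 1 + C * r ≤ C) (hz : 1 ≤ z)
    (h₁ : z₁ ≤ r * z) (h₂ : z₂ ≤ r * z) (hadd : z₁ + z₂ ≤ z) :
    max 1 (C * z₁) + max 1 (C * z₂) ≤ C * z := by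
  have hC0 : 0 ≤ C := by linarith
  have hCz₁ : C * z₁ ≤ C * (r * z) := mul_le_mul_of_nonneg_left h₁ hC0
  have hCz₂ : C * z₂ ≤ C * (r * z) := mul_le_mul_of_nonneg_left h₂ hC0
  have hCadd : C * (z₁ + z₂) ≤ C * z := mul_le_mul_of_nonneg_left hadd hC0
  have hCz : (1 + C * r) * z ≤ C * z := by gcongr
  have hC2 : 2 * z ≤ C * z := by gcongr
  rcases max_choice 1 (C * z₁) with h | h <;> rcases max_choice 1 (C * z₂) with h' | h' <;>
    rw [h, h'] <;> linarith

lemma div_rpow_le_half_rpow_mul {l l' ρ s : ℝ} (hl' : 0 ≤ l') (hρ : 0 < ρ) (hs : 0 ≤ s)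
    (h : l' ≤ l / 2) : (l' / ρ) ^ s ≤ (1 / 2) ^ s * (l / ρ) ^ s := by
  have hl : 0 ≤ l := by linarith
  rw [← Real.mul_rpow (by norm_num) (by positivity)]
  gcongr
  calc l' / ρ ≤ l / 2 / ρ := by gcongr
    _ = 1 / 2 * (l / ρ) := by ring

section Tree
variable {X : Type*} [PseudoMetricSpace X] {Node : Set X → ℝ → Prop} {s : ℝ}

lemma coveredBy_of_tree (hs : 0 < s) (hpos : ∀ A l, Node A l → 0 < l)
    (hdiam : ∀ A l, Node A l → ∀ x ∈ A, ∀ y ∈ A, dist x y ≤ l)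
    (hsplit : ∀ A l, Node A l → A.Subsingleton ∨ ∃ A₁ A₂ l₁ l₂, A ⊆ A₁ ∪ A₂ ∧ Node A₁ l₁ ∧
      Node A₂ l₂ ∧ l₁ ≤ l / 2 ∧ l₂ ≤ l / 2 ∧ l₁ ^ s + l₂ ^ s ≤ l ^ s)
    {C : ℝ} (hC : 2 ≤ C) (hCs : 1 + C * (1 / 2) ^ s ≤ C) {ρ : ℝ} (hρ : 0 < ρ) (m : ℕ) {A : Set X}
    {l : ℝ} (hA : Node A l) (hl : l ≤ ρ * 2 ^ m) : CoveredBy A ρ (max 1 (C * (l / ρ) ^ s)) := by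
  induction m generalizing A l with
  | zero =>
    rw [pow_zero, mul_one] at hl
    exact (coveredBy_one_of_dist_le fun x hx y hy => (hdiam A l hA x hx y hy).trans hl).mono
      subset_rfl (le_max_left _ _)
  | succ m ih =>
    rcases le_or_gt l ρ with hlρ | hlρ
    · exact (coveredBy_one_of_dist_le fun x hx y hy => (hdiam A l hA x hx y hy).trans hlρ).mono
        subset_rfl (le_max_left _ _)
    rcases hsplit A l hA with hsub | ⟨A₁, A₂, l₁, l₂, hsub, hA₁, hA₂, hl₁, hl₂, hsum⟩
    · exact (coveredBy_one_of_dist_le fun x hx y hy => by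
        rw [hsub hx hy, dist_self]; exact hρ.le).mono subset_rfl (le_max_left _ _)
    have hl0 := (hpos A l hA).le
    have hl₁0 := (hpos A₁ l₁ hA₁).le
    have hl₂0 := (hpos A₂ l₂ hA₂).le
    have hhalf : ρ * 2 ^ (m + 1) / 2 = ρ * 2 ^ m := by ring
    refine ((ih hA₁ (by linarith)).union (ih hA₂ (by linarith))).mono hsub ?_
    refine (max_one_add_max_one_le hC hCs (Real.one_le_rpow ((one_le_div hρ).2 hlρ.le) hs.le)
      (div_rpow_le_half_rpow_mul hl₁0 hρ hs.le hl₁) (div_rpow_le_half_rpow_mul hl₂0 hρ hs.le hl₂)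
      ?_).trans (le_max_right _ _)
    rw [Real.div_rpow hl₁0 hρ.le, Real.div_rpow hl₂0 hρ.le, Real.div_rpow hl0 hρ.le, ← add_div]
    gcongr

lemma hasBoxBound_of_tree (hs : 0 < s) (hpos : ∀ A l, Node A l → 0 < l)
    (hdiam : ∀ A l, Node A l → ∀ x ∈ A, ∀ y ∈ A, dist x y ≤ l)
    (hsplit : ∀ A l, Node A l → A.Subsingleton ∨ ∃ A₁ A₂ l₁ l₂, A ⊆ A₁ ∪ A₂ ∧ Node A₁ l₁ ∧
      Node A₂ l₂ ∧ l₁ ≤ l / 2 ∧ l₂ ≤ l / 2 ∧ l₁ ^ s + l₂ ^ s ≤ l ^ s)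
    {A : Set X} {l : ℝ} (hA : Node A l) : HasBoxBound A s := by
  have hr0 : (0 : ℝ) < (1 / 2 : ℝ) ^ s := by positivity
  have hr1 : (1 / 2 : ℝ) ^ s < 1 := Real.rpow_lt_one (by norm_num) (by norm_num) hs
  set C : ℝ := 2 / (1 - (1 / 2 : ℝ) ^ s) with hCdef
  have hCr : C * (1 - (1 / 2 : ℝ) ^ s) = 2 := div_mul_cancel₀ _ (by linarith)
  have hC : 2 ≤ C := by rw [hCdef, le_div_iff₀ (by linarith)]; linarith
  have hl := hpos A l hA
  refine ⟨max 1 (C * l ^ s), by positivity, fun ρ hρ hρ1 => ?_⟩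
  obtain ⟨m, hm⟩ := pow_unbounded_of_one_lt (l / ρ) one_lt_two
  rw [div_lt_iff₀' hρ] at hm
  refine (coveredBy_of_tree hs hpos hdiam hsplit hC (by linarith) hρ m hA hm.le).mono
    subset_rfl (max_le ?_ ?_)
  · exact one_le_mul_of_one_le_of_one_le (le_max_left _ _)
      (Real.one_le_rpow_of_pos_of_le_one_of_nonpos hρ hρ1 (by linarith))
  · rw [Real.div_rpow hl.le hρ.le, Real.rpow_neg hρ.le, div_eq_mul_inv, ← mul_assoc]
    gcongr
    exact le_max_right _ _

end Tree

/-! ### Lengths of continued fraction cylinders -/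

/-- Denominators of two consecutive convergents of `[0; s 0, s 1, …]`, the later one first. -/
noncomputable def denoms (s : ℕ → ℕ) : ℕ → ℝ × ℝ
  | 0 => (1, 0)
  | n + 1 => (s n * (denoms s n).1 + (denoms s n).2, (denoms s n).1)

/-- The length of the image of `[4 / 11, 11 / 15]` under `x ↦ (p + p' x) / (q + q' x)`, where
`(q, q') = v` and `|p q' - p' q| = 1`. For `v = denoms s n` it bounds the distance of two continued
fractions in the cylinder of `s 0, …, s (n - 1)`. -/
noncomputable def hullLen (v : ℝ × ℝ) : ℝ :=
  (11 / 15 - 4 / 11) / ((v.1 + 4 / 11 * v.2) * (v.1 + 11 / 15 * v.2))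

section
variable {s s' : ℕ → ℕ} {m n : ℕ}

lemma denoms_bounds (hs : IsOneTwo s) (n : ℕ) :
    1 ≤ (denoms s n).1 ∧ 0 ≤ (denoms s n).2 ∧ (denoms s n).2 ≤ (denoms s n).1 := by
  induction n with
  | zero => simp [denoms]
  | succ n ih =>
    obtain ⟨h1, h2, -⟩ := ih
    have hmul := mul_le_mul_of_nonneg_right (hs.one_le_cast n) (zero_le_one.trans h1)
    simp only [denoms]
    refine ⟨?_, ?_, ?_⟩ <;> linarith

lemma denoms_congr (h : ∀ k < n, s k = s' k) : denoms s n = denoms s' n := by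
  induction n with
  | zero => rfl
  | succ n ih => simp only [denoms, ih (fun k hk => h k (by omega)), h n (by omega)]

lemma hullLen_denoms_pos (hs : IsOneTwo s) (n : ℕ) : 0 < hullLen (denoms s n) := by
  obtain ⟨h1, h2, -⟩ := denoms_bounds hs n
  unfold hullLen
  exact div_pos (by norm_num) (by positivity)

lemma cf_drop (hs : IsOneTwo s) (n : ℕ) :
    cf (fun k => s (k + n)) = 1 / (s n + cf (fun k => s (k + (n + 1)))) := by
  have hdrop : IsOneTwo fun k => s (k + n) := fun _ => hs _
  rw [cf_eq hdrop, zero_add]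
  simp only [add_right_comm _ 1 n, ← add_assoc]

lemma cf_sub_cf_mul_denoms (hs : IsOneTwo s) (hs' : IsOneTwo s') (n : ℕ)
    (h : ∀ k < n, s' k = s k) :
    (cf s - cf s') * (((denoms s n).1 + cf (fun k => s (k + n)) * (denoms s n).2) *
      ((denoms s n).1 + cf (fun k => s' (k + n)) * (denoms s n).2)) =
    (-1) ^ n * (cf (fun k => s (k + n)) - cf (fun k => s' (k + n))) := by
  induction n with
  | zero => simp [denoms]
  | succ n ih =>
    have ih' := ih fun k hk => h k (by omega)
    rw [cf_drop hs n, cf_drop hs' n, h n (by omega)] at ih'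
    have hd := hs.one_le_cast n
    have hx : 0 < (s n : ℝ) + cf (fun k => s (k + (n + 1))) :=
      add_pos (by linarith) (cf_pos fun _ => hs _)
    have hy : 0 < (s n : ℝ) + cf (fun k => s' (k + (n + 1))) :=
      add_pos (by linarith) (cf_pos fun _ => hs' _)
    simp only [denoms, pow_succ]
    field_simp at ih'
    linear_combination ih'

lemma sub_mul_le_hull {q q' m M x y : ℝ} (hq : 0 ≤ q) (hq' : 0 ≤ q') (hm : 0 ≤ m)
    (hmx : m ≤ x) (hxy : x ≤ y) (hyM : y ≤ M) :
    (y - x) * ((q + m * q') * (q + M * q')) ≤ (M - m) * ((q + x * q') * (q + y * q')) := by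
  have hx : 0 ≤ x := hm.trans hmx
  have hy : 0 ≤ y := hx.trans hxy
  have hM : 0 ≤ M := hy.trans hyM
  have hlower : (y - x) * (q + m * q') ≤ (y - m) * (q + x * q') := by
    nlinarith [mul_nonneg (sub_nonneg.2 hmx) (add_nonneg hq (mul_nonneg hy hq'))]
  have hupper : (y - m) * (q + M * q') ≤ (M - m) * (q + y * q') := by
    nlinarith [mul_nonneg (sub_nonneg.2 hyM) (add_nonneg hq (mul_nonneg hm hq'))]
  calc _ = (y - x) * (q + m * q') * (q + M * q') := by ring
    _ ≤ (y - m) * (q + x * q') * (q + M * q') := by gcongr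
    _ = (y - m) * (q + M * q') * (q + x * q') := by ring
    _ ≤ (M - m) * (q + y * q') * (q + x * q') := by gcongr
    _ = _ := by ring

lemma abs_cf_sub_eq_div_denoms (hs : IsOneTwo s) (hs' : IsOneTwo s') (h : ∀ k < n, s' k = s k) :
    |cf s - cf s'| = |cf (fun k => s (k + n)) - cf (fun k => s' (k + n))| /
      (((denoms s n).1 + cf (fun k => s (k + n)) * (denoms s n).2) *
        ((denoms s n).1 + cf (fun k => s' (k + n)) * (denoms s n).2)) := by
  obtain ⟨h1, h2, -⟩ := denoms_bounds hs n
  have hx : 0 < cf (fun k => s (k + n)) := cf_pos fun _ => hs _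
  have hy : 0 < cf (fun k => s' (k + n)) := cf_pos fun _ => hs' _
  have hmul := congrArg abs (cf_sub_cf_mul_denoms hs hs' n h)
  rw [abs_mul, abs_mul _ (_ - _), abs_neg_one_pow, one_mul] at hmul
  have hprod : 0 < ((denoms s n).1 + cf (fun k => s (k + n)) * (denoms s n).2) *
      ((denoms s n).1 + cf (fun k => s' (k + n)) * (denoms s n).2) := by positivity
  rw [← hmul, abs_of_pos hprod, mul_div_cancel_right₀ _ hprod.ne']

lemma abs_cf_sub_le_hullLen (hs : IsOneTwo s) (hs' : IsOneTwo s') (h : ∀ k < n, s' k = s k) :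
    |cf s - cf s'| ≤ hullLen (denoms s n) := by
  obtain ⟨h1, h2, -⟩ := denoms_bounds hs n
  have hx := cf_mem (s := fun k => s (k + n)) fun _ => hs _
  have hy := cf_mem (s := fun k => s' (k + n)) fun _ => hs' _
  rw [abs_cf_sub_eq_div_denoms hs hs' h, hullLen]
  generalize cf (fun k => s (k + n)) = x at *
  generalize cf (fun k => s' (k + n)) = y at *
  have hx0 : 0 ≤ x := by linarith [hx.1]
  have hy0 : 0 ≤ y := by linarith [hy.1]
  rw [div_le_div_iff₀ (by positivity) (by positivity)]
  rcases le_total x y with hxy | hxy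
  · rw [abs_sub_comm, abs_of_nonneg (sub_nonneg.2 hxy)]
    exact sub_mul_le_hull (by linarith) h2 (by norm_num) hx.1 hxy hy.2
  · rw [abs_of_nonneg (sub_nonneg.2 hxy), mul_comm (_ + x * _)]
    exact sub_mul_le_hull (by linarith) h2 (by norm_num) hy.1 hxy hx.2

lemma hullLen_le_mul {v w : ℝ × ℝ} {r : ℝ} (hv1 : 1 ≤ v.1) (hv2 : 0 ≤ v.2) (hw1 : 1 ≤ w.1)
    (hw2 : 0 ≤ w.2) (h : (w.1 + 4 / 11 * w.2) * (w.1 + 11 / 15 * w.2) ≤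
      r * ((v.1 + 4 / 11 * v.2) * (v.1 + 11 / 15 * v.2))) : hullLen v ≤ r * hullLen w := by
  unfold hullLen
  rw [← mul_div_assoc, div_le_div_iff₀ (by positivity) (by positivity),
    mul_assoc, mul_left_comm r]
  gcongr

lemma hullLen_denoms_succ_le (hs : IsOneTwo s) (n : ℕ) :
    hullLen (denoms s (n + 1)) ≤ 1 / 2 * hullLen (denoms s n) := by
  obtain ⟨h1, h2, -⟩ := denoms_bounds hs n
  obtain ⟨h1', h2', -⟩ := denoms_bounds hs (n + 1)
  refine hullLen_le_mul h1' h2' h1 h2 ?_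
  rcases hs.cast n with h | h <;> simp only [denoms, h] <;> nlinarith

lemma hullLen_denoms_antitone (hs : IsOneTwo s) : Antitone fun n => hullLen (denoms s n) :=
  antitone_nat_of_succ_le fun n => by
    linarith [hullLen_denoms_succ_le hs n, hullLen_denoms_pos hs n]

lemma hullLen_denoms_le_half (hs : IsOneTwo s) (h : m < n) :
    hullLen (denoms s n) ≤ hullLen (denoms s m) / 2 := by
  have hanti : hullLen (denoms s n) ≤ hullLen (denoms s (m + 1)) := hullLen_denoms_antitone hs h
  linarith [hullLen_denoms_succ_le hs m]

end

lemma rpow_le_of_pow_le {r c s : ℝ} (hr : 0 ≤ r) (hc : 0 ≤ c) {m n : ℕ} (hn : n ≠ 0)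
    (hs : s * n = m) (h : r ^ m ≤ c ^ n) : r ^ s ≤ c := by
  refine (pow_le_pow_iff_left₀ (Real.rpow_nonneg hr s) hc hn).1 ?_
  rwa [← Real.rpow_natCast, ← Real.rpow_mul hr, hs, Real.rpow_natCast]

lemma rpow_add_rpow_le {l l₁ l₂ r₁ r₂ c₁ c₂ s : ℝ} (hs : 0 ≤ s) (hl : 0 ≤ l) (hl₁ : 0 ≤ l₁)
    (hl₂ : 0 ≤ l₂) (hr₁ : 0 ≤ r₁) (hr₂ : 0 ≤ r₂) (h₁ : l₁ ≤ r₁ * l) (h₂ : l₂ ≤ r₂ * l)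
    (hc₁ : r₁ ^ s ≤ c₁) (hc₂ : r₂ ^ s ≤ c₂) (hc : c₁ + c₂ ≤ 1) : l₁ ^ s + l₂ ^ s ≤ l ^ s := by
  calc l₁ ^ s + l₂ ^ s ≤ (r₁ * l) ^ s + (r₂ * l) ^ s := by gcongr
    _ = (r₁ ^ s + r₂ ^ s) * l ^ s := by
      rw [Real.mul_rpow hr₁ hl, Real.mul_rpow hr₂ hl, add_mul]
    _ ≤ 1 * l ^ s := by gcongr; linarith
    _ = l ^ s := one_mul _

/-! ### Box dimension of sets of continued fractions -/

/-- The members of `K` whose first `n` terms are those of `s`. -/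
def cylinder (K : Set (ℕ → ℕ)) (s : ℕ → ℕ) (n : ℕ) : Set (ℕ → ℕ) := {x ∈ K | ∀ k < n, x k = s k}

section
variable {K : Set (ℕ → ℕ)}

lemma subsingleton_cylinder_or_exists_branchAt (hK : ∀ x ∈ K, IsOneTwo x) (s : ℕ → ℕ) (n : ℕ) :
    (cylinder K s n).Subsingleton ∨ ∃ x ∈ cylinder K s n, ∃ y ∈ cylinder K s n, ∃ m ≥ n,
      BranchAt x y m ∧ cylinder K s n ⊆ cylinder K x m := by
  by_cases hex : ∃ m, ∃ x ∈ cylinder K s n, ∃ y ∈ cylinder K s n, x m ≠ y m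
  · classical
    have hmin : ∀ x ∈ cylinder K s n, ∀ y ∈ cylinder K s n, ∀ k < Nat.find hex, x k = y k :=
      fun x hx y hy k hk => by_contra fun hne => Nat.find_min hex hk ⟨x, hx, y, hy, hne⟩
    obtain ⟨x, hx, y, hy, hne⟩ := Nat.find_spec hex
    generalize Nat.find hex = m at hmin hne
    have hnm : n ≤ m := not_lt.1 fun h => hne ((hx.2 m h).trans (hy.2 m h).symm)
    right
    rcases hK x hx.1 m with hx1 | hx2 <;> rcases hK y hy.1 m with hy1 | hy2
    · exact absurd (hx1.trans hy1.symm) hne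
    · exact ⟨x, hx, y, hy, m, hnm, ⟨hmin x hx y hy, hx1, hy2⟩, fun z hz => ⟨hz.1, hmin z hz x hx⟩⟩
    · exact ⟨y, hy, x, hx, m, hnm, ⟨hmin y hy x hx, hy1, hx2⟩, fun z hz => ⟨hz.1, hmin z hz y hy⟩⟩
    · exact absurd (hx2.trans hy2.symm) hne
  · push Not at hex
    exact Or.inl fun x hx y hy => funext fun m => hex m x hx y hy

lemma cylinder_subset_cylinder_union (hK : ∀ x ∈ K, IsOneTwo x) {i j m : ℕ} {u v x y : ℕ → ℕ}
    (hword : ∀ x ∈ K, ∀ y ∈ K, ∀ m, BranchAt x y m →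
      (∀ k ≤ i, x (m + k) = u k) ∧ ∀ k ≤ j, y (m + k) = v k)
    (hx : x ∈ K) (hy : y ∈ K) (hbr : BranchAt x y m) :
    cylinder K x m ⊆ cylinder K x (m + (i + 1)) ∪ cylinder K y (m + (j + 1)) := by
  rintro z ⟨hz, hzx⟩
  obtain ⟨hxu, hyv⟩ := hword x hx y hy m hbr
  obtain ⟨hxy, hx1, hy2⟩ := hbr
  have hzy : ∀ k < m, z k = y k := fun k hk => (hzx k hk).trans (hxy k hk)
  rcases hK z hz m with hz1 | hz2
  · have hzu := (hword z hz y hy m ⟨hzy, hz1, hy2⟩).1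
    refine Or.inl ⟨hz, fun k hk => ?_⟩
    rcases lt_or_ge k m with hkm | hkm
    · exact hzx k hkm
    · obtain ⟨k, rfl⟩ := Nat.exists_eq_add_of_le hkm
      rw [hzu k (by omega), hxu k (by omega)]
  · have hzv := (hword x hx z hz m ⟨fun k hk => (hzx k hk).symm, hx1, hz2⟩).2
    refine Or.inr ⟨hz, fun k hk => ?_⟩
    rcases lt_or_ge k m with hkm | hkm
    · exact hzy k hkm
    · obtain ⟨k, rfl⟩ := Nat.exists_eq_add_of_le hkm
      rw [hzv k (by omega), hyv k (by omega)]

lemma hasBoxBound_of_branch (hK : ∀ x ∈ K, IsOneTwo x) {s : ℝ} (hs : 0 < s) {i j : ℕ}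
    {u v : ℕ → ℕ}
    (hword : ∀ x ∈ K, ∀ y ∈ K, ∀ m, BranchAt x y m →
      (∀ k ≤ i, x (m + k) = u k) ∧ ∀ k ≤ j, y (m + k) = v k)
    (hsum : ∀ x ∈ K, ∀ y ∈ K, ∀ m, BranchAt x y m → hullLen (denoms x (m + (i + 1))) ^ s +
      hullLen (denoms y (m + (j + 1))) ^ s ≤ hullLen (denoms x m) ^ s) :
    HasBoxBound (cf '' K) s := by
  refine hasBoxBound_of_tree (Node := fun A l => ∃ x n, IsOneTwo x ∧ A = cf '' cylinder K x n ∧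
    l = hullLen (denoms x n)) hs ?_ ?_ ?_ ⟨fun _ => 1, 0, fun _ => Or.inl rfl, ?_, rfl⟩
  · rintro _ _ ⟨x, n, hx, -, rfl⟩
    exact hullLen_denoms_pos hx n
  · rintro _ _ ⟨z, n, -, rfl, rfl⟩ _ ⟨x, hx, rfl⟩ _ ⟨y, hy, rfl⟩
    rw [← denoms_congr hx.2]
    exact abs_cf_sub_le_hullLen (hK x hx.1) (hK y hy.1)
      fun k hk => (hy.2 k hk).trans (hx.2 k hk).symm
  · rintro _ _ ⟨z, n, _, rfl, rfl⟩
    rcases subsingleton_cylinder_or_exists_branchAt hK z n with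
      hsub | ⟨x, hx, y, hy, m, hnm, hbr, hsub⟩
    · exact Or.inl (hsub.image cf)
    have hxK := hK x hx.1
    have hyK := hK y hy.1
    have hlen : hullLen (denoms x m) ≤ hullLen (denoms z n) := by
      rw [← denoms_congr hx.2]
      exact hullLen_denoms_antitone hxK hnm
    have hy_half : hullLen (denoms y (m + (j + 1))) ≤ hullLen (denoms x m) / 2 := by
      rw [denoms_congr hbr.1]
      exact hullLen_denoms_le_half hyK (by omega)
    have hx_half := hullLen_denoms_le_half hxK (show m < m + (i + 1) by omega)
    refine Or.inr ⟨_, _, _, _, ?_, ⟨x, m + (i + 1), hxK, rfl, rfl⟩, ⟨y, m + (j + 1), hyK, rfl, rfl⟩,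
      by linarith, by linarith, (hsum x hx.1 y hy.1 m hbr).trans ?_⟩
    · rw [← Set.image_union]
      exact Set.image_mono (hsub.trans (cylinder_subset_cylinder_union hK hword hx.1 hy.1 hbr))
    · exact Real.rpow_le_rpow (hullLen_denoms_pos hxK m).le hlen hs.le
  · simp [cylinder]

lemma hullLen_one_rpow_add_hullLen_two_rpow_le {q q' : ℝ} (h1 : 1 ≤ q) (h2 : 0 ≤ q')
    (h3 : q' ≤ q) (hpos : 0 ≤ hullLen (q, q')) (hpos₁ : 0 ≤ hullLen (q + q', q))
    (hpos₂ : 0 ≤ hullLen (2 * q + q', q)) :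
    hullLen (q + q', q) ^ (5 / 9 : ℝ) + hullLen (2 * q + q', q) ^ (5 / 9 : ℝ) ≤
      hullLen (q, q') ^ (5 / 9 : ℝ) := by
  have hrpow : ∀ {r c : ℝ}, 0 ≤ r → 0 ≤ c → r ^ 5 ≤ c ^ 9 → r ^ (5 / 9 : ℝ) ≤ c := fun hr hc =>
    rpow_le_of_pow_le hr hc (by norm_num) (by norm_num)
  rcases le_total (2 * q') q with h | h
  · have hone : hullLen (q + q', q) ≤ 0.4232 * hullLen (q, q') := by
      apply hullLen_le_mul <;> dsimp only <;>
        nlinarith [mul_nonneg h2 (sub_nonneg.2 h), mul_nonneg (sub_nonneg.2 h) (sub_nonneg.2 h)]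
    have htwo : hullLen (2 * q + q', q) ≤ 0.1746 * hullLen (q, q') := by
      apply hullLen_le_mul <;> dsimp only <;>
        nlinarith [mul_nonneg h2 (sub_nonneg.2 h), mul_nonneg (sub_nonneg.2 h) (sub_nonneg.2 h)]
    exact rpow_add_rpow_le (c₁ := 0.6205) (c₂ := 0.3795) (by norm_num) hpos hpos₁ hpos₂
      (by norm_num) (by norm_num) hone htwo (hrpow (by norm_num) (by norm_num) (by norm_num))
      (hrpow (by norm_num) (by norm_num) (by norm_num)) (by norm_num)
  · have hone : hullLen (q + q', q) ≤ 0.3881 * hullLen (q, q') := by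
      apply hullLen_le_mul <;> dsimp only <;>
        nlinarith [mul_nonneg h2 (sub_nonneg.2 h), mul_nonneg (sub_nonneg.2 h) (sub_nonneg.2 h),
          mul_nonneg (sub_nonneg.2 h3) (sub_nonneg.2 h)]
    have htwo : hullLen (2 * q + q', q) ≤ 0.1883 * hullLen (q, q') := by
      apply hullLen_le_mul <;> dsimp only <;>
        nlinarith [mul_nonneg h2 (sub_nonneg.2 h), mul_nonneg (sub_nonneg.2 h) (sub_nonneg.2 h),
          mul_nonneg (sub_nonneg.2 h3) (sub_nonneg.2 h)]
    exact rpow_add_rpow_le (c₁ := 0.6) (c₂ := 0.4) (by norm_num) hpos hpos₁ hpos₂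
      (by norm_num) (by norm_num) hone htwo (hrpow (by norm_num) (by norm_num) (by norm_num))
      (hrpow (by norm_num) (by norm_num) (by norm_num)) (by norm_num)

lemma hasBoxBound_cf_isOneTwo : HasBoxBound (cf '' {x | IsOneTwo x}) (5 / 9) := by
  refine hasBoxBound_of_branch (i := 0) (j := 0) (u := fun _ => 1) (v := fun _ => 2)
    (fun x hx => hx) (by norm_num) ?_ ?_
  · rintro x - y - m ⟨-, hx1, hy2⟩
    refine ⟨fun k hk => ?_, fun k hk => ?_⟩ <;> obtain rfl := Nat.le_zero.1 hk
    exacts [hx1, hy2]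
  · rintro x hx y hy m ⟨hxy, hx1, hy2⟩
    obtain ⟨h1, h2, h3⟩ := denoms_bounds hx m
    have hlen := hullLen_denoms_pos hx m
    have hlen₁ := hullLen_denoms_pos hx (m + 1)
    have hlen₂ := hullLen_denoms_pos hy (m + 1)
    simp only [denoms, ← denoms_congr hxy, hx1, hy2, Nat.cast_one, Nat.cast_ofNat,
      one_mul] at hlen₁ hlen₂ ⊢
    exact hullLen_one_rpow_add_hullLen_two_rpow_le h1 h2 h3 hlen.le hlen₁.le hlen₂.le

lemma hullLen_denoms_le_of_oneOneTwos {x : ℕ → ℕ} (hx : IsOneTwo x) {m : ℕ}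
    (h : ∀ k ≤ 2, x (m + k) = oneOneTwos k) :
    hullLen (denoms x (m + 3)) ≤ 0.0271 * hullLen (denoms x m) := by
  obtain ⟨h1, h2, h3⟩ := denoms_bounds hx m
  obtain ⟨h1', h2', -⟩ := denoms_bounds hx (m + 3)
  have hterm : x m = 1 ∧ x (m + 1) = 1 ∧ x (m + 2) = 2 :=
    ⟨h 0 (by norm_num), h 1 (by norm_num), h 2 le_rfl⟩
  have hdenoms : denoms x (m + 3) = (5 * (denoms x m).1 + 3 * (denoms x m).2,
      2 * (denoms x m).1 + (denoms x m).2) := by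
    simp only [denoms, hterm]
    ext <;> push_cast <;> ring
  refine hullLen_le_mul h1' h2' h1 h2 ?_
  rw [hdenoms]
  nlinarith [mul_nonneg h2 (sub_nonneg.2 h3)]

lemma hullLen_denoms_le_of_twoTwoOneTwos {x : ℕ → ℕ} (hx : IsOneTwo x) {m : ℕ}
    (h : ∀ k ≤ 3, x (m + k) = twoTwoOneTwos k) :
    hullLen (denoms x (m + 4)) ≤ 0.00226 * hullLen (denoms x m) := by
  obtain ⟨h1, h2, h3⟩ := denoms_bounds hx m
  obtain ⟨h1', h2', -⟩ := denoms_bounds hx (m + 4)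
  have hterm : x m = 2 ∧ x (m + 1) = 2 ∧ x (m + 2) = 1 ∧ x (m + 3) = 2 :=
    ⟨h 0 (by norm_num), h 1 (by norm_num), h 2 (by norm_num), h 3 le_rfl⟩
  have hdenoms : denoms x (m + 4) = (19 * (denoms x m).1 + 8 * (denoms x m).2,
      7 * (denoms x m).1 + 3 * (denoms x m).2) := by
    simp only [denoms, hterm]
    ext <;> push_cast <;> ring
  refine hullLen_le_mul h1' h2' h1 h2 ?_
  rw [hdenoms]
  nlinarith [mul_nonneg h2 (sub_nonneg.2 h3), mul_nonneg (sub_nonneg.2 h3) (sub_nonneg.2 h3)]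

lemma ForcedBranching.hasBoxBound (hK : ∀ x ∈ K, IsOneTwo x) (hbr : ForcedBranching K) :
    HasBoxBound (cf '' K) (3 / 20) := by
  refine hasBoxBound_of_branch hK (by norm_num) hbr fun x hx y hy m hxy => ?_
  obtain ⟨hxword, hyword⟩ := hbr x hx y hy m hxy
  have hlen₂ := hullLen_denoms_le_of_twoTwoOneTwos (hK y hy) hyword
  rw [← denoms_congr hxy.1] at hlen₂
  exact rpow_add_rpow_le (c₁ := 0.59) (c₂ := 0.41) (by norm_num)
    (hullLen_denoms_pos (hK x hx) m).le (hullLen_denoms_pos (hK x hx) _).le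
    (hullLen_denoms_pos (hK y hy) _).le (by norm_num) (by norm_num)
    (hullLen_denoms_le_of_oneOneTwos (hK x hx) hxword) hlen₂
    (rpow_le_of_pow_le (m := 3) (n := 20) (by norm_num) (by norm_num) (by norm_num) (by norm_num)
      (by norm_num))
    (rpow_le_of_pow_le (m := 3) (n := 20) (by norm_num) (by norm_num) (by norm_num) (by norm_num)
      (by norm_num)) (by norm_num)

end

/-! ### Lagrange values of bi-infinite sequences -/

/-- The reciprocal of `q ^ 2 |α - r|`, where `q` is the denominator of `r` in lowest terms. -/
noncomputable def approxQuality (α : ℝ) (r : ℚ) : ℝ := 1 / ((r.den : ℝ) ^ 2 * |α - r|)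

section
variable {α : ℝ} {q : ℕ}

lemma natCast_mul_distNearestInt_eq (hq : q ≠ 0) :
    q * distNearestInt (q * α) = (q : ℝ) ^ 2 * |α - ((round (q * α) / q : ℚ) : ℝ)| := by
  have hq0 : (0 : ℝ) < q := by positivity
  have hmul : (q : ℝ) * α - round (q * α) = q * (α - ((round (q * α) / q : ℚ) : ℝ)) := by
    push_cast
    field_simp
  rw [distNearestInt, hmul, abs_mul, abs_of_pos hq0, sq, mul_assoc]

lemma den_intCast_div_natCast_le (p : ℤ) (hq : q ≠ 0) : (p / q : ℚ).den ≤ q := by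
  have hdvd : ((p / q : ℚ).den : ℤ) ∣ q := by
    simpa only [Rat.divInt_eq_div, Int.cast_natCast] using Rat.den_dvd p q
  exact Nat.le_of_dvd (Nat.pos_of_ne_zero hq) (Int.natCast_dvd_natCast.1 hdvd)

lemma one_div_mul_distNearestInt_le_approxQuality (hα : Irrational α) (hq : q ≠ 0) :
    1 / (q * distNearestInt (q * α)) ≤ approxQuality α (round (q * α) / q) := by
  rw [natCast_mul_distNearestInt_eq hq, approxQuality]
  have hpos : 0 < |α - ((round (q * α) / q : ℚ) : ℝ)| :=
    abs_pos.2 (sub_ne_zero.2 (hα.ne_rat _))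
  have hden : (0 : ℝ) < (round (q * α) / q : ℚ).den := by exact_mod_cast Rat.den_pos _
  refine one_div_le_one_div_of_le (mul_pos (pow_pos hden 2) hpos) ?_
  gcongr
  exact den_intCast_div_natCast_le _ hq

lemma approxQuality_le_one_div_mul_distNearestInt (hα : Irrational α) (r : ℚ) :
    approxQuality α r ≤ 1 / (r.den * distNearestInt (r.den * α)) := by
  have hden : (0 : ℝ) < r.den := by exact_mod_cast r.den_pos
  have hround : distNearestInt (r.den * α) ≤ r.den * |α - r| := by
    calc distNearestInt (r.den * α) ≤ |r.den * α - r.num| := round_le _ _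
      _ = |r.den * (α - r)| := by
        rw [mul_sub, mul_comm (r.den : ℝ) (r : ℝ)]
        congr 2
        exact_mod_cast (Rat.mul_den_eq_num r).symm
      _ = r.den * |α - r| := by rw [abs_mul, abs_of_pos hden]
  have hpos : 0 < distNearestInt (r.den * α) :=
    abs_pos.2 (sub_ne_zero.2 ((hα.natCast_mul r.den_nz).ne_int _))
  rw [approxQuality, sq, mul_assoc]
  gcongr

lemma exists_eq_convergent_of_two_lt_approxQuality {r : ℚ} (h : 2 < approxQuality α r) :
    ∃ n, r = α.convergent n := by
  refine Real.exists_rat_eq_convergent ?_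
  have hden : (0 : ℝ) < (r.den : ℝ) ^ 2 := by have := r.den_pos; positivity
  have hpos : 0 < (r.den : ℝ) ^ 2 * |α - r| := one_div_pos.1 (two_pos.trans h)
  rw [approxQuality, lt_div_iff₀ hpos] at h
  rw [lt_div_iff₀ (by positivity)]
  linarith

lemma tendsto_round_mul_div (α : ℝ) :
    Tendsto (fun q : ℕ => ((round (q * α) / q : ℚ) : ℝ)) atTop (𝓝 α) := by
  refine tendsto_sub_nhds_zero_iff.1 (squeeze_zero_norm' ?_ tendsto_one_div_atTop_nhds_zero_nat)
  filter_upwards [eventually_ne_atTop 0] with q hq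
  have hq0 : (0 : ℝ) < q := by positivity
  have hmul := natCast_mul_distNearestInt_eq (α := α) hq
  have hround : distNearestInt (q * α) ≤ 1 := (abs_sub_round _).trans (by norm_num)
  rw [Real.norm_eq_abs, abs_sub_comm, le_div_iff₀ hq0]
  rw [sq, mul_assoc, mul_right_inj' hq0.ne'] at hmul
  linarith

end

/-- The forward continued fraction `[b i; b (i + 1), …]`. -/
noncomputable def forwardVal (b : ℤ → ℕ) (i : ℤ) : ℝ := b i + cf (future b i)

section
variable {b : ℤ → ℕ}

lemma localVal_eq_forwardVal_add (b : ℤ → ℕ) (i : ℤ) :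
    localVal b i = forwardVal b i + cf (past b i) := rfl

lemma forwardVal_eq (hb : IsOneTwo b) (i : ℤ) :
    forwardVal b i = b i + 1 / forwardVal b (i + 1) := by
  rw [forwardVal, cf_future hb, forwardVal]

lemma one_lt_forwardVal (hb : IsOneTwo b) (i : ℤ) : 1 < forwardVal b i := by
  rw [forwardVal]
  linarith [cf_pos (hb.future i), hb.one_le_cast i]

lemma localVal_pos (hb : IsOneTwo b) (i : ℤ) : 0 < localVal b i := by
  rw [localVal_eq_forwardVal_add]
  linarith [one_lt_forwardVal hb i, cf_pos (hb.past i)]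

lemma floor_forwardVal (hb : IsOneTwo b) (i : ℤ) : ⌊forwardVal b i⌋ = b i := by
  have hmem := cf_mem (hb.future i)
  rw [Int.floor_eq_iff, forwardVal]
  push_cast
  constructor <;> linarith [hmem.1, hmem.2]

lemma convergent_forwardVal_zero (hb : IsOneTwo b) (i : ℤ) :
    (forwardVal b i).convergent 0 = b i := by
  rw [Real.convergent_zero, floor_forwardVal hb, Int.cast_natCast]

lemma convergent_forwardVal_succ (hb : IsOneTwo b) (i : ℤ) (n : ℕ) :
    (forwardVal b i).convergent (n + 1) = b i + ((forwardVal b (i + 1)).convergent n)⁻¹ := by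
  have hfract : (Int.fract (forwardVal b i))⁻¹ = forwardVal b (i + 1) := by
    rw [Int.fract, floor_forwardVal hb, forwardVal_eq hb i]
    simp
  rw [Real.convergent_succ, floor_forwardVal hb, hfract, Int.cast_natCast]

lemma den_natCast_add_inv (d : ℕ) {r : ℚ} (hr : 0 < r.num) :
    (((d : ℚ) + r⁻¹).den : ℤ) = r.num := by
  rw [Rat.natCast_add_den, Rat.den_inv, if_neg hr.ne', Int.natCast_natAbs, abs_of_pos hr]

lemma num_natCast_add_inv (d : ℕ) {r : ℚ} (hr : 0 < r.num) :
    ((d : ℚ) + r⁻¹).num = d * r.num + r.den := by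
  have hr0 : r ≠ 0 := Rat.num_ne_zero.1 hr.ne'
  have hden : (((d : ℚ) + r⁻¹).den : ℚ) = r.num := by exact_mod_cast den_natCast_add_inv d hr
  have hmul := Rat.mul_den_eq_num ((d : ℚ) + r⁻¹)
  rw [hden, add_mul, ← Rat.mul_den_eq_num r, inv_mul_cancel_left₀ hr0, Rat.mul_den_eq_num] at hmul
  exact_mod_cast hmul.symm

lemma succ_le_num_convergent (hb : IsOneTwo b) (n : ℕ) (i : ℤ) :
    (n : ℤ) + 1 ≤ ((forwardVal b i).convergent n).num := by
  have hd : ∀ i, 1 ≤ b i := fun i => by rcases hb i with h | h <;> omega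
  induction n generalizing i with
  | zero =>
    rw [convergent_forwardVal_zero hb, Rat.num_natCast]
    exact_mod_cast hd i
  | succ n ih =>
    have ih' := ih (i + 1)
    rw [convergent_forwardVal_succ hb, num_natCast_add_inv _ (by omega)]
    set r := (forwardVal b (i + 1)).convergent n
    have hmul := le_mul_of_one_le_left (a := (b i : ℤ)) (by omega : 0 ≤ r.num)
      (by exact_mod_cast hd i)
    have hden := r.den_pos
    push_cast
    omega

lemma le_den_convergent (hb : IsOneTwo b) (n : ℕ) (i : ℤ) :
    n ≤ ((forwardVal b i).convergent n).den := by
  rcases n with _ | n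
  · exact Nat.zero_le _
  · have hnum := succ_le_num_convergent hb n (i + 1)
    have hden := den_natCast_add_inv (b i) (r := (forwardVal b (i + 1)).convergent n) (by omega)
    rw [convergent_forwardVal_succ hb]
    omega

lemma sq_mul_abs_one_div_sub_one_div_mul {α r w q l : ℝ} (hα : 0 < α) (hr : 0 < r) (hw : 0 < w)
    (h : q ^ 2 * |α - r| * (r + 1 / w) * l = α + 1 / w) :
    (r * q) ^ 2 * |1 / α - 1 / r| * (1 / r + w) * l = 1 / α + w := by
  have habs : |1 / α - 1 / r| = |α - r| / (α * r) := by
    rw [div_sub_div _ _ hα.ne' hr.ne', abs_div, abs_of_pos (mul_pos hα hr), one_mul, mul_one,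
      abs_sub_comm]
  calc (r * q) ^ 2 * |1 / α - 1 / r| * (1 / r + w) * l
      = (q ^ 2 * |α - r| * (r + 1 / w) * l) * w / α := by
        rw [habs]
        field_simp
        ring
    _ = 1 / α + w := by
        rw [h]
        field_simp
        ring

lemma den_sq_mul_abs_sub_convergent_mul (hb : IsOneTwo b) (n : ℕ) (i : ℤ) :
    (((forwardVal b i).convergent n).den : ℝ) ^ 2 *
      |forwardVal b i - (forwardVal b i).convergent n| *
      ((forwardVal b i).convergent n + cf (past b i)) * localVal b (i + n + 1) = localVal b i := by
  have hpos : ∀ i, 0 < (b i : ℝ) + cf (past b i) := fun i =>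
    add_pos_of_nonneg_of_pos (by positivity) (cf_pos (hb.past i))
  induction n generalizing i with
  | zero =>
    rw [convergent_forwardVal_zero hb, Rat.den_natCast, localVal_eq_forwardVal_add b i,
      localVal_eq_forwardVal_add]
    have hx := one_lt_forwardVal hb (i + 1)
    have hy := hpos i
    rw [Nat.cast_zero, add_zero, cf_past hb i, forwardVal_eq hb i, Rat.cast_natCast,
      add_sub_cancel_left, abs_of_pos (by positivity)]
    field_simp
    push_cast
    ring
  | succ n ih =>
    have hval := ih (i + 1)
    have hnum := succ_le_num_convergent hb n (i + 1)
    have hshift : i + ((n + 1 : ℕ) : ℤ) + 1 = i + 1 + n + 1 := by push_cast; ring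
    rw [convergent_forwardVal_succ hb, hshift, localVal_eq_forwardVal_add b i, forwardVal_eq hb i]
    rw [localVal_eq_forwardVal_add b (i + 1), cf_past hb i] at hval
    set r := (forwardVal b (i + 1)).convergent n
    have hr : (0 : ℝ) < r := by exact_mod_cast Rat.num_pos.1 (by omega : 0 < r.num)
    have hden : (((b i : ℚ) + r⁻¹).den : ℝ) = r * r.den := by
      exact_mod_cast (congrArg (Int.cast : ℤ → ℚ) (den_natCast_add_inv (b i) (by omega))).trans
        (Rat.mul_den_eq_num r).symm
    have hstep := sq_mul_abs_one_div_sub_one_div_mul (zero_lt_one.trans (one_lt_forwardVal hb _))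
      hr (hpos i) hval
    rw [hden]
    push_cast
    rw [add_sub_add_left_eq_sub, ← one_div (r : ℝ)]
    linarith [hstep]

lemma forwardVal_sub_convergent_ne_zero (hb : IsOneTwo b) (n : ℕ) (i : ℤ) :
    forwardVal b i - (forwardVal b i).convergent n ≠ 0 := by
  intro h
  have hval := den_sq_mul_abs_sub_convergent_mul hb n i
  rw [h, abs_zero, mul_zero, zero_mul, zero_mul] at hval
  exact (localVal_pos hb i).ne hval

lemma irrational_forwardVal (hb : IsOneTwo b) (i : ℤ) : Irrational (forwardVal b i) := by
  rintro ⟨r, hr⟩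
  obtain ⟨n, hn⟩ := Real.exists_rat_eq_convergent (ξ := forwardVal b i) (q := r) (by
    rw [← hr, sub_self, abs_zero]
    have := r.pos
    positivity)
  exact forwardVal_sub_convergent_ne_zero hb n i (by rw [← hn, hr, sub_self])

lemma abs_approxQuality_convergent_sub_le (hb : IsOneTwo b) (n : ℕ) :
    |approxQuality (forwardVal b 0) ((forwardVal b 0).convergent n) - localVal b (n + 1)| ≤
      1 / ((n : ℝ) + 1) := by
  have hval := den_sq_mul_abs_sub_convergent_mul hb n 0
  have hne := forwardVal_sub_convergent_ne_zero hb n 0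
  have hnum := succ_le_num_convergent hb n 0
  have hl := localVal_pos hb 0
  have hy := cf_pos (hb.past 0)
  rw [zero_add, localVal_eq_forwardVal_add b 0] at hval
  rw [localVal_eq_forwardVal_add] at hl
  set α := forwardVal b 0
  set r := α.convergent n
  set y := cf (past b 0)
  have hquality : approxQuality α r = 1 / ((r.den : ℝ) ^ 2 * |α - r|) := rfl
  have hD1 : (1 : ℝ) ≤ r.den := by exact_mod_cast r.den_pos
  have hrden : (n : ℝ) + 1 ≤ r * r.den := by
    have hmul : (r : ℝ) * r.den = r.num := by exact_mod_cast Rat.mul_den_eq_num r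
    rw [hmul]
    exact_mod_cast hnum
  have hr : (0 : ℝ) < r := by exact_mod_cast Rat.num_pos.1 (by omega : 0 < r.num)
  have hs : 0 < |α - r| := abs_pos.2 hne
  have hlarge : (n : ℝ) + 1 ≤ (r.den : ℝ) ^ 2 * (r + y) := by
    calc (n : ℝ) + 1 ≤ r * r.den := hrden
      _ ≤ r.den * (r * r.den) := le_mul_of_one_le_left (by positivity) hD1
      _ = (r.den : ℝ) ^ 2 * r := by ring
      _ ≤ (r.den : ℝ) ^ 2 * (r + y) := by gcongr; linarith
  have hD : 0 < (r.den : ℝ) ^ 2 := by positivity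
  generalize (r.den : ℝ) ^ 2 = D at hval hquality hlarge hD
  have hdiff : approxQuality α r - localVal b (n + 1) = (r - α) / (D * |α - r| * (r + y)) := by
    rw [hquality]
    field_simp [hs.ne']
    linear_combination -hval
  rw [hdiff, abs_div, abs_sub_comm, abs_of_pos (by positivity : 0 < D * |α - r| * (r + y))]
  calc |α - r| / (D * |α - r| * (r + y)) = 1 / (D * (r + y)) := by field_simp
    _ ≤ 1 / ((n : ℝ) + 1) := by gcongr

lemma tendsto_approxQuality_convergent_sub (hb : IsOneTwo b) :
    Tendsto (fun n : ℕ => approxQuality (forwardVal b 0) ((forwardVal b 0).convergent n) -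
      localVal b ((n + 1 : ℕ) : ℤ)) atTop (𝓝 0) :=
  squeeze_zero_norm (fun n => by simpa using abs_approxQuality_convergent_sub_le hb n)
    tendsto_one_div_add_atTop_nhds_zero_nat

lemma eventually_one_div_mul_distNearestInt_le (hb : IsOneTwo b) {t : ℝ} (ht : 2 ≤ t)
    (h : ∀ ε > 0, ∀ᶠ n : ℕ in atTop, localVal b n ≤ t + ε) {ε : ℝ} (hε : 0 < ε) :
    ∀ᶠ q : ℕ in atTop, 1 / (q * distNearestInt (q * forwardVal b 0)) ≤ t + ε := by
  have hα := irrational_forwardVal hb 0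
  have hconv : ∀ᶠ n : ℕ in atTop,
      approxQuality (forwardVal b 0) ((forwardVal b 0).convergent n) ≤ t + ε := by
    filter_upwards [(tendsto_add_atTop_nat 1).eventually (h (ε / 2) (by positivity)),
      (tendsto_approxQuality_convergent_sub hb).eventually_lt_const (half_pos hε)] with n hn hn'
    linarith
  obtain ⟨n₀, hn₀⟩ := eventually_atTop.1 hconv
  have hfar : ∀ n ∈ Finset.range n₀, ∀ᶠ q : ℕ in atTop,
      ((round (q * forwardVal b 0) / q : ℚ) : ℝ) ≠ (forwardVal b 0).convergent n :=
    fun n _ => (tendsto_round_mul_div _).eventually_ne (hα.ne_rat _)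
  filter_upwards [(eventually_all_finset _).2 hfar, eventually_ne_atTop 0] with q hq hq0
  refine (one_div_mul_distNearestInt_le_approxQuality hα hq0).trans ?_
  by_contra! hlt
  obtain ⟨n, hn⟩ := exists_eq_convergent_of_two_lt_approxQuality (by linarith)
  rw [hn] at hlt
  refine hq n (Finset.mem_range.2 ?_) (by rw [hn])
  by_contra! hnn
  exact hlt.not_ge (hn₀ n hnn)

lemma frequently_le_one_div_mul_distNearestInt (hb : IsOneTwo b) {t : ℝ}
    (h : ∀ ε > 0, ∃ᶠ n : ℕ in atTop, t - ε ≤ localVal b n) {ε : ℝ} (hε : 0 < ε) :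
    ∃ᶠ q : ℕ in atTop, t - ε ≤ 1 / (q * distNearestInt (q * forwardVal b 0)) := by
  have hden : Tendsto (fun n => ((forwardVal b 0).convergent n).den) atTop atTop :=
    tendsto_atTop_mono (fun n => le_den_convergent hb n 0) tendsto_id
  refine hden.frequently ?_
  have hsucc : ∃ᶠ n : ℕ in atTop, t - ε / 2 ≤ localVal b ((n + 1 : ℕ) : ℤ) := by
    have := h (ε / 2) (half_pos hε)
    rwa [← map_add_atTop_eq_nat 1, frequently_map] at this
  refine (hsucc.and_eventually ((tendsto_approxQuality_convergent_sub hb).eventually_const_lt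
    (neg_lt_zero.2 (half_pos hε)))).mono fun n hn => ?_
  refine le_trans ?_ (approxQuality_le_one_div_mul_distNearestInt (irrational_forwardVal hb 0) _)
  linarith [hn.1, hn.2]

lemma mem_lagrangeSpectrum (hb : IsOneTwo b) {t : ℝ} (ht : 2 ≤ t)
    (h₁ : ∀ ε > 0, ∀ᶠ n : ℕ in atTop, localVal b n ≤ t + ε)
    (h₂ : ∀ ε > 0, ∃ᶠ n : ℕ in atTop, t - ε ≤ localVal b n) : t ∈ LagrangeSpectrum := by
  have hlim : lagrangeVal (forwardVal b 0) = ENNReal.ofReal t := by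
    refine le_antisymm (ENNReal.le_of_forall_pos_le_add fun ε hε _ => ?_)
      (ENNReal.le_of_forall_pos_le_add fun ε hε _ => ?_)
    · rw [← ENNReal.ofReal_coe_nnreal, ← ENNReal.ofReal_add (by linarith) ε.coe_nonneg]
      exact limsup_le_of_le (by isBoundedDefault)
        ((eventually_one_div_mul_distNearestInt_le hb ht h₁ (NNReal.coe_pos.2 hε)).mono
          fun q hq => ENNReal.ofReal_le_ofReal hq)
    · have hle : ENNReal.ofReal (t - ε) ≤ lagrangeVal (forwardVal b 0) :=
        le_limsup_of_frequently_le
          ((frequently_le_one_div_mul_distNearestInt hb h₂ (NNReal.coe_pos.2 hε)).mono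
            fun q hq => ENNReal.ofReal_le_ofReal hq)
      calc ENNReal.ofReal t = ENNReal.ofReal ((t - ε) + ε) := by rw [sub_add_cancel]
        _ ≤ ENNReal.ofReal (t - ε) + ENNReal.ofReal ε := ENNReal.ofReal_add_le
        _ ≤ lagrangeVal (forwardVal b 0) + ε := by
          rw [ENNReal.ofReal_coe_nnreal]
          gcongr
  refine ⟨forwardVal b 0, irrational_forwardVal hb 0, ?_, ?_⟩
  · exact hlim ▸ ENNReal.ofReal_ne_top
  · rw [hlim, ENNReal.toReal_ofReal (by linarith)]

end

/-! ### Concatenating pieces -/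

/-- The bi-infinite sequence whose right half is that of `c` and whose left half is the mirror
image of the right half of `d`. -/
def joinHalves (c d : ℤ → ℕ) : ℤ → ℕ := fun i => if 0 ≤ i then c i else d (-i)

section
variable {c d : ℤ → ℕ} {N : ℕ}

lemma IsOneTwo.joinHalves (hc : IsOneTwo c) (hd : IsOneTwo d) : IsOneTwo (joinHalves c d) := by
  intro i
  rw [_root_.joinHalves]
  split_ifs
  exacts [hc i, hd (-i)]

lemma mirror_joinHalves (h : c 0 = d 0) : mirror (joinHalves c d) = joinHalves d c := by
  funext i
  rcases lt_trichotomy i 0 with hi | rfl | hi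
  · rw [mirror, joinHalves, joinHalves, if_pos (by omega), if_neg (by omega)]
  · simpa only [mirror, joinHalves, neg_zero, le_refl, if_true] using h
  · rw [mirror, joinHalves, joinHalves, if_neg (by omega), if_pos hi.le, neg_neg]

lemma joinHalves_eq_left (h : ∀ i : ℤ, |i| ≤ N → c i = d (-i)) {i : ℤ} (hi : -(N : ℤ) ≤ i) :
    joinHalves c d i = c i := by
  rw [joinHalves]
  split_ifs with h0
  · rfl
  · exact (h i (abs_le.2 (by omega))).symm

lemma localVal_joinHalves_le_of_nonneg (hc : IsOneTwo c) (hd : IsOneTwo d)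
    (h : ∀ i : ℤ, |i| ≤ N → c i = d (-i)) {i : ℤ} (hi : 0 ≤ i) :
    localVal (joinHalves c d) i ≤ localVal c i + (3 / 5 : ℝ) ^ N := by
  have hdist := abs_localVal_sub_le_of_eq_right (hc.joinHalves hd) hc i N
    fun j hj => joinHalves_eq_left h (by omega)
  linarith [(abs_le.1 hdist).2]

lemma localVal_joinHalves_le (hc : IsOneTwo c) (hd : IsOneTwo d)
    (h : ∀ i : ℤ, |i| ≤ N → c i = d (-i)) {s : ℝ} (hcs : ∀ i, localVal c i ≤ s)
    (hds : ∀ i, localVal d i ≤ s) (i : ℤ) : localVal (joinHalves c d) i ≤ s + (3 / 5 : ℝ) ^ N := by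
  rcases le_or_gt 0 i with hi | hi
  · linarith [localVal_joinHalves_le_of_nonneg hc hd h hi, hcs i]
  · have h' : ∀ i : ℤ, |i| ≤ N → d i = c (-i) := fun i hi => by
      rw [h (-i) (by rwa [abs_neg]), neg_neg]
    have hle := localVal_joinHalves_le_of_nonneg hd hc h' (i := -i) (by omega)
    rw [← mirror_joinHalves (h 0 (by simp)), localVal_mirror, neg_neg] at hle
    linarith [hds (-i)]

end

lemma exists_localVal_le_of_connects {a : ℤ → ℕ} (ha : IsOneTwo a) {t : ℝ} {N : ℕ}
    (h₁ : Connects a t N) (h₂ : Connects (mirror a) t N) :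
    ∃ (e : ℤ → ℕ) (M : ℕ), IsOneTwo e ∧ (∀ j, (M : ℤ) ≤ |j| → e j = 2) ∧
      (∀ i, localVal e i ≤ t + 3 * (3 / 5 : ℝ) ^ N) ∧
      localVal a 0 - 2 * (3 / 5 : ℝ) ^ N ≤ localVal e 0 := by
  obtain ⟨c, hc, hca, ⟨R, hR⟩, hct⟩ := h₁
  obtain ⟨d, hd, hda, ⟨R', hR'⟩, hdt⟩ := h₂
  have hagree : ∀ i : ℤ, |i| ≤ N → c i = d (-i) := fun i hi => by
    rw [abs_le] at hi
    rw [hca i hi.2, hda (-i) (by omega), mirror, neg_neg]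
  refine ⟨joinHalves c d, max R R', hc.joinHalves hd, fun j hj => ?_, fun i => ?_, ?_⟩
  · rw [joinHalves]
    push_cast at hj
    split_ifs with h0
    · exact hR j (by rw [abs_of_nonneg h0] at hj; omega)
    · exact hR' (-j) (by rw [abs_of_neg (by omega)] at hj; omega)
  · linarith [localVal_joinHalves_le hc hd hagree hct hdt i]
  · have hdist := abs_localVal_sub_le ha (hc.joinHalves hd) 0 N N fun j hj hj' => by
      rw [joinHalves_eq_left hagree (by omega), hca j (by omega)]
    linarith [(abs_le.1 hdist).2]

/-- The position at which the `k`-th piece is centred in `concat e M`. The gap between the pieces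
`k` and `k + 1` leaves room for `k` digits `2` after the former and `k + 1` before the latter. -/
def pieceCentre (M : ℕ → ℕ) : ℕ → ℕ
  | 0 => 0
  | k + 1 => pieceCentre M k + M k + M (k + 1) + 2 * (k + 1) + 2

open Classical in
/-- The concatenation of the words formed by the digits of `e k` at positions `|j| < M k`, separated
by growing blocks of digits `2`. -/
noncomputable def concat (e : ℕ → ℤ → ℕ) (M : ℕ → ℕ) : ℤ → ℕ := fun j =>
  if h : ∃ k, |j - pieceCentre M k| < M k then e h.choose (j - pieceCentre M h.choose) else 2

lemma pieceCentre_add_le (M : ℕ → ℕ) {k k' : ℕ} (h : k < k') :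
    pieceCentre M k + M k + M k' + 2 * k' + 2 ≤ pieceCentre M k' := by
  induction k', h using Nat.le_induction with
  | base => rw [pieceCentre]
  | succ n _ ih =>
    rw [pieceCentre]
    omega

lemma le_pieceCentre (M : ℕ → ℕ) (k : ℕ) : k ≤ pieceCentre M k := by
  induction k with
  | zero => exact Nat.zero_le _
  | succ k ih => exact (Nat.succ_le_succ ih).trans (by rw [pieceCentre]; omega)

lemma localVal_comp_sub (a : ℤ → ℕ) (m i : ℤ) :
    localVal (fun j => a (j - m)) i = localVal a (i - m) := by
  have hfuture : future (fun j => a (j - m)) i = future a (i - m) :=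
    funext fun n => congrArg a (by ring)
  have hpast : past (fun j => a (j - m)) i = past a (i - m) :=
    funext fun n => congrArg a (by ring)
  rw [localVal, localVal, hfuture, hpast]

section
variable {e : ℕ → ℤ → ℕ} {M : ℕ → ℕ} {t : ℝ}

lemma IsOneTwo.concat (he : ∀ k, IsOneTwo (e k)) : IsOneTwo (concat e M) := by
  intro j
  rw [_root_.concat]
  split_ifs
  exacts [he _ _, Or.inr rfl]

lemma concat_eq_two {j : ℤ} (h : ∀ k, (M k : ℤ) ≤ |j - pieceCentre M k|) : concat e M j = 2 :=
  dif_neg fun ⟨k, hk⟩ => (h k).not_gt hk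

lemma concat_eq_piece (hpad : ∀ k j, (M k : ℤ) ≤ |j| → e k j = 2) {k : ℕ} {j : ℤ}
    (h : |j - pieceCentre M k| ≤ M k + k + 1) : concat e M j = e k (j - pieceCentre M k) := by
  have huniq : ∀ k', |j - pieceCentre M k'| < M k' → k' = k := by
    intro k' hk'
    rw [abs_lt] at hk'
    rw [abs_le] at h
    by_contra hne
    rcases lt_or_gt_of_ne hne with hlt | hlt <;>
    · have := pieceCentre_add_le M hlt
      omega
  by_cases hex : ∃ k, |j - pieceCentre M k| < M k
  · rw [concat, dif_pos hex, huniq _ hex.choose_spec]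
  · have hfar : ∀ k, (M k : ℤ) ≤ |j - pieceCentre M k| := fun k => not_lt.1 fun hk => hex ⟨k, hk⟩
    rw [concat_eq_two hfar, hpad k _ (hfar k)]

lemma abs_localVal_concat_sub_le (he : ∀ k, IsOneTwo (e k))
    (hpad : ∀ k j, (M k : ℤ) ≤ |j| → e k j = 2) {k : ℕ} {n : ℤ}
    (h : |n - pieceCentre M k| ≤ M k + 1) :
    |localVal (concat e M) n - localVal (e k) (n - pieceCentre M k)| ≤ 2 * (3 / 5 : ℝ) ^ k := by
  rw [← localVal_comp_sub, two_mul]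
  refine abs_localVal_sub_le (IsOneTwo.concat he) (fun j => he k _) n k k fun j hj hj' =>
    concat_eq_piece hpad ?_
  rw [abs_le] at *
  omega

lemma eventually_three_fifths_pow_lt {ε : ℝ} (hε : 0 < ε) : ∀ᶠ k : ℕ in atTop,
    (3 / 5 : ℝ) ^ k < ε :=
  (tendsto_pow_atTop_nhds_zero_of_lt_one (by norm_num) (by norm_num)).eventually_lt_const hε

lemma eventually_localVal_concat_le (he : ∀ k, IsOneTwo (e k))
    (hpad : ∀ k j, (M k : ℤ) ≤ |j| → e k j = 2) (ht : 3.157 ≤ t)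
    (hle : ∀ k i, localVal (e k) i ≤ t + 3 * (3 / 5 : ℝ) ^ k) {ε : ℝ} (hε : 0 < ε) :
    ∀ᶠ n : ℕ in atTop, localVal (concat e M) n ≤ t + ε := by
  obtain ⟨K, hK⟩ := eventually_atTop.1 (eventually_three_fifths_pow_lt (by positivity : 0 < ε / 5))
  filter_upwards [eventually_ge_atTop (pieceCentre M K)] with n hn
  by_cases hnear : ∃ k, |(n : ℤ) - pieceCentre M k| ≤ M k + 1
  · obtain ⟨k, hk⟩ := hnear
    have hKk : K ≤ k := by
      by_contra! hlt
      have := pieceCentre_add_le M hlt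
      rw [abs_le] at hk
      omega
    linarith [(abs_le.1 (abs_localVal_concat_sub_le he hpad hk)).2,
      hle k (n - pieceCentre M k), hK k hKk]
  · push Not at hnear
    refine (localVal_le_of_succ_eq_two (IsOneTwo.concat he) (concat_eq_two fun k => ?_)).trans
      (by linarith)
    have := hnear k
    rw [lt_abs] at this
    rw [le_abs]
    omega

lemma frequently_le_localVal_concat (he : ∀ k, IsOneTwo (e k))
    (hpad : ∀ k j, (M k : ℤ) ≤ |j| → e k j = 2)
    (hge : ∀ k, t - 2 * (3 / 5 : ℝ) ^ k ≤ localVal (e k) 0) {ε : ℝ} (hε : 0 < ε) :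
    ∃ᶠ n : ℕ in atTop, t - ε ≤ localVal (concat e M) n := by
  have hcentre : ∀ᶠ k in atTop, t - ε ≤ localVal (concat e M) (pieceCentre M k) := by
    filter_upwards [eventually_three_fifths_pow_lt (by positivity : 0 < ε / 4)] with k hk
    have hdist := abs_localVal_concat_sub_le he hpad (k := k) (M := M) (n := pieceCentre M k)
      (by rw [sub_self, abs_zero]; positivity)
    rw [sub_self] at hdist
    linarith [(abs_le.1 hdist).1, hge k]
  exact (tendsto_atTop_mono (le_pieceCentre M) tendsto_id).frequently hcentre.frequently

lemma mem_lagrangeSpectrum_of_pieces (he : ∀ k, IsOneTwo (e k))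
    (hpad : ∀ k j, (M k : ℤ) ≤ |j| → e k j = 2) (ht : 3.157 ≤ t)
    (hle : ∀ k i, localVal (e k) i ≤ t + 3 * (3 / 5 : ℝ) ^ k)
    (hge : ∀ k, t - 2 * (3 / 5 : ℝ) ^ k ≤ localVal (e k) 0) : t ∈ LagrangeSpectrum :=
  mem_lagrangeSpectrum (IsOneTwo.concat (M := M) he) (by linarith)
    (fun _ => eventually_localVal_concat_le he hpad ht hle)
    (fun _ => frequently_le_localVal_concat he hpad hge)

end

lemma mem_lagrangeSpectrum_of_connects {a : ℤ → ℕ} (ha : IsOneTwo a) (h0 : 3.157 ≤ localVal a 0)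
    (h₁ : ∀ N, Connects a (localVal a 0) N) (h₂ : ∀ N, Connects (mirror a) (localVal a 0) N) :
    localVal a 0 ∈ LagrangeSpectrum := by
  choose e M he hpad hle hge using fun N => exists_localVal_le_of_connects ha (h₁ N) (h₂ N)
  exact mem_lagrangeSpectrum_of_pieces he hpad h0 hle hge

/-! ### Reduction of indefinite forms -/

/-- The indefinite form with roots `ξ` and `η` has Markov value at most `t`. -/
def MarkovBound (t ξ η : ℝ) : Prop :=
  ∀ p q : ℤ, (p ≠ 0 ∨ q ≠ 0) → |ξ - η| ≤ t * |(p - ξ * q) * (p - η * q)|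

section
variable {t ξ η : ℝ}

lemma MarkovBound.mul_ne_zero (h : MarkovBound t ξ η) (hne : ξ ≠ η) {p q : ℤ}
    (hpq : p ≠ 0 ∨ q ≠ 0) : (p - ξ * q) * (p - η * q) ≠ 0 := by
  intro h0
  have hle := h p q hpq
  rw [h0, abs_zero, mul_zero] at hle
  exact hne (sub_eq_zero.1 (abs_nonpos_iff.1 hle))

lemma MarkovBound.symm (h : MarkovBound t ξ η) : MarkovBound t η ξ := by
  intro p q hpq
  rw [abs_sub_comm, mul_comm ((p : ℝ) - η * q)]
  exact h p q hpq

lemma MarkovBound.ne_intCast (h : MarkovBound t ξ η) (hne : ξ ≠ η) (m : ℤ) : ξ ≠ m := by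
  have hm := left_ne_zero_of_mul (h.mul_ne_zero hne (p := m) (q := 1) (Or.inr one_ne_zero))
  rw [Int.cast_one, mul_one] at hm
  exact (sub_ne_zero.1 hm).symm

lemma MarkovBound.abs_sub_le (h : MarkovBound t ξ η) : |ξ - η| ≤ t := by
  simpa using h 1 0 (Or.inl one_ne_zero)

lemma MarkovBound.one_le_mul_sub (h : MarkovBound t ξ η) {m : ℤ} (hη : η < m) (hξ : m < ξ) :
    1 ≤ t * (ξ - m) ∧ 1 ≤ t * (m - η) := by
  have hle := h m 1 (Or.inr one_ne_zero)
  have hξ' : 0 < ξ - m := by linarith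
  have hη' : 0 < m - η := by linarith
  rw [Int.cast_one, mul_one, mul_one, abs_of_pos (by linarith), abs_mul, abs_sub_comm,
    abs_of_pos hξ', abs_of_pos hη'] at hle
  constructor
  · refine le_of_mul_le_mul_right ?_ hη'
    linarith
  · refine le_of_mul_le_mul_right ?_ hξ'
    linarith

lemma abs_moebius_sub {p q u v : ℤ} (hξ : p - ξ * q ≠ 0) (hη : p - η * q ≠ 0)
    (hdet : |p * v - q * u| = 1) :
    |(v * ξ - u) / (p - ξ * q) - (v * η - u) / (p - η * q)| =
      |ξ - η| / |(p - ξ * q) * (p - η * q)| := by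
  have hdet' : |(p : ℝ) * v - q * u| = 1 := by exact_mod_cast hdet
  rw [div_sub_div _ _ hξ hη, abs_div]
  congr 1
  rw [show (v * ξ - u) * (p - η * q) - (p - ξ * q) * (v * η - u) =
    ((p : ℝ) * v - q * u) * (ξ - η) by ring, abs_mul, hdet', one_mul]

lemma ne_zero_of_abs_det_eq_one {p q u v r s : ℤ} (hdet : |p * v - q * u| = 1)
    (hrs : r ≠ 0 ∨ s ≠ 0) : r * p + s * u ≠ 0 ∨ r * q + s * v ≠ 0 := by
  by_contra! h0
  have hdet' : p * v - q * u ≠ 0 := abs_pos.1 (hdet ▸ one_pos)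
  have hr : r * (p * v - q * u) = 0 := by linear_combination v * h0.1 - u * h0.2
  have hs : s * (p * v - q * u) = 0 := by linear_combination p * h0.2 - q * h0.1
  exact hrs.elim (· ((mul_eq_zero.1 hr).resolve_right hdet'))
    (· ((mul_eq_zero.1 hs).resolve_right hdet'))

lemma MarkovBound.moebius (h : MarkovBound t ξ η) (hne : ξ ≠ η) {p q u v : ℤ}
    (hdet : |p * v - q * u| = 1) :
    MarkovBound t ((v * ξ - u) / (p - ξ * q)) ((v * η - u) / (p - η * q)) := by
  have hpq : p ≠ 0 ∨ q ≠ 0 := by simpa using ne_zero_of_abs_det_eq_one (r := 1) (s := 0) hdet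
  have hξ := left_ne_zero_of_mul (h.mul_ne_zero hne hpq)
  have hη := right_ne_zero_of_mul (h.mul_ne_zero hne hpq)
  have hlinear : ∀ (r s : ℤ) (x : ℝ), p - x * q ≠ 0 → r - (v * x - u) / (p - x * q) * s =
      (((r * p + s * u : ℤ) : ℝ) - x * (r * q + s * v : ℤ)) / (p - x * q) := by
    intro r s x hx
    rw [eq_div_iff hx, sub_mul, mul_right_comm, div_mul_cancel₀ _ hx]
    push_cast
    ring
  intro r s hrs
  rw [abs_moebius_sub hξ hη hdet, hlinear r s _ hξ, hlinear r s _ hη, div_mul_div_comm, abs_div,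
    ← mul_div_assoc]
  exact div_le_div_of_nonneg_right (h _ _ (ne_zero_of_abs_det_eq_one hdet hrs)) (abs_nonneg _)

lemma exists_isCoprime_abs_mul_le (ξ η : ℝ) {p q : ℤ} (hpq : p ≠ 0 ∨ q ≠ 0) :
    ∃ p' q' : ℤ, IsCoprime p' q' ∧
      |(p' - ξ * q') * (p' - η * q')| ≤ |(p - ξ * q) * (p - η * q)| := by
  obtain ⟨p', q', hco, hp, hq⟩ := Int.exists_gcd_one (Int.gcd_pos_iff.2 hpq)
  have hgcd : (1 : ℝ) ≤ (p.gcd q : ℕ) := by exact_mod_cast Int.gcd_pos_iff.2 hpq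
  refine ⟨p', q', Int.isCoprime_iff_gcd_eq_one.2 hco, ?_⟩
  generalize p.gcd q = g at hp hq hgcd
  have hscale : (p - ξ * q) * (p - η * q) = (g : ℝ) ^ 2 * ((p' - ξ * q') * (p' - η * q')) := by
    rw [hp, hq]
    push_cast
    ring
  rw [hscale, abs_mul ((g : ℝ) ^ 2), abs_of_pos (by positivity : 0 < (g : ℝ) ^ 2)]
  exact le_mul_of_one_le_left (abs_nonneg _) (one_le_pow₀ hgcd)

lemma MarkovBound.exists_le_abs_sub (h : MarkovBound t ξ η) (hne : ξ ≠ η) {s : ℝ} (hs : 0 ≤ s)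
    {p q : ℤ} (hpq : p ≠ 0 ∨ q ≠ 0) (hle : s * |(p - ξ * q) * (p - η * q)| ≤ |ξ - η|) :
    ∃ x y, MarkovBound t x y ∧ s ≤ |x - y| := by
  obtain ⟨p', q', ⟨v, u, huv⟩, hle'⟩ := exists_isCoprime_abs_mul_le ξ η hpq
  have hdet : |p' * v - q' * -u| = 1 := by
    rw [show p' * v - q' * -u = 1 by linear_combination huv, abs_one]
  have hpq' : p' ≠ 0 ∨ q' ≠ 0 := by
    simpa using ne_zero_of_abs_det_eq_one (r := 1) (s := 0) hdet
  have hF := h.mul_ne_zero hne hpq'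
  refine ⟨_, _, h.moebius hne hdet, ?_⟩
  rw [abs_moebius_sub (left_ne_zero_of_mul hF) (right_ne_zero_of_mul hF) hdet,
    le_div_iff₀ (abs_pos.2 hF)]
  exact (mul_le_mul_of_nonneg_left hle' hs).trans hle

lemma MarkovBound.exists_mem_Icc (h : MarkovBound t ξ η) (hne : ξ ≠ η) :
    ∃ x y, MarkovBound t x y ∧ y ∈ Set.Icc (-1 : ℝ) 0 ∧ x - y = |ξ - η| := by
  wlog hlt : η < ξ generalizing ξ η
  · rw [abs_sub_comm]
    exact this h.symm hne.symm (lt_of_le_of_ne (not_lt.1 hlt) hne)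
  have htrans := h.moebius hne (p := 1) (q := 0) (u := ⌈η⌉) (v := 1) (by simp)
  simp only [Int.cast_one, Int.cast_zero, mul_zero, sub_zero, div_one, one_mul] at htrans
  refine ⟨_, _, htrans, ⟨?_, ?_⟩, ?_⟩
  · linarith [Int.ceil_lt_add_one η]
  · linarith [Int.le_ceil η]
  · rw [abs_of_pos (sub_pos.2 hlt), sub_sub_sub_cancel_right]

lemma isClosed_setOf_markovBound (t : ℝ) : IsClosed {s : ℝ × ℝ | MarkovBound t s.1 s.2} := by
  simp only [MarkovBound, Set.ofPred_forall]
  exact isClosed_iInter fun p => isClosed_iInter fun q => isClosed_iInter fun _ =>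
    isClosed_le (by fun_prop) (by fun_prop)

lemma exists_markovBound_sub_eq (ht : 0 < t) (h : ∀ s, 0 < s → s < t →
      ∃ ξ η, MarkovBound t ξ η ∧ η ∈ Set.Icc (-1 : ℝ) 0 ∧ s ≤ ξ - η) :
    ∃ ξ η, MarkovBound t ξ η ∧ η ∈ Set.Icc (-1 : ℝ) 0 ∧ ξ - η = t := by
  set K := (Set.Icc (-1 : ℝ) t ×ˢ Set.Icc (-1 : ℝ) 0) ∩ {s : ℝ × ℝ | MarkovBound t s.1 s.2}
  have hK : IsCompact K :=
    (isCompact_Icc.prod isCompact_Icc).inter_right (isClosed_setOf_markovBound t)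
  have hex : ∀ s, 0 < s → s < t → ∃ x ∈ K, s ≤ x.1 - x.2 := by
    intro s hs hst
    obtain ⟨ξ, η, hbound, hη, hle⟩ := h s hs hst
    have hup := (le_abs_self _).trans hbound.abs_sub_le
    exact ⟨(ξ, η), ⟨⟨⟨by linarith [hη.1], by linarith [hη.2]⟩, hη⟩, hbound⟩, hle⟩
  obtain ⟨x₀, hx₀, -⟩ := hex (t / 2) (half_pos ht) (half_lt_self ht)
  obtain ⟨x, hx, hmax⟩ := hK.exists_isMaxOn ⟨x₀, hx₀⟩
    (by fun_prop : ContinuousOn (fun x : ℝ × ℝ => x.1 - x.2) K)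
  refine ⟨x.1, x.2, hx.2, hx.1.2, le_antisymm ((le_abs_self _).trans hx.2.abs_sub_le) ?_⟩
  refine le_of_forall_lt fun s hs => ?_
  obtain ⟨r, hsr, hrt⟩ := exists_between (max_lt hs ht)
  obtain ⟨y, hy, hle⟩ := hex r ((le_max_right _ _).trans_lt hsr) hrt
  exact ((le_max_left _ _).trans_lt hsr).trans_le (hle.trans (hmax hy))

end

section
variable {A B C : ℝ}

lemma exists_eq_mul_sub_mul_sub (hA : A ≠ 0) (hΔ : 0 < B ^ 2 - 4 * A * C) :
    ∃ ξ η : ℝ, √(B ^ 2 - 4 * A * C) = |A| * |ξ - η| ∧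
      ∀ p q : ℝ, A * p ^ 2 + B * p * q + C * q ^ 2 = A * ((p - ξ * q) * (p - η * q)) := by
  have hsq := Real.mul_self_sqrt hΔ.le
  have hpos := Real.sqrt_pos.2 hΔ
  generalize √(B ^ 2 - 4 * A * C) = D at hsq hpos
  refine ⟨(-B + D) / (2 * A), (-B - D) / (2 * A), ?_, fun p q => ?_⟩
  · rw [← abs_mul, ← sub_div, show A * ((-B + D - (-B - D)) / (2 * A)) = D by field_simp; ring,
      abs_of_pos hpos]
  · field_simp
    linear_combination q ^ 2 * hsq

lemma sqrt_discr_le_toReal_markovVal_mul (hΔ : 0 < B ^ 2 - 4 * A * C)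
    (hfin : markovVal A B C ≠ ⊤) {p q : ℤ} (hpq : p ≠ 0 ∨ q ≠ 0) :
    0 < |A * (p : ℝ) ^ 2 + B * p * q + C * (q : ℝ) ^ 2| ∧ √(B ^ 2 - 4 * A * C) ≤
      (markovVal A B C).toReal * |A * (p : ℝ) ^ 2 + B * p * q + C * (q : ℝ) ^ 2| := by
  have hle : ENNReal.ofReal √(B ^ 2 - 4 * A * C) /
      ENNReal.ofReal |A * (p : ℝ) ^ 2 + B * p * q + C * (q : ℝ) ^ 2| ≤ markovVal A B C :=
    le_iSup₂_of_le (p, q) (by simpa [Prod.ext_iff, imp_iff_not_or] using hpq) le_rfl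
  have hpos : 0 < |A * (p : ℝ) ^ 2 + B * p * q + C * (q : ℝ) ^ 2| := by
    refine (abs_nonneg _).lt_of_ne fun h0 => hfin (top_le_iff.1 ?_)
    rwa [← h0, ENNReal.ofReal_zero, ENNReal.div_zero (by simpa using hΔ)] at hle
  refine ⟨hpos, ?_⟩
  rwa [← ENNReal.ofReal_div_of_pos hpos, ENNReal.ofReal_le_iff_le_toReal hfin,
    div_le_iff₀ hpos] at hle

lemma exists_mul_lt_sqrt_discr (hΔ : 0 < B ^ 2 - 4 * A * C) (hfin : markovVal A B C ≠ ⊤) {s : ℝ}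
    (hs : 0 ≤ s) (hlt : s < (markovVal A B C).toReal) : ∃ p q : ℤ, (p ≠ 0 ∨ q ≠ 0) ∧
      s * |A * (p : ℝ) ^ 2 + B * p * q + C * (q : ℝ) ^ 2| < √(B ^ 2 - 4 * A * C) := by
  obtain ⟨⟨p, q⟩, hsup⟩ := lt_iSup_iff.1 ((ENNReal.ofReal_lt_iff_lt_toReal hs hfin).2 hlt)
  obtain ⟨hne, hpq_lt⟩ := lt_iSup_iff.1 hsup
  have hpq : p ≠ 0 ∨ q ≠ 0 := by simpa [Prod.ext_iff, imp_iff_not_or] using hne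
  have hpos := (sqrt_discr_le_toReal_markovVal_mul hΔ hfin hpq).1
  rw [← ENNReal.ofReal_div_of_pos hpos, ENNReal.ofReal_lt_ofReal_iff_of_nonneg hs,
    lt_div_iff₀ hpos] at hpq_lt
  exact ⟨p, q, hpq, hpq_lt⟩

end

lemma exists_markovBound_of_mem_markovSpectrum {t : ℝ} (ht : t ∈ MarkovSpectrum) :
    ∃ ξ η : ℝ, ξ ≠ η ∧ MarkovBound t ξ η ∧ ∀ s, 0 ≤ s → s < t → ∃ p q : ℤ,
      (p ≠ 0 ∨ q ≠ 0) ∧ s * |(p - ξ * q) * (p - η * q)| ≤ |ξ - η| := by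
  obtain ⟨A, B, C, hΔ, hfin, rfl⟩ := ht
  have hA : 0 < |A| := by
    simpa using (sqrt_discr_le_toReal_markovVal_mul hΔ hfin (p := 1) (q := 0) (by simp)).1
  obtain ⟨ξ, η, hsub, hform⟩ := exists_eq_mul_sub_mul_sub (abs_pos.1 hA) hΔ
  refine ⟨ξ, η, ?_, fun p q hpq => ?_, fun s hs hst => ?_⟩
  · rintro rfl
    rw [sub_self, abs_zero, mul_zero] at hsub
    exact (Real.sqrt_pos.2 hΔ).ne' hsub
  · have hle := (sqrt_discr_le_toReal_markovVal_mul hΔ hfin hpq).2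
    rw [hsub, hform, abs_mul, mul_left_comm] at hle
    exact le_of_mul_le_mul_left hle hA
  · obtain ⟨p, q, hpq, hlt⟩ := exists_mul_lt_sqrt_discr hΔ hfin hs hst
    rw [hsub, hform, abs_mul, mul_left_comm] at hlt
    exact ⟨p, q, hpq, le_of_mul_le_mul_left hlt.le hA⟩

/-- The pair `s` of roots of a form with Markov value at most `t` is reduced in the sense of
Gauss. -/
structure Reduced (t : ℝ) (s : ℝ × ℝ) : Prop where
  markovBound : MarkovBound t s.1 s.2
  one_lt_fst : 1 < s.1
  neg_one_lt_snd : -1 < s.2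
  snd_neg : s.2 < 0

/-- The natural extension of the Gauss map: one step of the continued fraction expansion of the
first entry, applied to both entries. -/
noncomputable def gaussStep (s : ℝ × ℝ) : ℝ × ℝ := (1 / (s.1 - ⌊s.1⌋₊), 1 / (s.2 - ⌊s.1⌋₊))

/-- The involution conjugating `gaussStep` to its inverse on reduced pairs. -/
noncomputable def reflect (s : ℝ × ℝ) : ℝ × ℝ := (-1 / s.2, -1 / s.1)

lemma reflect_reflect (s : ℝ × ℝ) : reflect (reflect s) = s := by
  simp [reflect, neg_div]

lemma reflect_gaussStep (s : ℝ × ℝ) :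
    reflect (gaussStep s) = (⌊s.1⌋₊ - s.2, ⌊s.1⌋₊ - s.1) := by
  simp [reflect, gaussStep]

namespace Reduced

variable {t : ℝ} {s : ℝ × ℝ}

lemma fst_ne_snd (h : Reduced t s) : s.1 ≠ s.2 :=
  ((h.snd_neg.trans one_pos).trans h.one_lt_fst).ne'

lemma sub_le (h : Reduced t s) : s.1 - s.2 ≤ t := (le_abs_self _).trans h.markovBound.abs_sub_le

lemma one_le_floor (h : Reduced t s) : (1 : ℝ) ≤ ⌊s.1⌋₊ := by
  exact_mod_cast (Nat.one_le_floor_iff _).2 h.one_lt_fst.le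

lemma floor_lt_fst (h : Reduced t s) : (⌊s.1⌋₊ : ℝ) < s.1 := by
  refine (Nat.floor_le (by linarith [h.one_lt_fst])).lt_of_ne ?_
  exact_mod_cast (h.markovBound.ne_intCast h.fst_ne_snd ⌊s.1⌋₊).symm

lemma reduced_gaussStep (h : Reduced t s) : Reduced t (gaussStep s) := by
  have hfract : 0 < s.1 - ⌊s.1⌋₊ := sub_pos.2 h.floor_lt_fst
  have hsnd : s.2 - ⌊s.1⌋₊ < -1 := by linarith [h.one_le_floor, h.snd_neg]
  refine ⟨?_, ?_, ?_, ?_⟩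
  · have htrans := h.markovBound.moebius h.fst_ne_snd (p := -⌊s.1⌋₊) (q := -1) (u := -1) (v := 0)
      (by simp)
    convert htrans using 1 <;> simp [gaussStep, neg_add_eq_sub]
  · exact (one_lt_div hfract).2 (by linarith [Nat.lt_floor_add_one s.1])
  · exact (lt_div_iff_of_neg (by linarith)).2 (by linarith)
  · exact div_neg_of_pos_of_neg one_pos (by linarith)

lemma reduced_reflect (h : Reduced t s) : Reduced t (reflect s) := by
  have hfst := h.one_lt_fst
  refine ⟨?_, ?_, ?_, ?_⟩
  · have htrans := h.markovBound.symm.moebius h.fst_ne_snd.symm (p := 0) (q := -1) (u := 1) (v := 0)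
      (by simp)
    convert htrans using 1 <;> simp [reflect]
  · exact (lt_div_iff_of_neg h.snd_neg).2 (by linarith [h.neg_one_lt_snd])
  · exact (lt_div_iff₀ (by linarith)).2 (by linarith)
  · exact div_neg_of_neg_of_pos (by norm_num) (by linarith)

lemma reflect_gaussStep_reflect_gaussStep (h : Reduced t s) :
    reflect (gaussStep (reflect (gaussStep s))) = s := by
  have hfloor : ⌊(⌊s.1⌋₊ : ℝ) - s.2⌋₊ = ⌊s.1⌋₊ := by
    rw [Nat.floor_eq_iff (by linarith [h.one_le_floor, h.snd_neg])]
    constructor <;> linarith [h.neg_one_lt_snd, h.snd_neg]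
  rw [reflect_gaussStep, reflect, gaussStep]
  simp [hfloor]

lemma gaussStep_reflect_gaussStep_reflect (h : Reduced t s) :
    gaussStep (reflect (gaussStep (reflect s))) = s := by
  rw [← reflect_reflect (gaussStep (reflect (gaussStep (reflect s)))),
    h.reduced_reflect.reflect_gaussStep_reflect_gaussStep, reflect_reflect]

lemma fst_lt_three (ht : t ≤ √12) (h : Reduced t s) : s.1 < 3 := by
  by_contra! hge
  have hne := h.markovBound.ne_intCast h.fst_ne_snd 3
  push_cast at hne
  have h₀ := h.markovBound.one_le_mul_sub (m := 0) (by simpa using h.snd_neg)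
    (by simpa using one_pos.trans h.one_lt_fst)
  have h₃ := h.markovBound.one_le_mul_sub (m := 3) (by push_cast; linarith [h.snd_neg])
    (by exact_mod_cast hge.lt_of_ne hne.symm)
  push_cast at h₀ h₃
  have hsq : t ^ 2 ≤ 12 := (Real.le_sqrt' (by linarith [h.sub_le, h.snd_neg])).1 ht
  have hlow : 3 * t + 2 ≤ t ^ 2 := by nlinarith [h.sub_le, h.snd_neg]
  nlinarith [h.sub_le, h.snd_neg]

lemma floor_eq_one_or_two (ht : t ≤ √12) (h : Reduced t s) : ⌊s.1⌋₊ = 1 ∨ ⌊s.1⌋₊ = 2 := by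
  have hpos : 1 ≤ ⌊s.1⌋₊ := (Nat.one_le_floor_iff _).2 h.one_lt_fst.le
  have hlt : ⌊s.1⌋₊ < 3 :=
    (Nat.floor_lt' three_ne_zero).2 (by exact_mod_cast h.fst_lt_three ht)
  omega

lemma exists_orbit (h : Reduced t s) : ∃ z : ℤ → ℝ × ℝ,
    z 0 = s ∧ (∀ i, Reduced t (z i)) ∧ ∀ i, z (i + 1) = gaussStep (z i) := by
  let e : Equiv.Perm {s : ℝ × ℝ // Reduced t s} :=
    { toFun := fun s => ⟨gaussStep s, s.2.reduced_gaussStep⟩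
      invFun := fun s =>
        ⟨reflect (gaussStep (reflect s)), s.2.reduced_reflect.reduced_gaussStep.reduced_reflect⟩
      left_inv := fun s => Subtype.ext s.2.reflect_gaussStep_reflect_gaussStep
      right_inv := fun s => Subtype.ext s.2.gaussStep_reflect_gaussStep_reflect }
  refine ⟨fun i => (e ^ i) ⟨s, h⟩, ?_, fun i => Subtype.prop _, fun i => ?_⟩
  · simp only [zpow_zero, Equiv.Perm.one_apply]
  · beta_reduce
    rw [add_comm, zpow_one_add]
    rfl

end Reduced

lemma localVal_floor_of_orbit {t : ℝ} (ht : t ≤ √12) {z : ℤ → ℝ × ℝ}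
    (hred : ∀ i, Reduced t (z i)) (hz : ∀ i, z (i + 1) = gaussStep (z i)) (i : ℤ) :
    localVal (fun i => ⌊(z i).1⌋₊) i = (z i).1 - (z i).2 := by
  set a : ℤ → ℕ := fun i => ⌊(z i).1⌋₊
  have ha : IsOneTwo a := fun i => (hred i).floor_eq_one_or_two ht
  have hfst : ∀ i, (z i).1 = a i + 1 / (z (i + 1)).1 := by
    intro i
    rw [hz]
    simp [gaussStep, a]
  have hsnd : ∀ i, -(z (i + 1)).2 = 1 / (a i + -(z i).2) := by
    intro i
    rw [hz, ← sub_eq_add_neg, ← neg_sub, one_div_neg_eq_neg_one_div]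
    rfl
  have hfuture : 1 / (z (i + 1 + (0 : ℕ))).1 = cf (future a i) := by
    refine eq_cf_of_gauss (z := fun n => 1 / (z (i + 1 + n)).1) (ha.future i) (fun n => ?_)
      fun n => ?_
    · have hone := (hred (i + 1 + n)).one_lt_fst
      exact ⟨by positivity, (div_le_one (by positivity)).2 hone.le⟩
    · rw [hfst, Nat.cast_succ, ← add_assoc]
      rfl
  have hpast : -(z (i - (0 : ℕ))).2 = cf (past a i) := by
    refine eq_cf_of_gauss (z := fun n => -(z (i - n)).2) (ha.past i) (fun n => ?_) fun n => ?_
    · have hr := hred (i - n)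
      exact ⟨by linarith [hr.snd_neg], by linarith [hr.neg_one_lt_snd]⟩
    · have hstep := hsnd (i - (n + 1 : ℕ))
      rwa [show i - (n + 1 : ℕ) + 1 = i - n by push_cast; ring,
        show a (i - (n + 1 : ℕ)) = past a i n by
          rw [past, Nat.cast_succ, sub_sub, add_comm (1 : ℤ)]] at hstep
  rw [localVal, ← hfuture, ← hpast, Nat.cast_zero, add_zero, sub_zero, ← hfst, sub_eq_add_neg]

lemma exists_reduced_of_mem_markovSpectrum {t : ℝ} (ht : t ∈ MarkovSpectrum) (ht2 : 2 ≤ t) :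
    ∃ s, Reduced t s ∧ s.1 - s.2 = t := by
  obtain ⟨ξ₀, η₀, hne₀, hbound₀, happrox⟩ := exists_markovBound_of_mem_markovSpectrum ht
  obtain ⟨ξ, η, hbound, hη, hsub⟩ : ∃ ξ η, MarkovBound t ξ η ∧ η ∈ Set.Icc (-1 : ℝ) 0 ∧
      ξ - η = t := by
    refine exists_markovBound_sub_eq (by linarith) fun s hs hst => ?_
    obtain ⟨p, q, hpq, hle⟩ := happrox s hs.le hst
    obtain ⟨x, y, hxy, hs_le⟩ := hbound₀.exists_le_abs_sub hne₀ hs.le hpq hle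
    obtain ⟨x', y', hxy', hy', hsub'⟩ :=
      hxy.exists_mem_Icc (sub_ne_zero.1 (abs_pos.1 (hs.trans_le hs_le)))
    exact ⟨x', y', hxy', hy', hs_le.trans_eq hsub'.symm⟩
  have hne : η ≠ ξ := by linarith
  have h₁ := hbound.symm.ne_intCast hne (-1)
  have h₀ := hbound.symm.ne_intCast hne 0
  push_cast at h₁ h₀
  have hneg := hη.1.lt_of_ne h₁.symm
  exact ⟨(ξ, η), ⟨hbound, by linarith, hneg, hη.2.lt_of_ne h₀⟩, hsub⟩

lemma exists_isOneTwo_of_mem_markovSpectrum {t : ℝ} (ht : t ∈ MarkovSpectrum) (ht2 : 2 ≤ t)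
    (ht12 : t ≤ √12) : ∃ a : ℤ → ℕ, IsOneTwo a ∧ localVal a 0 = t ∧ ∀ i, localVal a i ≤ t := by
  obtain ⟨s, hs, hst⟩ := exists_reduced_of_mem_markovSpectrum ht ht2
  obtain ⟨z, rfl, hred, hz⟩ := hs.exists_orbit
  have hval := localVal_floor_of_orbit ht12 hred hz
  exact ⟨fun i => ⌊(z i).1⌋₊, fun i => (hred i).floor_eq_one_or_two ht12, (hval 0).trans hst,
    fun i => (hval i).trans_le (hred i).sub_le⟩

/-! ### Markov values outside the Lagrange spectrum -/

/-- The sequence `a` has its maximal value at `0` but does not connect at scale `N`. The parameters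
`j` and `w` record this value up to `(3 / 5) ^ N` and the central word of `a`. -/
structure Obstructed (N : ℕ) (j : ℤ) (w : Fin (2 * N + 1) → ℕ) (a : ℤ → ℕ) : Prop where
  isOneTwo : IsOneTwo a
  le_localVal : 3.157 ≤ localVal a 0
  localVal_le : ∀ i, localVal a i ≤ localVal a 0
  not_connects : ¬ Connects a (localVal a 0) N
  floor_eq : ⌊localVal a 0 / (3 / 5 : ℝ) ^ N⌋ = j
  window_eq : ∀ k : Fin (2 * N + 1), a (k - N) = w k

section
variable {N : ℕ} {j : ℤ} {w : Fin (2 * N + 1) → ℕ} {a a' : ℤ → ℕ}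

lemma Obstructed.eq_of_mem_window (ha : Obstructed N j w a) (ha' : Obstructed N j w a') {i : ℤ}
    (hi : -N ≤ i) (hi' : i ≤ N) : a i = a' i := by
  obtain ⟨k, hk⟩ : ∃ k : Fin (2 * N + 1), (k : ℤ) - N = i :=
    ⟨⟨(i + N).toNat, by omega⟩, by simp only; omega⟩
  rw [← hk, ha.window_eq k, ha'.window_eq k]

lemma Obstructed.localVal_le_add (ha : Obstructed N j w a) (ha' : Obstructed N j w a') :
    localVal a' 0 ≤ localVal a 0 + (3 / 5 : ℝ) ^ N := by
  have hpos : (0 : ℝ) < (3 / 5 : ℝ) ^ N := by positivity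
  have hfloor := Int.floor_le (localVal a 0 / (3 / 5 : ℝ) ^ N)
  have hlt := Int.lt_floor_add_one (localVal a' 0 / (3 / 5 : ℝ) ^ N)
  rw [ha.floor_eq, le_div_iff₀ hpos] at hfloor
  rw [ha'.floor_eq, div_lt_iff₀ hpos] at hlt
  linarith

lemma Obstructed.eq_of_le_branch (ha : Obstructed N j w a) (ha' : Obstructed N j w a')
    {n : ℕ} (h : BranchAt (future a 0) (future a' 0) n) :
    N ≤ n ∧ ∀ i : ℤ, -N ≤ i → i ≤ n → a i = a' i := by
  obtain ⟨hpre, h₁, h₂⟩ := h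
  simp only [future] at hpre h₁ h₂
  refine ⟨?_, fun i hi hin => ?_⟩
  · by_contra! hlt
    have heq := ha.eq_of_mem_window ha' (i := 0 + 1 + n) (by omega) (by omega)
    omega
  · by_cases hiN : i ≤ N
    · exact ha.eq_of_mem_window ha' hi hiN
    · have heq := hpre (i - 1).toNat (by omega)
      rwa [show (0 : ℤ) + 1 + (i - 1).toNat = i by omega] at heq

lemma forcedBranching_obstructed (N : ℕ) (j : ℤ) (w : Fin (2 * N + 1) → ℕ) :
    ForcedBranching ((future · 0) '' {a | Obstructed N j w a}) := by
  rintro _ ⟨a, ha, rfl⟩ _ ⟨a', ha', rfl⟩ n hbranch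
  obtain ⟨hn, hagree⟩ := ha.eq_of_le_branch ha' hbranch
  have hshift : ∀ (b : ℤ → ℕ) (m : ℕ), future b 0 (n + m) = future b n m := fun b m => by
    simpa [add_comm] using congrFun (future_tail b 0 n) m
  simp only [hshift]
  refine forced_of_branch ha.isOneTwo ha'.isOneTwo ha.le_localVal (ha.localVal_le_add ha')
    ha.localVal_le ha'.localVal_le ha.not_connects hn hagree ?_ ?_
  · rw [← hshift]
    exact hbranch.2.1
  · rw [← hshift]
    exact hbranch.2.2

lemma dimH_localVal_obstructed_le (N : ℕ) (j : ℤ) (w : Fin (2 * N + 1) → ℕ) :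
    dimH ((localVal · 0) '' {a | Obstructed N j w a}) ≤ ((3 / 20 + 5 / 9 : ℝ≥0) : ℝ≥0∞) := by
  have hfuture : HasBoxBound (cf '' ((future · 0) '' {a | Obstructed N j w a})) (3 / 20) :=
    (forcedBranching_obstructed N j w).hasBoxBound
      (by rintro _ ⟨a, ha, rfl⟩; exact ha.isOneTwo.future 0)
  have hsum := hfuture.image2 (f := fun x y => (w ⟨N, by omega⟩ : ℝ) + x + y)
    (fun _ _ _ _ => (dist_add_add_le _ _ _ _).trans_eq (by rw [dist_add_left]))
    hasBoxBound_cf_isOneTwo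
  refine HasBoxBound.dimH_le ?_
  push_cast
  refine hsum.mono ?_
  rintro _ ⟨a, ha, rfl⟩
  refine ⟨_, ⟨_, ⟨a, ha, rfl⟩, rfl⟩, _, ⟨past a 0, ha.isOneTwo.past 0, rfl⟩, ?_⟩
  rw [← ha.window_eq ⟨N, by omega⟩, sub_self]
  rfl

end

lemma localVal_mem_iUnion_obstructed {a : ℤ → ℕ} (ha : IsOneTwo a) (h0 : 3.157 ≤ localVal a 0)
    (hle : ∀ i, localVal a i ≤ localVal a 0) {N : ℕ} (hN : ¬ Connects a (localVal a 0) N) :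
    localVal a 0 ∈ ⋃ (N : ℕ) (j : ℤ) (w : Fin (2 * N + 1) → ℕ),
      (localVal · 0) '' {a | Obstructed N j w a} := by
  simp only [Set.mem_iUnion]
  exact ⟨N, _, _, a, ⟨ha, h0, hle, hN, rfl, fun _ => rfl⟩, rfl⟩

lemma diff_inter_Icc_subset_iUnion_obstructed :
    (MarkovSpectrum \ LagrangeSpectrum) ∩ Set.Icc 3.157 √12 ⊆
      ⋃ (N : ℕ) (j : ℤ) (w : Fin (2 * N + 1) → ℕ), (localVal · 0) '' {a | Obstructed N j w a} := by
  rintro t ⟨⟨hM, hL⟩, ht, ht12⟩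
  obtain ⟨a, ha, rfl, hle⟩ := exists_isOneTwo_of_mem_markovSpectrum hM (by linarith) ht12
  have hmirror : localVal (mirror a) 0 = localVal a 0 := by rw [localVal_mirror, neg_zero]
  by_contra hnot
  refine hL (mem_lagrangeSpectrum_of_connects ha ht (fun N => ?_) fun N => ?_) <;>
    by_contra hN
  · exact hnot (localVal_mem_iUnion_obstructed ha ht hle hN)
  · rw [← hmirror] at ht hle hN hnot
    exact hnot (localVal_mem_iUnion_obstructed ha.mirror ht
      (fun i => (localVal_mirror a i).trans_le (hle _)) hN)

lemma dimH_diff_inter_Icc_le :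
    dimH ((MarkovSpectrum \ LagrangeSpectrum) ∩ Set.Icc 3.157 √12) ≤
      ENNReal.ofReal (3 / 20 + 5 / 9) := by
  have hcoe : ENNReal.ofReal (3 / 20 + 5 / 9) = ((3 / 20 + 5 / 9 : ℝ≥0) : ℝ≥0∞) := by
    rw [← ENNReal.ofReal_coe_nnreal]
    push_cast
    rfl
  rw [hcoe]
  refine (dimH_mono diff_inter_Icc_subset_iUnion_obstructed).trans ?_
  simpa only [dimH_iUnion, iSup_le_iff] using dimH_localVal_obstructed_le

/-- `dimH((M ∖ L) ∩ [√10, √12]) < 0.706094`; in particular it is less than `0.93`. -/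
theorem dimH_M_diff_L_middle_bound :
    dimH ((MarkovSpectrum \ LagrangeSpectrum) ∩ Set.Icc (Real.sqrt 10) (Real.sqrt 12)) <
      ENNReal.ofReal 0.706094 ∧
    dimH ((MarkovSpectrum \ LagrangeSpectrum) ∩ Set.Icc (Real.sqrt 10) (Real.sqrt 12)) <
      ENNReal.ofReal 0.93 := by
  have hsqrt : (3.157 : ℝ) ≤ √10 := Real.le_sqrt_of_sq_le (by norm_num)
  have hle : dimH ((MarkovSpectrum \ LagrangeSpectrum) ∩ Set.Icc √10 √12) ≤
      ENNReal.ofReal (3 / 20 + 5 / 9) :=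
    (dimH_mono (Set.inter_subset_inter_right _ (Set.Icc_subset_Icc_left hsqrt))).trans
      dimH_diff_inter_Icc_le
  have hlt {s : ℝ} (hs : 3 / 20 + 5 / 9 < s) :
      ENNReal.ofReal (3 / 20 + 5 / 9) < ENNReal.ofReal s :=
    (ENNReal.ofReal_lt_ofReal_iff_of_nonneg (by norm_num)).2 hs
  exact ⟨hle.trans_lt (hlt (by norm_num)), hle.trans_lt (hlt (by norm_num))⟩
end
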